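/- Let H²_β be the weighted Hardy space induced by a weight sequence w = (w_k)_{k≥1} with w_k → 1, and let φ_{z₀}(z) = (z₀ − z)/(1 − conj(z₀)z) for z₀ ∈ 𝔻. Then M_z is similar to M_{φ_{z₀}} on H²_β if and only if M_z is similar to M_{φ_{z₀}} on H²_{β⁻¹}. -/

import Mathlib

noncomputable section

open Complex Filter Topology

/-- The sequence-space (ℓ²) model of a weighted Hardy space `H²_β`.
An element `a : H2` represents the analytic function whose `k`-th Taylor
coefficient is `a k / β k` (so that `‖a‖` is exactly the `H²_β`-norm). -/
abbrev H2 : Type := lp (fun _ : ℕ => ℂ) 2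

/-- The direct sum (ℓ²-sense) of `m` copies of `H2`. -/
abbrev Hm (m : ℕ) : Type := PiLp 2 (fun _ : Fin m => H2)

/-- The open unit disk 𝔻 ⊆ ℂ. -/
def unitDisk : Set ℂ := Metric.ball 0 1

/-- `β_0 = 1` and `β_k = ∏_{j=1}^k w_j`. -/
def betaSeq (w : ℕ → ℝ) (k : ℕ) : ℝ := ∏ j ∈ Finset.Icc 1 k, w j

/-- The analytic function on 𝔻 represented by the vector `a` in the model of `H²_β`:
`f(z) = ∑_k (a k / β k) z^k`. -/
def repFun (β : ℕ → ℝ) (a : H2) (z : ℂ) : ℂ := ∑' k, (a k / (β k : ℂ)) * z ^ k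

/-- `T` is (the ℓ²-model of) the multiplication operator `M_g` on `H²_β`.
Existence of such a `T` says precisely that `M_g` is bounded on `H²_β`. -/
def RepMul (β : ℕ → ℝ) (g : ℂ → ℂ) (T : H2 →L[ℂ] H2) : Prop :=
  ∀ a : H2, ∀ z ∈ unitDisk, repFun β (T a) z = g z * repFun β a z

/-- `T` is (the ℓ²-model of) the composition operator `C_ψ` on `H²_β`.
Existence of such a `T` says precisely that `C_ψ` is bounded on `H²_β`. -/
def RepComp (β : ℕ → ℝ) (ψ : ℂ → ℂ) (T : H2 →L[ℂ] H2) : Prop :=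
  ∀ a : H2, ∀ z ∈ unitDisk, repFun β (T a) z = repFun β a (ψ z)

/-- The Möbius factor `φ_{z₀}(z) = (z₀ - z)/(1 - conj z₀ · z)`. -/
def mobius (z₀ z : ℂ) : ℂ := (z₀ - z) / (1 - (starRingEnd ℂ) z₀ * z)

/-- `φ` belongs to `Aut(𝔻)`, i.e. `φ(z) = e^{iθ}(z₀ - z)/(1 - conj z₀ · z)`. -/
def IsDiskAut (φ : ℂ → ℂ) : Prop :=
  ∃ (θ : ℝ) (z₀ : ℂ), z₀ ∈ unitDisk ∧
    ∀ z, φ z = Complex.exp (θ * Complex.I) * mobius z₀ z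

/-- `B` is a finite Blaschke product of order `m`. -/
def IsBlaschke (m : ℕ) (B : ℂ → ℂ) : Prop :=
  ∃ (θ : ℝ) (zs : Fin m → ℂ), (∀ j, zs j ∈ unitDisk) ∧
    ∀ z, B z = Complex.exp (θ * Complex.I) * ∏ j, mobius (zs j) z

/-- `w` is a positive weight sequence tending to `1` such that the weighted Hardy
space `H²_β` is of polynomial growth: `sup_k (k+1)|w_k - 1| < ∞`. -/
def PolyGrowth (w : ℕ → ℝ) : Prop :=
  (∀ k, 1 ≤ k → 0 < w k) ∧ Tendsto w atTop (nhds 1) ∧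
    ∃ M : ℝ, ∀ k : ℕ, 1 ≤ k → ((k : ℝ) + 1) * |w k - 1| ≤ M

/-- `f` is analytic on an open neighbourhood of the closed unit disk. -/
def AnalyticOnClosedDisk (f : ℂ → ℂ) : Prop :=
  ∃ U : Set ℂ, IsOpen U ∧ Metric.closedBall (0:ℂ) 1 ⊆ U ∧ AnalyticOnNhd ℂ f U

/-- `M_z` is similar to `M_φ` on the weighted Hardy space with weights `β`. -/
def MzSimMphi (β : ℕ → ℝ) (φ : ℂ → ℂ) : Prop :=
  ∃ Tz Tφ : H2 →L[ℂ] H2, RepMul β (fun z => z) Tz ∧ RepMul β φ Tφ ∧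
    ∃ X : H2 ≃L[ℂ] H2, ∀ a : H2, X (Tz a) = Tφ (X a)

namespace S12
open PowerSeries

/-- absolute convergence at radius r -/
def Sm (r : ℝ) (F : PowerSeries ℂ) : Prop := Summable fun k => ‖coeff k F‖ * r ^ k
def nm (r : ℝ) (F : PowerSeries ℂ) : ℝ := ∑' k, ‖coeff k F‖ * r ^ k
def Good (F : PowerSeries ℂ) : Prop := ∀ r : ℝ, 0 ≤ r → r < 1 → Sm r F
def pv (F : PowerSeries ℂ) (z : ℂ) : ℂ := ∑' k, coeff k F * z ^ k

lemma Sm.mono {r s : ℝ} (hr : 0 ≤ r) (h : r ≤ s) {F} (hF : Sm s F) : Sm r F :=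
  Summable.of_nonneg_of_le (fun k => by positivity) (fun k => by gcongr) hF

lemma Sm.summable {F} {z : ℂ} (hF : Sm ‖z‖ F) : Summable fun k => coeff k F * z ^ k :=
  Summable.of_norm (by simpa [Sm, norm_mul, norm_pow] using hF)

lemma nm_nonneg {r} (hr : 0 ≤ r) (F) : 0 ≤ nm r F := tsum_nonneg fun k => by positivity

lemma coeff_le_nm {r} (hr : 0 ≤ r) {F} (hF : Sm r F) (j : ℕ) : ‖coeff j F‖ * r ^ j ≤ nm r F :=
  hF.le_tsum j (fun k _ => by positivity)

lemma pv_le_nm {F} {z : ℂ} {r : ℝ} (hz : ‖z‖ ≤ r) (hF : Sm r F) : ‖pv F z‖ ≤ nm r F := by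
  have h1 : Sm ‖z‖ F := hF.mono (norm_nonneg _) hz
  have h2 : Summable fun k => ‖coeff k F * z ^ k‖ := by simpa [Sm, norm_mul, norm_pow] using h1
  refine (norm_tsum_le_tsum_norm h2).trans ?_
  refine Summable.tsum_le_tsum (fun k => ?_) h2 hF
  rw [norm_mul, norm_pow]; gcongr

lemma mulaux (F G : PowerSeries ℂ) (z : ℂ) (n : ℕ) : coeff n (F * G) * z ^ n =
    ∑ kl ∈ Finset.HasAntidiagonal.antidiagonal n, (coeff kl.1 F * z ^ kl.1) * (coeff kl.2 G * z ^ kl.2) := by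
  rw [coeff_mul, Finset.sum_mul]
  refine Finset.sum_congr rfl fun kl h => ?_
  rw [← Finset.HasAntidiagonal.mem_antidiagonal.1 h, pow_add]; ring

lemma Sm.mul {r : ℝ} (hr : 0 ≤ r) {F G} (hF : Sm r F) (hG : Sm r G) :
    Sm r (F * G) ∧ nm r (F * G) ≤ nm r F * nm r G := by
  have hf : Summable fun k => ‖(‖coeff k F‖ * r ^ k)‖ := hF.norm
  have hg : Summable fun k => ‖(‖coeff k G‖ * r ^ k)‖ := hG.norm
  have hs := (summable_norm_sum_mul_antidiagonal_of_summable_norm hf hg).of_norm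
  have hle : ∀ n, ‖coeff n (F * G)‖ * r ^ n ≤ ∑ kl ∈ Finset.HasAntidiagonal.antidiagonal n,
      (‖coeff kl.1 F‖ * r ^ kl.1) * (‖coeff kl.2 G‖ * r ^ kl.2) := by
    intro n
    have h0 : ‖coeff n (F * G)‖ * r ^ n = ‖coeff n (F * G) * (r : ℂ) ^ n‖ := by
      rw [norm_mul, norm_pow, Complex.norm_real, Real.norm_of_nonneg hr]
    rw [h0, mulaux]
    refine (norm_sum_le _ _).trans (Finset.sum_le_sum fun kl _ => ?_)
    simp only [norm_mul, norm_pow, Complex.norm_real, Real.norm_of_nonneg hr]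
    exact le_rfl
  have h1 : Sm r (F * G) := Summable.of_nonneg_of_le (fun k => by positivity) hle hs
  refine ⟨h1, ?_⟩
  unfold nm
  rw [tsum_mul_tsum_eq_tsum_sum_antidiagonal_of_summable_norm hf hg]
  exact Summable.tsum_le_tsum hle h1 hs

lemma pv_mul' {F G} {z : ℂ} (hF : Sm ‖z‖ F) (hG : Sm ‖z‖ G) : pv (F * G) z = pv F z * pv G z := by
  have hf : Summable fun k => ‖coeff k F * z ^ k‖ := by simpa [Sm, norm_mul, norm_pow] using hF
  have hg : Summable fun k => ‖coeff k G * z ^ k‖ := by simpa [Sm, norm_mul, norm_pow] using hG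
  unfold pv
  rw [tsum_mul_tsum_eq_tsum_sum_antidiagonal_of_summable_norm hf hg]
  exact tsum_congr fun n => mulaux F G z n

lemma Sm.add {r : ℝ} (hr : 0 ≤ r) {F G} (hF : Sm r F) (hG : Sm r G) : Sm r (F + G) := by
  refine Summable.of_nonneg_of_le (fun k => by positivity) (fun k => ?_) (Summable.add hF hG)
  rw [map_add, ← add_mul]; gcongr; exact norm_add_le _ _

lemma Sm.neg {r : ℝ} {F} (hF : Sm r F) : Sm r (-F) := by
  simpa [Sm] using hF

lemma Sm.sub {r : ℝ} (hr : 0 ≤ r) {F G} (hF : Sm r F) (hG : Sm r G) : Sm r (F - G) := by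
  rw [sub_eq_add_neg]; exact hF.add hr hG.neg

lemma sm_of_fin {r : ℝ} {F} (n : ℕ) (h : ∀ k, n ≤ k → coeff k F = 0) : Sm r F :=
  summable_of_ne_finset_zero (s := Finset.range n) (fun k hk => by
    rw [h k (by simpa using hk)]; simp)

lemma sm_C {r : ℝ} (c : ℂ) : Sm r (C c) := sm_of_fin 1 fun k hk => by
  rw [coeff_C, if_neg (by omega)]
lemma sm_X {r : ℝ} : Sm r (X : PowerSeries ℂ) := sm_of_fin 2 fun k hk => by
  rw [coeff_X, if_neg (by omega)]
lemma sm_one {r : ℝ} : Sm r (1 : PowerSeries ℂ) := sm_C 1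

lemma nm_one {r : ℝ} : nm r 1 = 1 := by
  unfold nm
  rw [tsum_eq_single 0]
  · simp
  · intro k hk; simp [coeff_one, hk]

lemma Sm.pow {r : ℝ} (hr : 0 ≤ r) {F} (hF : Sm r F) (n : ℕ) : Sm r (F ^ n) ∧ nm r (F ^ n) ≤ nm r F ^ n := by
  induction n with
  | zero => simp [sm_one, nm_one]
  | succ n ih =>
    rw [pow_succ, pow_succ]
    have := Sm.mul hr ih.1 hF
    exact ⟨this.1, this.2.trans (mul_le_mul_of_nonneg_right ih.2 (nm_nonneg hr _))⟩

lemma pv_add' {F G} {z : ℂ} (hF : Sm ‖z‖ F) (hG : Sm ‖z‖ G) : pv (F + G) z = pv F z + pv G z := by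
  unfold pv
  rw [← Summable.tsum_add hF.summable hG.summable]
  exact tsum_congr fun n => by rw [map_add, add_mul]

lemma pv_neg {F} {z : ℂ} : pv (-F) z = - pv F z := by
  unfold pv; rw [← tsum_neg]; exact tsum_congr fun n => by simp

lemma pv_sub' {F G} {z : ℂ} (hF : Sm ‖z‖ F) (hG : Sm ‖z‖ G) : pv (F - G) z = pv F z - pv G z := by
  rw [sub_eq_add_neg, pv_add' hF hG.neg, pv_neg, sub_eq_add_neg]

@[simp] lemma pv_C (c z : ℂ) : pv (C c) z = c := by
  unfold pv; rw [tsum_eq_single 0]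
  · simp
  · intro k hk; simp [coeff_C, hk]
@[simp] lemma pv_one (z : ℂ) : pv 1 z = 1 := pv_C 1 z
@[simp] lemma pv_X (z : ℂ) : pv X z = z := by
  unfold pv; rw [tsum_eq_single 1]
  · simp
  · intro k hk; simp [coeff_X, hk]

lemma pv_pow' {F} {z : ℂ} (hF : Sm ‖z‖ F) (n : ℕ) : pv (F ^ n) z = pv F z ^ n := by
  induction n with
  | zero => simp
  | succ n ih => rw [pow_succ, pow_succ, pv_mul' (Sm.pow (norm_nonneg _) hF n).1 hF, ih]

lemma mem_disk {z : ℂ} : z ∈ unitDisk ↔ ‖z‖ < 1 := by simp [unitDisk]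

lemma Good.sm {F} (h : Good F) {z : ℂ} (hz : ‖z‖ < 1) : Sm ‖z‖ F := h _ (norm_nonneg _) hz
lemma good_of_sm {F} (h : Sm 1 F) : Good F := fun _ h0 h1 => h.mono h0 h1.le
lemma Good.mul {F G} (hF : Good F) (hG : Good G) : Good (F * G) :=
  fun r h0 h1 => (Sm.mul h0 (hF r h0 h1) (hG r h0 h1)).1
lemma Good.add {F G} (hF : Good F) (hG : Good G) : Good (F + G) :=
  fun r h0 h1 => (Sm.add h0 (hF r h0 h1) (hG r h0 h1))
lemma Good.sub {F G} (hF : Good F) (hG : Good G) : Good (F - G) :=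
  fun r h0 h1 => (Sm.sub h0 (hF r h0 h1) (hG r h0 h1))
lemma Good.pow {F} (hF : Good F) (n : ℕ) : Good (F ^ n) :=
  fun r h0 h1 => (Sm.pow h0 (hF r h0 h1) n).1
lemma good_C (c) : Good (C c) := fun _ _ _ => sm_C c
lemma good_one : Good 1 := fun _ _ _ => sm_one
lemma good_X : Good X := fun _ _ _ => sm_X

/-- pv has a power series on balls -/
lemma hasFP {F} {r : ℝ} (hr : 0 < r) (hF : ∀ s, 0 ≤ s → s < r → Sm s F) :
    HasFPowerSeriesOnBall (pv F) (FormalMultilinearSeries.ofScalars ℂ (fun k => coeff k F)) 0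
      (ENNReal.ofReal r) := by
  refine ⟨?_, by simpa using hr, ?_⟩
  · refine ENNReal.le_of_forall_nnreal_lt fun s hs => ?_
    refine FormalMultilinearSeries.le_radius_of_summable _ ?_
    have h := hF s s.2 (by
      have := (ENNReal.lt_ofReal_iff_toReal_lt ENNReal.coe_ne_top).1 hs
      simpa using this)
    refine h.congr fun k => ?_
    simp [FormalMultilinearSeries.ofScalars_norm]
  · intro y hy
    have hy' : ‖y‖ < r := by
      have := hy
      rw [Metric.mem_eball, edist_zero_right, ← ofReal_norm] at this
      exact (ENNReal.ofReal_lt_ofReal_iff hr).1 this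
    have hs := (Sm.summable (hF ‖y‖ (norm_nonneg _) hy')).hasSum
    simpa [FormalMultilinearSeries.ofScalars_apply_eq, pv, zero_add, mul_comm] using hs

lemma ps_unique {F G} {r : ℝ} (hr : 0 < r) (hF : ∀ s, 0 ≤ s → s < r → Sm s F)
    (hG : ∀ s, 0 ≤ s → s < r → Sm s G) (h : ∀ z : ℂ, ‖z‖ < r → pv F z = pv G z) : F = G := by
  have h1 := (hasFP hr hF).hasFPowerSeriesAt
  have h2 := (hasFP hr hG).hasFPowerSeriesAt
  have h3 : pv F =ᶠ[𝓝 0] pv G := by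
    filter_upwards [Metric.ball_mem_nhds (0:ℂ) hr] with z hz
    exact h z (by simpa using hz)
  have h4 := (h1.congr h3).eq_formalMultilinearSeries h2
  ext k
  have := congrArg (fun p => p.coeff k) h4
  simpa [FormalMultilinearSeries.coeff_ofScalars] using this

lemma good_unique {F G} (hF : Good F) (hG : Good G) (h : ∀ z : ℂ, ‖z‖ < 1 → pv F z = pv G z) :
    F = G := ps_unique one_pos hF hG h

lemma exists_ps {r : ℝ} (hr : 0 < r) {f : ℂ → ℂ} (hf : DifferentiableOn ℂ f (Metric.ball 0 r)) :
    ∃ F, (∀ s, 0 ≤ s → s < r → Sm s F) ∧ ∀ z : ℂ, ‖z‖ < r → pv F z = f z := by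
  have key : ∀ s : ℝ, 0 < s → s < r →
      HasFPowerSeriesOnBall f (cauchyPowerSeries f 0 s) 0 (ENNReal.ofReal s) := by
    intro s h0 hs
    have := DifferentiableOn.hasFPowerSeriesOnBall (f := f) (c := 0) (R := s.toNNReal) (hf.mono (by
      rw [Real.coe_toNNReal _ h0.le]
      exact Metric.closedBall_subset_ball hs)) (by simpa using h0)
    rwa [Real.coe_toNNReal _ h0.le] at this
  have hr2 : (0:ℝ) < r/2 := by positivity
  have k0 := key (r/2) hr2 (by linarith)
  set p := cauchyPowerSeries f 0 (r/2) with hp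
  have k1 : ∀ s : ℝ, 0 < s → s < r → HasFPowerSeriesOnBall f p 0 (ENNReal.ofReal s) := by
    intro s h0 hs
    have := key s h0 hs
    rwa [this.hasFPowerSeriesAt.eq_formalMultilinearSeries k0.hasFPowerSeriesAt] at this
  refine ⟨PowerSeries.mk fun k => p.coeff k, ?_, ?_⟩
  · intro s h0 hs
    have h1 := k1 ((s + r)/2) (by positivity) (by linarith)
    have h2 := p.summable_norm_mul_pow (r := s.toNNReal) (lt_of_lt_of_le (by
      change ENNReal.ofReal s < ENNReal.ofReal ((s+r)/2)
      rw [ENNReal.ofReal_lt_ofReal_iff (by positivity)]; linarith) h1.r_le)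
    refine h2.congr fun k => ?_
    simp [FormalMultilinearSeries.norm_apply_eq_norm_coef, h0]
  · intro z hz
    have h1 := k1 ((‖z‖ + r)/2) (by positivity) (by linarith)
    have h2 := h1.hasSum (y := z) (by
      rw [Metric.mem_eball, edist_zero_right, ← ofReal_norm, ENNReal.ofReal_lt_ofReal_iff (by positivity)]
      linarith)
    rw [zero_add] at h2
    unfold pv
    rw [← h2.tsum_eq]
    refine tsum_congr fun k => ?_
    rw [coeff_mk, FormalMultilinearSeries.apply_eq_pow_smul_coeff]
    simp [mul_comm]

lemma pv_diff {F} {r : ℝ} (hr : 0 < r) (hF : ∀ s, 0 ≤ s → s < r → Sm s F) :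
    DifferentiableOn ℂ (pv F) (Metric.ball 0 r) := by
  have := (hasFP hr hF).differentiableOn
  rwa [Metric.eball_ofReal] at this

end S12

namespace S12
open PowerSeries

/-- Cauchy kernel series -/
def Ks (a : ℂ) : PowerSeries ℂ := PowerSeries.mk fun k => (starRingEnd ℂ a) ^ k
def Ph (a : ℂ) : PowerSeries ℂ := (C a - X) * Ks a
def cps (a : ℂ) (F : PowerSeries ℂ) : PowerSeries ℂ :=
  PowerSeries.mk fun j => ∑' k, coeff k F * coeff j (Ph a ^ k)

def Bd (b : ℕ → ℝ) (F : PowerSeries ℂ) (M : ℝ) : Prop :=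
  ∀ n, ∑ k ∈ Finset.range n, b k * ‖coeff k F‖ ^ 2 ≤ M

lemma Ks_inv (a : ℂ) : (1 - C (starRingEnd ℂ a) * X) * Ks a = 1 := by
  ext n
  rw [sub_mul, one_mul, mul_assoc, map_sub, coeff_C_mul]
  cases n with
  | zero => simp [Ks]
  | succ n => rw [coeff_succ_X_mul]; simp [Ks, coeff_one, pow_succ, mul_comm]

lemma sm_Ks {a : ℂ} {r : ℝ} (hr : 0 ≤ r) (h : ‖a‖ * r < 1) : Sm r (Ks a) := by
  have := summable_geometric_of_lt_one (by positivity : 0 ≤ ‖a‖ * r) h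
  refine this.congr fun k => ?_
  simp [Ks, mul_pow]

lemma sm_Ph {a : ℂ} {r : ℝ} (hr : 0 ≤ r) (h : ‖a‖ * r < 1) : Sm r (Ph a) :=
  (Sm.mul hr ((sm_C a).sub hr sm_X) (sm_Ks hr h)).1

lemma good_Ks {a : ℂ} (ha : ‖a‖ < 1) : Good (Ks a) := good_of_sm (sm_Ks zero_le_one (by simpa))
lemma good_Ph {a : ℂ} (ha : ‖a‖ < 1) : Good (Ph a) := good_of_sm (sm_Ph zero_le_one (by simpa))

lemma one_sub_ne {a z : ℂ} (h : ‖a‖ * ‖z‖ < 1) : 1 - starRingEnd ℂ a * z ≠ 0 := by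
  intro h0
  have : starRingEnd ℂ a * z = 1 := (sub_eq_zero.1 h0).symm
  have h2 := congrArg norm this
  rw [norm_mul, RCLike.norm_conj] at h2
  simp at h2; linarith

lemma pv_Ks {a z : ℂ} (h : ‖a‖ * ‖z‖ < 1) : pv (Ks a) z = (1 - starRingEnd ℂ a * z)⁻¹ := by
  have h1 : pv ((1 - C (starRingEnd ℂ a) * X) * Ks a) z = pv 1 z := by rw [Ks_inv]
  have s1 : Sm ‖z‖ (C (starRingEnd ℂ a) * X) := (Sm.mul (norm_nonneg _) (sm_C _) sm_X).1
  rw [pv_mul' (sm_one.sub (norm_nonneg _) s1) (sm_Ks (norm_nonneg _) h), pv_sub' sm_one s1,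
    pv_mul' (sm_C _) sm_X] at h1
  simp only [pv_one, pv_C, pv_X] at h1
  exact eq_inv_of_mul_eq_one_right h1

lemma pv_Ph {a z : ℂ} (h : ‖a‖ * ‖z‖ < 1) : pv (Ph a) z = mobius a z := by
  unfold Ph mobius
  rw [pv_mul' ((sm_C a).sub (norm_nonneg _) sm_X) (sm_Ks (norm_nonneg _) h), pv_Ks h,
    pv_sub' (sm_C _) sm_X, pv_C, pv_X, div_eq_mul_inv]

lemma coeff_Ph_zero (a : ℂ) : coeff 0 (Ph a) = a := by
  simp [Ph, Ks]

lemma coeff_Ph_succ (a : ℂ) (k : ℕ) : coeff (k+1) (Ph a) = - ((1 - ‖a‖^2 : ℝ) : ℂ) * (starRingEnd ℂ a)^k := by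
  have : (‖a‖^2 : ℂ) = a * starRingEnd ℂ a := by rw [Complex.mul_conj, Complex.normSq_eq_norm_sq]; simp
  simp only [Ph, Ks, sub_mul, map_sub, coeff_C_mul, coeff_succ_X_mul, coeff_mk]
  push_cast
  rw [this]; ring

lemma nm_Ph_lt {a : ℂ} (ha : ‖a‖ < 1) : nm (1/4) (Ph a) < 1 := by
  have hs : Sm (1/4) (Ph a) := sm_Ph (by norm_num) (by linarith)
  unfold nm
  rw [hs.tsum_eq_zero_add]
  have h1 : ∀ k, ‖coeff (k+1) (Ph a)‖ * (1/4 : ℝ)^(k+1) = (1 - ‖a‖^2) * (1/4) * (‖a‖ * (1/4))^k := by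
    intro k
    rw [coeff_Ph_succ, norm_mul, norm_neg, Complex.norm_real, norm_pow, RCLike.norm_conj,
      Real.norm_of_nonneg (by nlinarith [norm_nonneg a])]
    rw [mul_pow, pow_succ]; ring
  simp_rw [h1]
  rw [tsum_mul_left, tsum_geometric_of_lt_one (by positivity) (by linarith), coeff_Ph_zero]
  have h0 := norm_nonneg a
  have h2 : 0 < 1 - ‖a‖ * (1/4) := by linarith
  have h3 : (1 - ‖a‖^2) * (1/4) * (1 - ‖a‖ * (1/4))⁻¹ < 1 - ‖a‖ := by
    rw [← div_eq_mul_inv, div_lt_iff₀ h2]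
    nlinarith
  linarith

lemma mobius_norm {a z : ℂ} (ha : ‖a‖ < 1) (hz : ‖z‖ < 1) : ‖mobius a z‖ < 1 := by
  have h0 : ‖a‖ * ‖z‖ < 1 := by nlinarith [norm_nonneg a, norm_nonneg z]
  have h1 := one_sub_ne h0
  rw [mobius, norm_div, div_lt_one (norm_pos_iff.2 h1)]
  have h2 : ‖a - z‖^2 < ‖1 - starRingEnd ℂ a * z‖^2 := by
    have e : ‖1 - starRingEnd ℂ a * z‖^2 - ‖a - z‖^2 = (1 - ‖a‖^2) * (1 - ‖z‖^2) := by
      simp only [Complex.sq_norm, Complex.normSq_apply]; simp; ring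
    have : 0 < (1 - ‖a‖^2) * (1 - ‖z‖^2) := by
      apply mul_pos <;> nlinarith [norm_nonneg a, norm_nonneg z]
    linarith
  exact lt_of_pow_lt_pow_left₀ 2 (norm_nonneg _) h2

lemma mobius_invol {a z : ℂ} (ha : ‖a‖ < 1) (hz : ‖z‖ < 1) : mobius a (mobius a z) = z := by
  have h0 : ‖a‖ * ‖z‖ < 1 := by nlinarith [norm_nonneg a, norm_nonneg z]
  have h1 := one_sub_ne h0
  have h2 : 1 - starRingEnd ℂ a * a ≠ 0 := one_sub_ne (by nlinarith [norm_nonneg a])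
  unfold mobius
  have h3 : 1 - starRingEnd ℂ a * ((a - z) / (1 - starRingEnd ℂ a * z)) =
    (1 - starRingEnd ℂ a * a) / (1 - starRingEnd ℂ a * z) := by field_simp; ring
  have h4 : a - (a - z) / (1 - starRingEnd ℂ a * z) =
    z * ((1 - starRingEnd ℂ a * a) / (1 - starRingEnd ℂ a * z)) := by
    rw [← mul_div_assoc, eq_div_iff h1, sub_mul, div_mul_cancel₀ _ h1]; ring
  rw [h3, h4, mul_div_assoc, div_self (div_ne_zero h2 h1), mul_one]

/-- coefficient bound -/
lemma coeff_Ph_pow {a : ℂ} {r : ℝ} (hr : 0 < r) (h : ‖a‖ * r < 1) (j k : ℕ) :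
    ‖coeff j (Ph a ^ k)‖ ≤ (r⁻¹)^j * nm r (Ph a) ^ k := by
  have h1 := Sm.pow hr.le (sm_Ph hr.le h) k
  have h2 := (coeff_le_nm hr.le h1.1 j).trans h1.2
  rw [inv_pow, inv_mul_eq_div, le_div_iff₀ (by positivity)]; exact h2

lemma cps_hasSum {a : ℂ} (ha : ‖a‖ < 1) {F} (hF : Good F) (j : ℕ) :
    HasSum (fun k => coeff k F * coeff j (Ph a ^ k)) (coeff j (cps a F)) := by
  have h1 := hF _ (nm_nonneg (by norm_num) _) (nm_Ph_lt ha)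
  have : Summable (fun k => coeff k F * coeff j (Ph a ^ k)) := by
    refine Summable.of_norm_bounded (h1.mul_left (((1/4:ℝ)⁻¹)^j)) fun k => ?_
    rw [norm_mul]
    have := coeff_Ph_pow (a := a) (r := 1/4) (by norm_num) (by linarith) j k
    calc _ ≤ ‖coeff k F‖ * (((1/4:ℝ)⁻¹)^j * nm (1/4) (Ph a) ^ k) := by gcongr
      _ = _ := by ring
  simpa [cps] using this.hasSum

lemma cps_local {a : ℂ} (ha : ‖a‖ < 1) {F} (hF : Good F) :
    Sm (1/4) (cps a F) ∧ ∀ z : ℂ, ‖z‖ ≤ 1/4 → pv (cps a F) z = pv F (mobius a z) := by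
  have h1 := hF _ (nm_nonneg (by norm_num) _) (nm_Ph_lt ha)
  have hP : Sm (1/4) (Ph a) := sm_Ph (by norm_num) (by linarith)
  have hPk := fun k => Sm.pow (by norm_num) hP k
  -- double summability
  have hD : Summable (fun p : ℕ × ℕ => ‖coeff p.1 F‖ * (‖coeff p.2 (Ph a ^ p.1)‖ * (1/4:ℝ)^p.2)) := by
    refine (summable_prod_of_nonneg (fun p => by positivity)).2 ⟨fun k => ?_, ?_⟩
    · have h2 : Summable (fun j => ‖coeff j (Ph a ^ k)‖ * (1/4:ℝ)^j) := (hPk k).1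
      exact h2.mul_left ‖coeff k F‖
    have h1' : Summable (fun k => ‖coeff k F‖ * nm (1/4) (Ph a) ^ k) := h1
    refine Summable.of_nonneg_of_le (fun k => tsum_nonneg fun j => by positivity) (fun k => ?_) h1'
    simp only [tsum_mul_left]
    gcongr
    exact (hPk k).2
  have hD' : Summable (fun p : ℕ × ℕ => ‖coeff p.2 F‖ * (‖coeff p.1 (Ph a ^ p.2)‖ * (1/4:ℝ)^p.1)) :=
    (Equiv.prodComm ℕ ℕ).summable_iff.2 hD
  constructor
  · refine Summable.of_nonneg_of_le (fun j => by positivity) (fun j => ?_) hD'.prod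
    have h3 := hD'.prod_factor j
    rw [← (cps_hasSum ha hF j).tsum_eq]
    have h4 : Summable (fun k => ‖coeff k F * coeff j (Ph a ^ k)‖) := by
      have := h3.mul_right (((1/4:ℝ)^j)⁻¹)
      refine this.congr fun k => ?_
      rw [norm_mul]; field_simp
    calc _ ≤ (∑' k, ‖coeff k F * coeff j (Ph a ^ k)‖) * (1/4:ℝ)^j := by
          gcongr; exact norm_tsum_le_tsum_norm h4
      _ = _ := by rw [← tsum_mul_right]; refine tsum_congr fun k => ?_; rw [norm_mul]; ring
  · intro z hz
    have hz1 : ‖z‖ < 1 := by linarith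
    have hzP : Sm ‖z‖ (Ph a) := hP.mono (norm_nonneg _) hz
    have hE : Summable (fun p : ℕ × ℕ => coeff p.2 F * (coeff p.1 (Ph a ^ p.2) * z^p.1)) := by
      refine Summable.of_norm_bounded hD' fun p => ?_
      rw [norm_mul, norm_mul, norm_pow]; gcongr
    have h5 : pv (cps a F) z = ∑' j, ∑' k, coeff k F * (coeff j (Ph a ^ k) * z^j) := by
      refine tsum_congr fun j => ?_
      rw [← (cps_hasSum ha hF j).tsum_eq, ← tsum_mul_right]
      exact tsum_congr fun k => by ring
    have h6 : pv F (mobius a z) = ∑' k, ∑' j, coeff k F * (coeff j (Ph a ^ k) * z^j) := by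
      refine tsum_congr fun k => ?_
      rw [tsum_mul_left, ← pv_Ph (by nlinarith [norm_nonneg a, norm_nonneg z]), ← pv_pow' hzP]
      rfl
    rw [h5, h6]
    exact (Summable.tsum_comm (f := fun j k => coeff k F * (coeff j (Ph a ^ k) * z^j)) hE).symm

lemma mobius_diff {a : ℂ} (ha : ‖a‖ < 1) : DifferentiableOn ℂ (mobius a) (Metric.ball 0 1) := by
  unfold mobius
  refine DifferentiableOn.div (by fun_prop) (by fun_prop) fun z hz => one_sub_ne ?_
  have : ‖z‖ < 1 := by simpa using hz
  nlinarith [norm_nonneg a, norm_nonneg z]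

lemma cps_spec {a : ℂ} (ha : ‖a‖ < 1) {F} (hF : Good F) :
    Good (cps a F) ∧ ∀ z : ℂ, ‖z‖ < 1 → pv (cps a F) z = pv F (mobius a z) := by
  have hd : DifferentiableOn ℂ (fun z => pv F (mobius a z)) (Metric.ball 0 1) :=
    (pv_diff one_pos hF).comp (mobius_diff ha) fun z hz => by
      simpa using mobius_norm ha (by simpa using hz)
  obtain ⟨H, h1, h2⟩ := exists_ps one_pos hd
  obtain ⟨h3, h4⟩ := cps_local ha hF
  have : cps a F = H := ps_unique (r := 1/4) (by norm_num) (fun s h0 h => h3.mono h0 h.le)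
    (fun s h0 h => h1 s h0 (by linarith)) fun z hz => by rw [h4 z hz.le, h2 z (by linarith)]
  rw [this]; exact ⟨h1, h2⟩

lemma pv_mul {F G} (hF : Good F) (hG : Good G) {z : ℂ} (hz : ‖z‖ < 1) : pv (F*G) z = pv F z * pv G z :=
  pv_mul' (hF.sm hz) (hG.sm hz)

lemma cps_mul {a : ℂ} (ha : ‖a‖ < 1) {F G} (hF : Good F) (hG : Good G) :
    cps a (F * G) = cps a F * cps a G := by
  have h1 := cps_spec ha hF
  have h2 := cps_spec ha hG
  have h3 := cps_spec ha (hF.mul hG)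
  refine good_unique h3.1 (h1.1.mul h2.1) fun z hz => ?_
  rw [h3.2 z hz, pv_mul h1.1 h2.1 hz, h1.2 z hz, h2.2 z hz, pv_mul hF hG (mobius_norm ha hz)]

lemma cps_cps {a : ℂ} (ha : ‖a‖ < 1) {F} (hF : Good F) : cps a (cps a F) = F := by
  have h1 := cps_spec ha hF
  have h2 := cps_spec ha h1.1
  refine good_unique h2.1 hF fun z hz => ?_
  rw [h2.2 z hz, h1.2 _ (mobius_norm ha hz), mobius_invol ha hz]

end S12

namespace S12
open PowerSeries

lemma Bd.nonneg {b F M} (h : Bd b F M) : 0 ≤ M := by simpa using h 0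
lemma Bd.mono {b F M N} (h : Bd b F M) (hN : M ≤ N) : Bd b F N := fun n => (h n).trans hN

lemma Bd.add {b F G M N} (hb : ∀ k, 0 ≤ b k) (hF : Bd b F M) (hG : Bd b G N) :
    Bd b (F + G) (2 * M + 2 * N) := by
  intro n
  have h1 := hF n
  have h2 := hG n
  calc _ ≤ ∑ k ∈ Finset.range n, (2 * (b k * ‖coeff k F‖ ^ 2) + 2 * (b k * ‖coeff k G‖ ^ 2)) := by
        refine Finset.sum_le_sum fun k _ => ?_
        have h3 := norm_add_le (coeff k F) (coeff k G)
        have h4 : ‖coeff k F + coeff k G‖^2 ≤ 2 * ‖coeff k F‖^2 + 2 * ‖coeff k G‖^2 := by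
          nlinarith [norm_nonneg (coeff k F + coeff k G), sq_nonneg (‖coeff k F‖ - ‖coeff k G‖),
            norm_nonneg (coeff k F), norm_nonneg (coeff k G)]
        rw [map_add]
        nlinarith [mul_le_mul_of_nonneg_left h4 (hb k)]
    _ ≤ _ := by rw [Finset.sum_add_distrib, ← Finset.mul_sum, ← Finset.mul_sum]; linarith

lemma Bd.smul {b F M} (c : ℂ) (hF : Bd b F M) : Bd b (C c * F) (‖c‖^2 * M) := by
  intro n
  have := mul_le_mul_of_nonneg_left (hF n) (by positivity : 0 ≤ ‖c‖^2)
  rw [Finset.mul_sum] at this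
  refine le_trans (le_of_eq (Finset.sum_congr rfl fun k _ => ?_)) this
  rw [coeff_C_mul, norm_mul]; ring

lemma Bd.Xmul {F M} (hF : Bd 1 F M) : Bd 1 (X * F) M := by
  intro n
  cases n with
  | zero => simpa using hF 0
  | succ n =>
    rw [Finset.sum_range_succ']
    simpa [coeff_succ_X_mul] using hF n

lemma Bd.lim {b F M} {Fs : ℕ → PowerSeries ℂ} (h : ∀ N, Bd b (Fs N) M)
    (ht : ∀ j, Tendsto (fun N => coeff j (Fs N)) atTop (𝓝 (coeff j F))) : Bd b F M := by
  intro n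
  refine le_of_tendsto (x := atTop) (f := fun N => ∑ k ∈ Finset.range n, b k * ‖coeff k (Fs N)‖^2) ?_
    (Eventually.of_forall fun N => h N n)
  exact tendsto_finsetSum _ fun k _ => ((ht k).norm.pow 2).const_mul _

lemma sqc (z : ℂ) : ((‖z‖^2 : ℝ) : ℂ) = z * starRingEnd ℂ z := by
  rw [Complex.mul_conj, Complex.normSq_eq_norm_sq]

/-- elementary telescoping identity -/
lemma tele {a c : ℂ} (h : PowerSeries ℂ) (n : ℕ) :
    (1 - ‖a‖^2) * ∑ j ∈ Finset.range (n+1), ‖coeff j (C c * Ks a + (C a - X) * h)‖^2 =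
     ‖c‖^2 * (1 - (‖a‖^2)^(n+1)) + (1 - ‖a‖^2) * (2 * (c * (starRingEnd ℂ a)^(n+1) * starRingEnd ℂ (coeff n h)).re)
     + (1 - ‖a‖^2) * ∑ j ∈ Finset.range (n+1), ‖coeff j ((1 - C (starRingEnd ℂ a) * X) * h)‖^2
     - (1 - ‖a‖^2)^2 * ‖coeff n h‖^2 := by
  have hre : ∀ z : ℂ, ((2 * z.re : ℝ) : ℂ) = z + starRingEnd ℂ z := fun z => by
    rw [Complex.add_conj]
  induction n with
  | zero =>
    have e1 : coeff 0 (C c * Ks a + (C a - X) * h) = c + a * coeff 0 h := by simp [Ks]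
    have e2 : coeff 0 ((1 - C (starRingEnd ℂ a) * X) * h) = coeff 0 h := by simp
    rw [Finset.sum_range_one, Finset.sum_range_one, e1, e2]
    apply Complex.ofReal_injective
    rw [Complex.ofReal_sub, Complex.ofReal_add, Complex.ofReal_add, Complex.ofReal_mul, Complex.ofReal_mul _ (2 * _), Complex.ofReal_mul _ (_ - _), hre]
    simp only [Complex.ofReal_mul, Complex.ofReal_sub, Complex.ofReal_pow, Complex.ofReal_one]
    simp only [← Complex.ofReal_pow, sqc, map_mul, map_pow, map_add, Complex.conj_conj]
    ring
  | succ n ih =>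
    have e1 : coeff (n+1) (C c * Ks a + (C a - X) * h) = c * (starRingEnd ℂ a)^(n+1) + a * coeff (n+1) h - coeff n h := by
      rw [map_add, coeff_C_mul, sub_mul, map_sub, coeff_C_mul, coeff_succ_X_mul]; simp [Ks]; ring
    have e2 : coeff (n+1) ((1 - C (starRingEnd ℂ a) * X) * h) = coeff (n+1) h - starRingEnd ℂ a * coeff n h := by
      rw [sub_mul, map_sub, mul_assoc, coeff_C_mul, coeff_succ_X_mul, one_mul]
    rw [Finset.sum_range_succ, Finset.sum_range_succ _ (n+1), mul_add, ih, e1, e2, mul_add]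
    have key : (1 - ‖a‖^2) * ‖c * (starRingEnd ℂ a)^(n+1) + a * coeff (n+1) h - coeff n h‖^2 =
      ‖c‖^2 * (1 - (‖a‖^2)^(n+1+1)) - ‖c‖^2 * (1 - (‖a‖^2)^(n+1))
      + (1 - ‖a‖^2) * (2 * (c * (starRingEnd ℂ a)^(n+1+1) * starRingEnd ℂ (coeff (n+1) h)).re)
      - (1 - ‖a‖^2) * (2 * (c * (starRingEnd ℂ a)^(n+1) * starRingEnd ℂ (coeff n h)).re)
      + (1 - ‖a‖^2) * ‖coeff (n+1) h - starRingEnd ℂ a * coeff n h‖^2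
      - (1 - ‖a‖^2)^2 * ‖coeff (n+1) h‖^2 + (1 - ‖a‖^2)^2 * ‖coeff n h‖^2 := by
      apply Complex.ofReal_injective
      generalize coeff (n+1) h = p
      generalize coeff n h = q
      have h1 := hre (c * (starRingEnd ℂ a)^(n+1+1) * starRingEnd ℂ p)
      have h2 := hre (c * (starRingEnd ℂ a)^(n+1) * starRingEnd ℂ q)
      simp only [Complex.ofReal_mul, Complex.ofReal_sub, Complex.ofReal_pow, Complex.ofReal_one, Complex.ofReal_add] at h1 h2 ⊢
      rw [h1, h2]
      simp only [← Complex.ofReal_pow, sqc, map_mul, map_pow, map_add, map_sub, Complex.conj_conj]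
      ring
    rw [key]; ring

lemma tele_le {a c : ℂ} (ha : ‖a‖ < 1) (h : PowerSeries ℂ) (n : ℕ) :
    ∑ j ∈ Finset.range n, ‖coeff j (C c * Ks a + (C a - X) * h)‖^2 ≤ ‖c‖^2 / (1 - ‖a‖^2) +
      ∑ j ∈ Finset.range n, ‖coeff j ((1 - C (starRingEnd ℂ a) * X) * h)‖^2 := by
  have hA : 0 < 1 - ‖a‖^2 := by nlinarith [norm_nonneg a]
  cases n with
  | zero => simp; positivity
  | succ n =>
    have h1 := tele (a := a) (c := c) h n
    have h2 : (c * (starRingEnd ℂ a)^(n+1) * starRingEnd ℂ (coeff n h)).re ≤ ‖c‖ * ‖a‖^(n+1) * ‖coeff n h‖ := by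
      refine (Complex.re_le_norm _).trans (le_of_eq ?_)
      simp
    have h3 : 2 * (1 - ‖a‖^2) * (‖c‖ * ‖a‖^(n+1) * ‖coeff n h‖) ≤ ‖c‖^2 * (‖a‖^2)^(n+1) + (1 - ‖a‖^2)^2 * ‖coeff n h‖^2 := by
      have : (‖a‖^2)^(n+1) = (‖a‖^(n+1))^2 := by ring
      rw [this]
      nlinarith [sq_nonneg (‖c‖ * ‖a‖^(n+1) - (1 - ‖a‖^2) * ‖coeff n h‖)]
    have h4 := mul_le_mul_of_nonneg_left h2 hA.le
    rw [← sub_le_iff_le_add, le_div_iff₀ hA]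
    nlinarith

def pc (a : ℂ) (N : ℕ) (f : ℕ → ℂ) : PowerSeries ℂ := ∑ k ∈ Finset.range N, C (f k) * Ph a ^ k

lemma pc_bd {a : ℂ} (ha : ‖a‖ < 1) (N : ℕ) : ∀ (f : ℕ → ℂ) (n : ℕ),
    ∑ j ∈ Finset.range n, ‖coeff j (Ks a * pc a N f)‖^2 ≤ (∑ k ∈ Finset.range N, ‖f k‖^2) / (1 - ‖a‖^2) := by
  have hA : 0 < 1 - ‖a‖^2 := by nlinarith [norm_nonneg a]
  induction N with
  | zero => intro f n; simp [pc]
  | succ N ih =>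
    intro f n
    have e1 : pc a (N+1) f = C (f 0) + Ph a * pc a N (fun k => f (k+1)) := by
      unfold pc
      rw [Finset.sum_range_succ', Finset.mul_sum, add_comm]
      congr 1
      · simp
      · refine Finset.sum_congr rfl fun k _ => by rw [pow_succ]; ring
    set w := Ks a * pc a N (fun k => f (k+1))
    have e2 : Ks a * pc a (N+1) f = C (f 0) * Ks a + (C a - X) * (Ks a * w) := by
      rw [e1, Ph]; ring
    have e3 : (1 - C (starRingEnd ℂ a) * X) * (Ks a * w) = w := by
      rw [← mul_assoc, Ks_inv, one_mul]
    have h1 := tele_le (c := f 0) ha (Ks a * w) n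
    rw [e3] at h1
    rw [e2, Finset.sum_range_succ', add_div]
    linarith [ih (fun k => f (k+1)) n]

lemma coeff_cps_tendsto {a : ℂ} (ha : ‖a‖ < 1) {F} (hF : Good F) (G : PowerSeries ℂ) (j : ℕ) :
    Tendsto (fun N => coeff j (G * pc a N (fun k => coeff k F))) atTop (𝓝 (coeff j (G * cps a F))) := by
  simp only [coeff_mul]
  refine tendsto_finsetSum _ fun p _ => Tendsto.const_mul _ ?_
  have := (cps_hasSum ha hF p.2).tendsto_sum_nat
  refine this.congr fun N => ?_
  simp [pc, map_sum, coeff_C_mul]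

lemma cps_bd {a : ℂ} (ha : ‖a‖ < 1) : ∃ K : ℝ, 0 < K ∧ ∀ F M, Good F → Bd 1 F M → Bd 1 (cps a F) (K * M) := by
  have hA : 0 < 1 - ‖a‖^2 := by nlinarith [norm_nonneg a]
  refine ⟨(2 + 2 * ‖a‖^2) / (1 - ‖a‖^2), by positivity, fun F M hG hF => ?_⟩
  have h1 : Bd 1 (Ks a * cps a F) (M / (1 - ‖a‖^2)) := by
    refine Bd.lim (Fs := fun N => Ks a * pc a N (fun k => coeff k F)) (fun N n => ?_)
      (fun j => coeff_cps_tendsto ha hG _ j)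
    have := hF N
    simp only [Pi.one_apply, one_mul] at this ⊢
    exact (pc_bd ha N _ n).trans (by gcongr)
  have h2 := Bd.add (fun _ => zero_le_one) h1 ((h1.Xmul).smul (-starRingEnd ℂ a))
  have e : cps a F = Ks a * cps a F + C (-starRingEnd ℂ a) * (X * (Ks a * cps a F)) := by
    conv_lhs => rw [← one_mul (cps a F), ← Ks_inv a]
    rw [map_neg]; ring
  rw [e]
  refine h2.mono (le_of_eq ?_)
  rw [norm_neg, RCLike.norm_conj]; field_simp

/-- the multiplier lemma -/
lemma mult_bd {H F : PowerSeries ℂ} {M N : ℝ} (hH : Good H) (hM : ∀ z : ℂ, ‖z‖ < 1 → ‖pv H z‖ ≤ M)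
    (hF : Bd 1 F N) : Bd 1 (H * F) (M^2 * N) := by
  intro n
  have hN := hF.nonneg
  have hM0 : 0 ≤ M := (norm_nonneg _).trans (hM 0 (by simp))
  simp only [Pi.one_apply, one_mul]
  -- main claim
  have main : ∀ r : ℝ, 0 < r → r < 1 → ∀ ε : ℝ, 0 < ε →
      ∑ j ∈ Finset.range n, ‖coeff j (rescale (r:ℂ) H * F)‖^2 ≤ (M + ε)^2 * N := by
    intro r h0 h1 ε hε
    have hs : Summable fun k => ‖coeff k H‖ * r^k := hH r h0.le h1
    obtain ⟨m, hm, hmn⟩ : ∃ m, (∑' k, ‖coeff (k + m) H‖ * r^(k+m)) < ε ∧ n ≤ m := by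
      have := tendsto_sum_nat_add (fun k => ‖coeff k H‖ * r^k)
      obtain ⟨m, h⟩ := ((this.eventually (gt_mem_nhds hε)).and (eventually_ge_atTop n)).exists
      exact ⟨m, h⟩
    set p := trunc m (rescale (r:ℂ) H) with hp
    set f := trunc n F with hf
    have hpe : ∀ z : ℂ, ‖z‖ = 1 → ‖p.eval z‖ ≤ M + ε := by
      intro z hz
      have hrz : ‖(r:ℂ) * z‖ = r := by simp [hz, abs_of_pos h0]
      have e1 : p.eval z = ∑ k ∈ Finset.range m, coeff k H * ((r:ℂ)*z)^k := by
        rw [hp, Polynomial.eval, PowerSeries.eval₂_trunc_eq_sum_range]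
        refine Finset.sum_congr rfl fun k _ => ?_
        rw [RingHom.id_apply, coeff_rescale]; ring
      have hsum : Summable fun k => coeff k H * ((r:ℂ)*z)^k := Sm.summable (by rw [hrz]; exact hs)
      have e2 := hsum.sum_add_tsum_nat_add m
      have e3 : p.eval z = pv H ((r:ℂ)*z) - ∑' k, coeff (k+m) H * ((r:ℂ)*z)^(k+m) := by
        rw [e1, pv, ← e2]; ring
      rw [e3]
      refine (norm_sub_le _ _).trans (add_le_add (hM _ (by rw [hrz]; exact h1)) ?_)
      have hs' : Summable fun k => ‖coeff (k+m) H * ((r:ℂ)*z)^(k+m)‖ := by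
        have := (summable_nat_add_iff m).2 hs
        refine this.congr fun k => ?_
        rw [norm_mul, norm_pow, hrz]
      refine (norm_tsum_le_tsum_norm hs').trans (le_trans (le_of_eq ?_) hm.le)
      refine tsum_congr fun k => ?_
      rw [norm_mul, norm_pow, hrz]
    have sumsup : ∀ (q : Polynomial ℂ) (l : ℕ), ∑ j ∈ Finset.range l, ‖q.coeff j‖^2 ≤ ∑ i ∈ q.support, ‖q.coeff i‖^2 := by
      intro q l
      calc _ = ∑ j ∈ (Finset.range l).filter (· ∈ q.support), ‖q.coeff j‖^2 := by
            rw [Finset.sum_filter]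
            refine Finset.sum_congr rfl fun j _ => ?_
            split_ifs with h
            · rfl
            · simp [Polynomial.notMem_support_iff.1 h]
        _ ≤ _ := Finset.sum_le_sum_of_subset_of_nonneg (fun j hj => (Finset.mem_filter.1 hj).2)
            (fun _ _ _ => by positivity)
    have c1 : ∀ j ∈ Finset.range n, ‖coeff j (rescale (r:ℂ) H * F)‖^2 = ‖(p * f).coeff j‖^2 := by
      intro j hj
      have hj' := Finset.mem_range.1 hj
      rw [coeff_mul_eq_coeff_trunc_mul_trunc₂ _ _ (lt_of_lt_of_le hj' hmn) hj', ← Polynomial.coe_mul, Polynomial.coeff_coe]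
    rw [Finset.sum_congr rfl c1]
    refine (sumsup (p*f) n).trans ?_
    rw [Polynomial.sum_sq_norm_coeff_eq_circleAverage]
    have c2 : ∀ q : Polynomial ℂ, CircleIntegrable (fun z => ‖q.eval z‖^2) 0 1 := fun q =>
      ContinuousOn.circleIntegrable' (by fun_prop)
    have c3 : Real.circleAverage (fun z => ‖(p*f).eval z‖^2) 0 1 ≤
        Real.circleAverage (fun z => ((M+ε)^2) • ‖f.eval z‖^2) 0 1 := by
      refine Real.circleAverage_mono (c2 _) ?_ ?_
      · exact ContinuousOn.circleIntegrable' (by fun_prop)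
      · intro z hz
        have hz1 : ‖z‖ = 1 := by simpa using hz
        rw [Polynomial.eval_mul, norm_mul, mul_pow, smul_eq_mul]
        gcongr
        exact hpe z hz1
    refine c3.trans ?_
    rw [Real.circleAverage_fun_smul, ← Polynomial.sum_sq_norm_coeff_eq_circleAverage, smul_eq_mul]
    gcongr
    have := hF n
    simp only [Pi.one_apply, one_mul] at this
    refine le_trans ?_ this
    calc _ ≤ ∑ j ∈ Finset.range n, ‖f.coeff j‖^2 := by
          refine Finset.sum_le_sum_of_subset_of_nonneg (fun j hj => ?_) (fun _ _ _ => by positivity)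
          rw [Finset.mem_range]
          by_contra h
          exact (Polynomial.mem_support_iff.1 hj) (by rw [hf, coeff_trunc, if_neg h])
      _ = _ := Finset.sum_congr rfl fun j hj => by
          rw [hf, coeff_trunc, if_pos (Finset.mem_range.1 hj)]
  have main2 : ∀ r : ℝ, 0 < r → r < 1 →
      ∑ j ∈ Finset.range n, ‖coeff j (rescale (r:ℂ) H * F)‖^2 ≤ M^2 * N := by
    intro r h0 h1
    have : Tendsto (fun ε : ℝ => (M+ε)^2*N) (𝓝[>] 0) (𝓝 ((M+0)^2*N)) := by
      apply tendsto_nhdsWithin_of_tendsto_nhds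
      exact Continuous.tendsto (by fun_prop) 0
    rw [add_zero] at this
    exact ge_of_tendsto this (eventually_mem_nhdsWithin.mono fun ε hε => main r h0 h1 ε hε)
  have ht : Tendsto (fun r : ℝ => ∑ j ∈ Finset.range n, ‖coeff j (rescale (r:ℂ) H * F)‖^2) (𝓝[<] 1)
      (𝓝 (∑ j ∈ Finset.range n, ‖coeff j (rescale ((1:ℝ):ℂ) H * F)‖^2)) := by
    apply tendsto_nhdsWithin_of_tendsto_nhds
    have : Continuous (fun r : ℝ => ∑ j ∈ Finset.range n, ‖coeff j (rescale (r:ℂ) H * F)‖^2) := by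
      simp only [coeff_mul, coeff_rescale]
      fun_prop
    exact this.tendsto 1
  have h1 : rescale ((1:ℝ):ℂ) H = H := by simp
  rw [h1] at ht
  refine le_of_tendsto ht ?_
  filter_upwards [Ioo_mem_nhdsLT (zero_lt_one (α := ℝ))] with r hr using main2 r hr.1 hr.2

end S12

namespace S12
open PowerSeries

def Wt (b : ℕ → ℝ) : Prop := (∀ k, 0 < b k) ∧ Tendsto (fun k => b (k+1) / b k) atTop (𝓝 1)

lemma Wt.inv {b} (h : Wt b) : Wt (fun k => (b k)⁻¹) := by
  refine ⟨fun k => inv_pos.2 (h.1 k), ?_⟩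
  have := h.2.inv₀ one_ne_zero
  rw [inv_one] at this
  refine this.congr fun k => ?_
  simp [div_eq_mul_inv, mul_comm]

lemma Wt.sq {b} (h : Wt b) : Wt (fun k => b k ^ 2) := by
  refine ⟨fun k => pow_pos (h.1 k) 2, ?_⟩
  have := h.2.pow 2
  rw [one_pow] at this
  exact this.congr fun k => by rw [div_pow]

lemma Wt.growth {b} (h : Wt b) {q : ℝ} (hq : 1 < q) : ∃ K, 0 < K ∧ ∀ k, b k ≤ K * q ^ k := by
  have hq0 : 0 < q := by linarith
  have hs : Summable (fun k => b k / q ^ k) := by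
    refine summable_of_ratio_test_tendsto_lt_one (l := 1/q) (by rw [div_lt_one hq0]; exact hq)
      (Eventually.of_forall fun k => (div_pos (h.1 k) (by positivity)).ne') ?_
    have := h.2.div_const q
    refine this.congr fun k => ?_
    rw [Real.norm_of_nonneg (div_pos (h.1 _) (by positivity)).le, Real.norm_of_nonneg (div_pos (h.1 _) (by positivity)).le]
    have := (h.1 k).ne'
    rw [pow_succ]; field_simp
  refine ⟨1 + ∑' k, b k / q ^ k, ?_, fun k => ?_⟩
  · have : 0 ≤ ∑' k, b k / q ^ k := tsum_nonneg fun k => (div_pos (h.1 k) (by positivity)).le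
    linarith
  · have := hs.le_tsum k (fun j _ => (div_pos (h.1 j) (by positivity)).le)
    rw [div_le_iff₀ (by positivity)] at this
    nlinarith [pow_pos hq0 k]

lemma Bd.coeff_le {b F M} (hb : ∀ k, 0 ≤ b k) (h : Bd b F M) (k : ℕ) : b k * ‖coeff k F‖^2 ≤ M :=
  (Finset.single_le_sum (f := fun k => b k * ‖coeff k F‖^2) (fun j _ => mul_nonneg (hb j) (by positivity))
    (Finset.self_mem_range_succ k)).trans (h (k+1))

lemma good_of_bd {b F M} (hb : Wt b) (h : Bd b F M) : Good F := by
  intro r h0 h1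
  set s := max r (1/2)
  have hs0 : 0 < s := lt_of_lt_of_le (by norm_num) (le_max_right r (1/2))
  have hs1 : s < 1 := max_lt h1 (by norm_num)
  refine Sm.mono h0 (le_max_left r (1/2)) ?_
  change Sm s F
  obtain ⟨K, hK, hk⟩ := hb.inv.growth (q := s⁻¹) ((one_lt_inv₀ hs0).2 hs1)
  have hM := h.nonneg
  have hg := summable_geometric_of_lt_one (Real.sqrt_nonneg s) (by rw [Real.sqrt_lt' one_pos]; simpa using hs1)
  refine Summable.of_nonneg_of_le (fun k => by positivity) (fun k => ?_) (hg.mul_left (Real.sqrt (M*K)))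
  have h2 := h.coeff_le (fun k => (hb.1 k).le) k
  have h3 : ‖coeff k F‖^2 ≤ M * (K * (s⁻¹)^k) := by
    calc ‖coeff k F‖^2 = (b k * ‖coeff k F‖^2) * (b k)⁻¹ := by field_simp [(hb.1 k).ne']
      _ ≤ M * (K * (s⁻¹)^k) := mul_le_mul h2 (hk k) (inv_pos.2 (hb.1 k)).le hM
  refine le_of_sq_le_sq ?_ (by positivity)
  have h4 : (Real.sqrt s ^ k)^2 = s^k := by
    rw [← pow_mul, mul_comm, pow_mul, Real.sq_sqrt hs0.le]
  rw [mul_pow, mul_pow, Real.sq_sqrt (by positivity), h4]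
  calc _ ≤ M * (K * (s⁻¹)^k) * (s^k)^2 := by gcongr
    _ = _ := by rw [inv_pow]; field_simp
where
  le_of_sq_le_sq {x y : ℝ} (h : x^2 ≤ y^2) (hy : 0 ≤ y) : x ≤ y := abs_le_of_sq_le_sq' h hy |>.2

def rep (β : ℕ → ℝ) (a : H2) : PowerSeries ℂ := PowerSeries.mk fun k => a k / (β k : ℂ)

lemma repFun_eq (β : ℕ → ℝ) (a : H2) (z : ℂ) : repFun β a z = pv (rep β a) z := by
  simp [repFun, pv, rep]

lemma rep_bd {β : ℕ → ℝ} (hβ : ∀ k, 0 < β k) (a : H2) : Bd (fun k => β k^2) (rep β a) (‖a‖^2) := by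
  intro n
  have h := lp.sum_rpow_le_norm_rpow (p := 2) (by norm_num) a (Finset.range n)
  simp only [ENNReal.toReal_ofNat, Real.rpow_ofNat] at h
  refine le_trans (le_of_eq (Finset.sum_congr rfl fun k _ => ?_)) h
  have := (hβ k).ne'
  simp only [rep, coeff_mk, norm_div, Complex.norm_real, Real.norm_of_nonneg (hβ k).le]
  field_simp

lemma rep_surj {β : ℕ → ℝ} (hβ : ∀ k, 0 < β k) {F M} (h : Bd (fun k => β k^2) F M) :
    ∃ a : H2, rep β a = F ∧ ‖a‖^2 ≤ M := by
  have key : ∀ s : Finset ℕ, ∑ i ∈ s, ‖(β i : ℂ) * coeff i F‖ ^ (2:ENNReal).toReal ≤ M := by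
    intro s
    obtain ⟨n, hn⟩ := s.exists_nat_subset_range
    refine (Finset.sum_le_sum_of_subset_of_nonneg hn (fun _ _ _ => by positivity)).trans ?_
    refine le_trans (le_of_eq (Finset.sum_congr rfl fun k _ => ?_)) (h n)
    simp only [ENNReal.toReal_ofNat, Real.rpow_ofNat]
    rw [norm_mul, mul_pow, Complex.norm_real, Real.norm_of_nonneg (hβ k).le]
  have hm : Memℓp (fun i => (β i : ℂ) * coeff i F) 2 := memℓp_gen' key
  refine ⟨⟨_, hm⟩, ?_, ?_⟩
  · ext k
    have : (β k : ℂ) ≠ 0 := by exact_mod_cast (hβ k).ne'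
    simp only [rep, coeff_mk]
    field_simp
  · have hM := h.nonneg
    have := lp.norm_le_of_forall_sum_le (p := 2) (E := fun _ : ℕ => ℂ) (C := Real.sqrt M) (by norm_num) (Real.sqrt_nonneg _) (f := ⟨_, hm⟩)
      (fun s => by
        refine (key s).trans (le_of_eq ?_)
        simp only [ENNReal.toReal_ofNat, Real.rpow_ofNat, Real.sq_sqrt hM])
    calc _ ≤ (Real.sqrt M)^2 := by gcongr
      _ = M := Real.sq_sqrt hM

lemma rep_inj {β : ℕ → ℝ} (hβ : ∀ k, 0 < β k) {a a' : H2} (h : rep β a = rep β a') : a = a' := by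
  ext k
  have h1 := congrArg (coeff k) h
  have : (β k : ℂ) ≠ 0 := by exact_mod_cast (hβ k).ne'
  simpa [rep, div_left_inj' this] using h1

lemma rep_add {β : ℕ → ℝ} (a a' : H2) : rep β (a + a') = rep β a + rep β a' := by
  ext k; simp [rep, add_div]

lemma rep_smul {β : ℕ → ℝ} (c : ℂ) (a : H2) : rep β (c • a) = C c * rep β a := by
  ext k; simp [rep, mul_div_assoc]

/-- bounded operators from series-level maps -/
lemma mkOp {β : ℕ → ℝ} (hβ : ∀ k, 0 < β k) (T : PowerSeries ℂ → PowerSeries ℂ) (K : ℝ) (hK : 0 ≤ K)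
    (hadd : ∀ a a' : H2, T (rep β a + rep β a') = T (rep β a) + T (rep β a'))
    (hsm : ∀ (c : ℂ) (a : H2), T (C c * rep β a) = C c * T (rep β a))
    (hbd : ∀ F M, Bd (fun k => β k^2) F M → Bd (fun k => β k^2) (T F) (K * M)) :
    ∃ X : H2 →L[ℂ] H2, ∀ a, rep β (X a) = T (rep β a) := by
  have h := fun a : H2 => rep_surj hβ (hbd _ _ (rep_bd hβ a))
  choose f h1 h2 using h
  let L : H2 →ₗ[ℂ] H2 :=
    { toFun := f
      map_add' := fun a a' => rep_inj hβ (by rw [h1, rep_add, rep_add, hadd, h1, h1])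
      map_smul' := fun c a => rep_inj hβ (by rw [h1, RingHom.id_apply, rep_smul, rep_smul, hsm, h1]) }
  refine ⟨L.mkContinuous (Real.sqrt K) fun a => ?_, fun a => h1 a⟩
  refine abs_le_of_sq_le_sq' ?_ (by positivity) |>.2
  rw [mul_pow, Real.sq_sqrt hK]
  exact h2 a

lemma cps_add {a : ℂ} (ha : ‖a‖ < 1) {F G} (hF : Good F) (hG : Good G) : cps a (F + G) = cps a F + cps a G := by
  ext j
  have h1 := (cps_hasSum ha hF j).add (cps_hasSum ha hG j)
  have h2 := cps_hasSum ha (hF.add hG) j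
  rw [map_add, ← h1.tsum_eq, ← h2.tsum_eq]
  exact tsum_congr fun k => by rw [map_add]; ring

lemma cps_C {a : ℂ} (ha : ‖a‖ < 1) (c : ℂ) : cps a (C c) = C c := by
  have h := cps_spec ha (good_C c)
  exact good_unique h.1 (good_C c) fun z hz => by rw [h.2 z hz, pv_C, pv_C]

lemma cps_X {a : ℂ} (ha : ‖a‖ < 1) : cps a X = Ph a := by
  have h := cps_spec ha good_X
  exact good_unique h.1 (good_Ph ha) fun z hz => by
    rw [h.2 z hz, pv_X, pv_Ph (by nlinarith [norm_nonneg a, norm_nonneg z])]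

lemma Xmul_bd {b : ℕ → ℝ} (hb : Wt b) : ∃ K : ℝ, 0 < K ∧ ∀ F M, Bd b F M → Bd b (X * F) (K * M) := by
  obtain ⟨K, hK⟩ := hb.2.bddAbove_range
  have hK' : ∀ k, b (k+1) ≤ K * b k := fun k => by
    have := hK ⟨k, rfl⟩
    simp only at this
    rwa [div_le_iff₀ (hb.1 k)] at this
  have hK0 : 0 < K := by
    have := hK' 0
    have h1 := hb.1 1
    have h2 := hb.1 0
    by_contra h
    nlinarith
  refine ⟨K, hK0, fun F M h n => ?_⟩
  cases n with
  | zero => simpa using mul_nonneg hK0.le h.nonneg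
  | succ n =>
    rw [Finset.sum_range_succ']
    have := mul_le_mul_of_nonneg_left (h n) hK0.le
    rw [Finset.mul_sum] at this
    refine le_trans ?_ this
    simp only [coeff_succ_X_mul, coeff_zero_X_mul, norm_zero]
    rw [zero_pow two_ne_zero, mul_zero, add_zero]
    refine Finset.sum_le_sum fun k _ => ?_
    rw [← mul_assoc]; gcongr; exact hK' k

theorem build {β : ℕ → ℝ} (hβ : Wt β) {a : ℂ} (ha : ‖a‖ < 1)
    (h : ∃ K : ℝ, 0 ≤ K ∧ ∀ F M, Bd (fun k => β k^2) F M → Bd (fun k => β k^2) (cps a F) (K * M)) :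
    MzSimMphi β (mobius a) := by
  obtain ⟨K, hK, hbd⟩ := h
  have hg : ∀ u : H2, Good (rep β u) := fun u => good_of_bd hβ.sq (rep_bd hβ.1 u)
  obtain ⟨Y, hY⟩ := mkOp hβ.1 (cps a) K hK (fun u v => cps_add ha (hg u) (hg v))
    (fun c u => by rw [cps_mul ha (good_C c) (hg u), cps_C ha]) hbd
  obtain ⟨K', hK', hbd'⟩ := Xmul_bd hβ.sq
  obtain ⟨Tz, hTz⟩ := mkOp hβ.1 (fun F => X * F) K' hK'.le (fun u v => mul_add _ _ _)
    (fun c u => by ring) hbd'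
  have hYY : ∀ u, Y (Y u) = u := fun u => rep_inj hβ.1 (by rw [hY, hY, cps_cps ha (hg u)])
  refine ⟨Tz, Y ∘L Tz ∘L Y, fun u z hz => ?_, fun u z hz => ?_,
    ContinuousLinearEquiv.equivOfInverse Y Y hYY hYY, fun u => ?_⟩
  · rw [repFun_eq, repFun_eq, hTz, pv_mul good_X (hg u) (mem_disk.1 hz), pv_X]
  · have hz' := mem_disk.1 hz
    have e : rep β ((Y ∘L Tz ∘L Y) u) = Ph a * rep β u := by
      simp only [ContinuousLinearMap.comp_apply]
      rw [hY, hTz, hY, cps_mul ha good_X (cps_spec ha (hg u)).1, cps_cps ha (hg u), cps_X ha]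
    rw [repFun_eq, repFun_eq, e, pv_mul (good_Ph ha) (hg u) hz', pv_Ph (by nlinarith [norm_nonneg a, norm_nonneg z])]
  · simp [hYY]

theorem extract {β : ℕ → ℝ} (hβ : Wt β) {a : ℂ} (ha : ‖a‖ < 1) (h : MzSimMphi β (mobius a)) :
    ∃ (G Gi : PowerSeries ℂ) (K : ℝ), Good G ∧ Good Gi ∧ G * Gi = 1 ∧ 0 < K ∧ ∀ F M,
      Bd (fun k => β k^2) F M → Bd (fun k => β k^2) (G * cps a F) (K * M) ∧
        Bd (fun k => β k^2) (cps a (Gi * F)) (K * M) := by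
  obtain ⟨Tz, Tφ, hz, hφ, Y, hY⟩ := h
  have hg : ∀ u : H2, Good (rep β u) := fun u => good_of_bd hβ.sq (rep_bd hβ.1 u)
  have hz' : ∀ u, rep β (Tz u) = X * rep β u := fun u =>
    good_unique (hg _) (good_X.mul (hg u)) fun z h => by
      rw [← repFun_eq, hz u z (mem_disk.2 h), repFun_eq, pv_mul good_X (hg u) h, pv_X]
  have hφ' : ∀ u, rep β (Tφ u) = Ph a * rep β u := fun u =>
    good_unique (hg _) ((good_Ph ha).mul (hg u)) fun z h => by
      rw [← repFun_eq, hφ u z (mem_disk.2 h), repFun_eq, pv_mul (good_Ph ha) (hg u) h,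
        pv_Ph (by nlinarith [norm_nonneg a, norm_nonneg z])]
  set e : ℕ → H2 := fun k => lp.single 2 k (β k : ℂ) with he
  have hne : ∀ k, (β k : ℂ) ≠ 0 := fun k => by exact_mod_cast (hβ.1 k).ne'
  have hre : ∀ k, rep β (e k) = X ^ k := by
    intro k; ext j
    simp only [rep, he, coeff_mk, coeff_X_pow]
    by_cases hjk : j = k
    · subst hjk; simp [hne]
    · simp [hjk]
  set G := rep β (Y (e 0)) with hG
  have hYe : ∀ k, rep β (Y (e k)) = G * Ph a ^ k := by
    intro k
    induction k with
    | zero => simp [hG]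
    | succ k ih =>
      have : e (k+1) = Tz (e k) := rep_inj hβ.1 (by rw [hz', hre, hre, pow_succ']) 
      rw [this, hY, hφ', ih]; ring
  have main : ∀ u, rep β (Y u) = G * cps a (rep β u) := by
    intro u
    ext j
    have h1 : HasSum (fun k => lp.single 2 k (u k) : ℕ → H2) u := lp.hasSum_single (by norm_num) u
    have h2 := h1.map (Y : H2 →+ H2) Y.continuous
    have h3 : HasSum (fun k => coeff j (rep β (Y (lp.single 2 k (u k))))) (coeff j (rep β (Y u))) := by
      let ev : H2 →L[ℂ] ℂ := lp.evalCLM ℂ (fun _ : ℕ => ℂ) 2 j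
      have h4 := (h2.map (ev : H2 →+ ℂ) ev.continuous).div_const (β j : ℂ)
      simp only [rep, coeff_mk]
      exact h4
    have h5 : ∀ k, coeff j (rep β (Y (lp.single 2 k (u k)))) = coeff j (G * (C (coeff k (rep β u)) * Ph a ^ k)) := by
      intro k
      have : (lp.single 2 k (u k) : H2) = (u k / (β k : ℂ)) • e k := by
        rw [he]; simp only []
        rw [← lp.single_smul, smul_eq_mul, div_mul_cancel₀ _ (hne k)]
      rw [this, map_smul, rep_smul, hYe]
      simp only [rep, coeff_mk]
      congr 1; ring
    have h6 := h3.tendsto_sum_nat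
    have h7 := coeff_cps_tendsto ha (hg u) G j
    refine tendsto_nhds_unique h6 (h7.congr fun N => ?_)
    rw [pc, Finset.mul_sum, map_sum]
    exact Finset.sum_congr rfl fun k _ => (h5 k).symm
  set Gi := cps a (rep β (Y.symm (e 0))) with hGi
  have hGG : G * Gi = 1 := by
    rw [hGi, ← main, Y.apply_symm_apply, hre, pow_zero]
  refine ⟨G, Gi, ‖(Y : H2 →L[ℂ] H2)‖^2 + ‖(Y.symm : H2 →L[ℂ] H2)‖^2 + 1, hg _,
    (cps_spec ha (hg _)).1, hGG, by positivity, fun F M hF => ?_⟩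
  obtain ⟨u, hu, hn⟩ := rep_surj hβ.1 hF
  have hM := hF.nonneg
  constructor
  · rw [← hu, ← main]
    refine (rep_bd hβ.1 (Y u)).mono ?_
    have h1 := (Y : H2 →L[ℂ] H2).le_opNorm u
    calc ‖Y u‖^2 ≤ (‖(Y : H2 →L[ℂ] H2)‖ * ‖u‖)^2 := by gcongr; exact h1
      _ = ‖(Y : H2 →L[ℂ] H2)‖^2 * ‖u‖^2 := by ring
      _ ≤ (‖(Y : H2 →L[ℂ] H2)‖^2 + ‖(Y.symm : H2 →L[ℂ] H2)‖^2 + 1) * M := by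
        gcongr; nlinarith [sq_nonneg ‖(Y.symm : H2 →L[ℂ] H2)‖]
  · have h1 : cps a (Gi * F) = rep β (Y.symm u) := by
      have h2 := main (Y.symm u)
      rw [Y.apply_symm_apply, hu] at h2
      rw [h2, ← mul_assoc, mul_comm Gi, hGG, one_mul, cps_cps ha (hg _)]
    rw [h1]
    refine (rep_bd hβ.1 _).mono ?_
    have h1 := (Y.symm : H2 →L[ℂ] H2).le_opNorm u
    calc ‖Y.symm u‖^2 ≤ (‖(Y.symm : H2 →L[ℂ] H2)‖ * ‖u‖)^2 := by gcongr; exact h1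
      _ = ‖(Y.symm : H2 →L[ℂ] H2)‖^2 * ‖u‖^2 := by ring
      _ ≤ (‖(Y : H2 →L[ℂ] H2)‖^2 + ‖(Y.symm : H2 →L[ℂ] H2)‖^2 + 1) * M := by
        gcongr; nlinarith [sq_nonneg ‖(Y : H2 →L[ℂ] H2)‖]

end S12

namespace S12
open PowerSeries

def vv (a : ℂ) (m k : ℕ) : ℂ := coeff m (Ks a * Ph a ^ k)

lemma Ph_inv (a : ℂ) : (1 - C (starRingEnd ℂ a) * X) * Ph a = C a - X := by
  unfold Ph
  linear_combination (C a - X) * Ks_inv a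

lemma vv_zero_left (a : ℂ) (k : ℕ) : vv a 0 k = a ^ k := by
  unfold vv
  have h1 := coeff_Ph_zero a
  simp only [coeff_zero_eq_constantCoeff_apply, map_mul, map_pow] at *
  rw [h1]; simp [Ks, ← coeff_zero_eq_constantCoeff_apply]

lemma vv_zero_right (a : ℂ) (m : ℕ) : vv a m 0 = (starRingEnd ℂ a) ^ m := by
  simp [vv, Ks]

lemma vv_succ (a : ℂ) (m k : ℕ) : vv a (m+1) (k+1) =
    starRingEnd ℂ a * vv a m (k+1) + a * vv a (m+1) k - vv a m k := by
  unfold vv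
  have h : Ks a * Ph a ^ (k+1) = C (starRingEnd ℂ a) * (X * (Ks a * Ph a ^ (k+1))) +
      C a * (Ks a * Ph a ^ k) - X * (Ks a * Ph a ^ k) := by
    rw [pow_succ]
    linear_combination (Ks a * Ph a ^ k) * Ph_inv a
  conv_lhs => rw [h]
  simp only [map_add, map_sub, coeff_C_mul, coeff_succ_X_mul]

lemma vv_symm (a : ℂ) : ∀ m k : ℕ, starRingEnd ℂ (vv a k m) = vv a m k := by
  intro m
  induction m with
  | zero => intro k; simp [vv_zero_left, vv_zero_right]
  | succ m ih =>
    intro k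
    induction k with
    | zero => simp [vv_zero_left, vv_zero_right]
    | succ k ihk =>
      rw [vv_succ, vv_succ, map_sub, map_add, map_mul, map_mul, ih (k+1), ihk, ih k]
      simp; ring

lemma vv_norm_symm (a : ℂ) (m k : ℕ) : ‖vv a k m‖ = ‖vv a m k‖ := by
  rw [← vv_symm a m k, Complex.norm_conj]

lemma cps_one {a : ℂ} (ha : ‖a‖ < 1) : cps a 1 = 1 := by simpa using cps_C ha 1

lemma cps_Ph {a : ℂ} (ha : ‖a‖ < 1) : cps a (Ph a) = X := by
  rw [← cps_X ha, cps_cps ha good_X]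

lemma cps_pow {a : ℂ} (ha : ‖a‖ < 1) {F} (hF : Good F) (k : ℕ) : cps a (F^k) = cps a F ^ k := by
  induction k with
  | zero => simpa using cps_one ha
  | succ k ih => rw [pow_succ, cps_mul ha (hF.pow k) hF, ih, pow_succ]

lemma nsq_ne {a : ℂ} (ha : ‖a‖ < 1) : (0:ℝ) < 1 - ‖a‖^2 := by nlinarith [norm_nonneg a]

lemma Ks_cps {a : ℂ} (ha : ‖a‖ < 1) : Ks a * cps a (Ks a) = C ((((1 - ‖a‖^2)⁻¹ : ℝ)) : ℂ) := by
  have g1 : Good (1 - C (starRingEnd ℂ a) * X) := good_one.sub ((good_C _).mul good_X)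
  have h := cps_mul ha g1 (good_Ks ha)
  rw [Ks_inv, cps_one ha] at h
  have h2 : cps a (1 - C (starRingEnd ℂ a) * X) = 1 - C (starRingEnd ℂ a) * Ph a := by
    have := cps_add ha g1 ((good_C (starRingEnd ℂ a)).mul good_X)
    rw [sub_add_cancel, cps_one ha, cps_mul ha (good_C _) good_X, cps_C ha, cps_X ha] at this
    exact eq_sub_of_add_eq this.symm
  rw [h2] at h
  have h3 : 1 - C (starRingEnd ℂ a) * Ph a = C (((1 - ‖a‖^2 : ℝ)) : ℂ) * Ks a := by
    have : (((1 - ‖a‖^2 : ℝ)) : ℂ) = 1 - a * starRingEnd ℂ a := by rw [← sqc]; push_cast; rfl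
    rw [this, map_sub, map_mul, map_one]; unfold Ph
    linear_combination -(Ks_inv a)
  rw [h3] at h
  have h4 : (C ((((1 - ‖a‖^2)⁻¹ : ℝ)) : ℂ) : PowerSeries ℂ) * C (((1 - ‖a‖^2 : ℝ)) : ℂ) = 1 := by
    rw [← map_mul, ← Complex.ofReal_mul, inv_mul_cancel₀ (nsq_ne ha).ne']; simp
  linear_combination (-(C ((((1 - ‖a‖^2)⁻¹ : ℝ)) : ℂ))) * h - (Ks a * cps a (Ks a)) * h4

lemma vv_ortho {a : ℂ} (ha : ‖a‖ < 1) (j k : ℕ) :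
    Tendsto (fun N => ∑ m ∈ Finset.range N, vv a m k * starRingEnd ℂ (vv a m j)) atTop
      (𝓝 (if j = k then ((((1 - ‖a‖^2)⁻¹ : ℝ)) : ℂ) else 0)) := by
  have gv : Good (Ks a * Ph a ^ k) := (good_Ks ha).mul ((good_Ph ha).pow k)
  have h := coeff_cps_tendsto ha gv (Ks a) j
  have h1 : Ks a * cps a (Ks a * Ph a ^ k) = C ((((1 - ‖a‖^2)⁻¹ : ℝ)) : ℂ) * X ^ k := by
    rw [cps_mul ha (good_Ks ha) ((good_Ph ha).pow k), cps_pow ha (good_Ph ha), cps_Ph ha, ← mul_assoc, Ks_cps ha]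
  rw [h1, coeff_C_mul, coeff_X_pow, mul_ite, mul_one, mul_zero] at h
  refine h.congr fun N => ?_
  rw [pc, Finset.mul_sum, map_sum]
  refine Finset.sum_congr rfl fun m _ => ?_
  rw [vv_symm]
  rw [mul_left_comm, coeff_C_mul]; rfl

lemma vv_sum {a : ℂ} (ha : ‖a‖ < 1) (k : ℕ) :
    Tendsto (fun N => ∑ m ∈ Finset.range N, ‖vv a m k‖^2) atTop (𝓝 (1 - ‖a‖^2)⁻¹) := by
  have h := (Complex.continuous_re.tendsto _).comp (vv_ortho ha k k)
  rw [if_pos rfl, Complex.ofReal_re] at h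
  refine h.congr fun N => ?_
  simp only [Function.comp, ← sqc, ← Complex.ofReal_sum, Complex.ofReal_re]

lemma vv_sum_le {a : ℂ} (ha : ‖a‖ < 1) (k N : ℕ) :
    ∑ m ∈ Finset.range N, ‖vv a m k‖^2 ≤ (1 - ‖a‖^2)⁻¹ :=
  Monotone.ge_of_tendsto (fun _ _ h => Finset.sum_le_sum_of_subset_of_nonneg (Finset.range_mono h)
    fun _ _ _ => by positivity) (vv_sum ha k) N

lemma Ks_der (a : ℂ) : derivative ℂ (Ks a) = C (starRingEnd ℂ a) * Ks a ^ 2 := by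
  have h := congrArg (derivative ℂ) (Ks_inv a)
  simp only [Derivation.leibniz, map_sub, smul_eq_mul, derivative_C, derivative_X, Derivation.map_one_eq_zero] at h
  linear_combination (Ks a) * h - (derivative ℂ (Ks a) ) * Ks_inv a

lemma Ph_der (a : ℂ) : derivative ℂ (Ph a) = (C (a * starRingEnd ℂ a) - 1) * Ks a ^ 2 := by
  unfold Ph
  simp only [Derivation.leibniz, map_sub, smul_eq_mul, derivative_C, derivative_X, Ks_der, map_mul]
  linear_combination (Ks a) * Ks_inv a

lemma vv_rec (a : ℂ) (m k : ℕ) : starRingEnd ℂ a * (k+2) * vv a m (k+2) =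
    ((1 + ‖a‖^2) * (k+1) + ‖a‖^2 - m * (1 - ‖a‖^2) : ℝ) * vv a m (k+1) - a * (k+1) * vv a m k := by
  have hA : ((‖a‖:ℂ))^2 = a * starRingEnd ℂ a := by rw [← sqc]; push_cast; rfl
  set A : PowerSeries ℂ := C a * C (starRingEnd ℂ a) with hAA
  have h : (1 - A) * (X * derivative ℂ (Ks a * Ph a ^ (k+1))) =
    ((1 + A) * ((k:PowerSeries ℂ) + 1) + A) * (Ks a * Ph a^(k+1)) - C (starRingEnd ℂ a) * ((k:PowerSeries ℂ)+2) * (Ks a * Ph a ^(k+2))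
      - C a * ((k:PowerSeries ℂ)+1) * (Ks a * Ph a ^ k) := by
    rw [Derivation.leibniz, Derivation.leibniz_pow, Ks_der, Ph_der]
    simp only [smul_eq_mul, nsmul_eq_mul, Nat.add_sub_cancel, map_mul, ← hAA]
    push_cast
    have e1 : (1 - A) * ((k:PowerSeries ℂ)+1) * (X * Ks a * (A - 1) * Ks a^2) + (1-A) * X * (C (starRingEnd ℂ a) * Ks a^2) * Ph a =
       ((1 + A) * ((k:PowerSeries ℂ) + 1) + A) * Ks a * Ph a - C (starRingEnd ℂ a) * ((k:PowerSeries ℂ)+2) * Ks a * Ph a ^2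
      - C a * ((k:PowerSeries ℂ)+1) * Ks a := by
      have hk := Ks_inv a
      have i1 : -(1-A)^2 * X * Ks a ^2 = (1+A) * Ph a - C (starRingEnd ℂ a) * Ph a ^2 - C a := by
        unfold Ph; rw [hAA]
        linear_combination ((1 + C a * C (starRingEnd ℂ a)) * (C a - X) * Ks a -
          C a * ((1 - C (starRingEnd ℂ a) * X) * Ks a + 1)) * hk
      have i2 : (1-A) * X * C (starRingEnd ℂ a) * Ks a = A - C (starRingEnd ℂ a) * Ph a := by
        unfold Ph; rw [hAA]
        linear_combination (C a * C (starRingEnd ℂ a)) * hk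
      linear_combination (((k:PowerSeries ℂ)+1) * Ks a) * i1 + (Ks a * Ph a) * i2
    linear_combination (Ph a ^ k) * e1
  have hX : ∀ (F : PowerSeries ℂ) (m : ℕ), coeff m (X * derivative ℂ F) = m * coeff m F := by
    intro F m
    cases m with
    | zero => simp
    | succ m => rw [coeff_succ_X_mul, coeff_derivative]; push_cast; ring
  have hk : (k : PowerSeries ℂ) = C (k:ℂ) := by simp
  have hk2 : (2 : PowerSeries ℂ) = C (2:ℂ) := (map_ofNat C 2).symm
  have hk1 : (1 : PowerSeries ℂ) = C (1:ℂ) := by simp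
  have h2 := congrArg (coeff m) h
  rw [hAA, hk, hk2, hk1] at h2
  simp only [← map_mul, ← map_add, ← map_sub] at h2
  simp only [LinearMap.map_sub, coeff_C_mul, hX] at h2
  unfold vv
  push_cast
  rw [hA]
  linear_combination h2

def En (a : ℂ) (m l : ℕ) : ℝ := (l+2) * ‖vv a m (l+1)‖^2 -
  (l+1) * ((starRingEnd ℂ a)^2 / ‖a‖^2 * vv a m (l+2) * starRingEnd ℂ (vv a m l)).re

def nn (a : ℂ) (m l : ℕ) : ℝ := ‖vv a m l‖^2 + ‖vv a m (l+1)‖^2 + ‖vv a m (l+2)‖^2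

lemma nn_nonneg (a m l) : 0 ≤ nn a m l := by unfold nn; positivity

lemma unimod {a : ℂ} (h0 : a ≠ 0) : ‖(starRingEnd ℂ a)^2 / (‖a‖:ℂ)^2‖ = 1 := by
  have := norm_ne_zero_iff.2 h0
  simp [this]

lemma re_le {u z w : ℂ} (hu : ‖u‖ = 1) : |(u * z * starRingEnd ℂ w).re| ≤ ‖z‖ * ‖w‖ := by
  refine (Complex.abs_re_le_norm _).trans ?_
  rw [norm_mul, norm_mul, hu, one_mul, Complex.norm_conj]

lemma En_le {a : ℂ} (h0 : a ≠ 0) (m l : ℕ) : |En a m l| ≤ (l+2) * nn a m l := by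
  have h := abs_le.1 (re_le (z := vv a m (l+2)) (w := vv a m l) (unimod h0))
  unfold En nn
  have h1 : ‖vv a m (l+2)‖ * ‖vv a m l‖ ≤ ‖vv a m l‖^2 + ‖vv a m (l+2)‖^2 := by
    nlinarith [sq_nonneg (‖vv a m (l+2)‖ - ‖vv a m l‖), sq_nonneg (‖vv a m (l+2)‖), sq_nonneg (‖vv a m l‖)]
  set R := ((starRingEnd ℂ a)^2 / (‖a‖:ℂ)^2 * vv a m (l+2) * starRingEnd ℂ (vv a m l)).re
  have hl : (0:ℝ) ≤ l := Nat.cast_nonneg l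
  have hR : |R| ≤ ‖vv a m l‖^2 + ‖vv a m (l+2)‖^2 := abs_le.2 ⟨by linarith, by linarith⟩
  have hR' := abs_le.1 hR
  have := sq_nonneg ‖vv a m (l+1)‖
  rw [abs_le]
  constructor <;> nlinarith

lemma En_diff {a : ℂ} (h0 : a ≠ 0) (m l : ℕ) : |En a m (l+1) - En a m l| ≤
    (2 + (1 + ‖a‖^2) / ‖a‖) * nn a m (l+1) := by
  have hs := norm_ne_zero_iff.2 h0
  have hs' : (‖a‖:ℂ) ≠ 0 := by exact_mod_cast hs
  have hA : ((‖a‖:ℂ))^2 = a * starRingEnd ℂ a := by rw [← sqc]; push_cast; rfl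
  have r1 := vv_rec a m l
  have r2 := vv_rec a m (l+1)
  have key : En a m (l+1) - En a m l = ‖vv a m (l+2)‖^2 + ((starRingEnd ℂ a)^2 / (‖a‖:ℂ)^2 * vv a m (l+3) * starRingEnd ℂ (vv a m (l+1))).re
     - (1 + ‖a‖^2) / ‖a‖ * ((starRingEnd ℂ a) / (‖a‖:ℂ) * vv a m (l+2) * starRingEnd ℂ (vv a m (l+1))).re := by
    have r1c := congrArg (starRingEnd ℂ) r1
    simp only [map_mul, map_sub, map_add, Complex.conj_conj, Complex.conj_ofReal, map_natCast, map_ofNat, map_one] at r1c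
    have hi : ((‖a‖:ℂ)^2)⁻¹ * (a * starRingEnd ℂ a) = 1 := by
      rw [← hA]; exact inv_mul_cancel₀ (pow_ne_zero 2 hs')
    have hc : ((l+1:ℝ):ℂ) * ((starRingEnd ℂ a)^2 / (‖a‖:ℂ)^2 * vv a m (l+2) * starRingEnd ℂ (vv a m l)) =
       ((l+3:ℝ):ℂ) * ((starRingEnd ℂ a)^2 / (‖a‖:ℂ)^2 * vv a m (l+3) * starRingEnd ℂ (vv a m (l+1)))
        + ((l+2:ℝ):ℂ) * ((‖vv a m (l+1)‖^2:ℝ):ℂ)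
        - (((1 + ‖a‖^2) / ‖a‖:ℝ):ℂ) * ((starRingEnd ℂ a) / (‖a‖:ℂ) * vv a m (l+2) * starRingEnd ℂ (vv a m (l+1)))
        - ((l+2:ℝ):ℂ) * ((‖vv a m (l+2)‖^2:ℝ):ℂ) := by
      rw [sqc, sqc]
      have e : (((1 + ‖a‖^2) / ‖a‖:ℝ):ℂ) * ((starRingEnd ℂ a) / (‖a‖:ℂ) * vv a m (l+2) * starRingEnd ℂ (vv a m (l+1)))
         = (1 + (‖a‖:ℂ)^2) * (((‖a‖:ℂ)^2)⁻¹ * starRingEnd ℂ a * vv a m (l+2) * starRingEnd ℂ (vv a m (l+1))) := by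
        push_cast; field_simp
      rw [e, div_eq_mul_inv]
      push_cast at r1c r2 ⊢
      have r2' : (starRingEnd ℂ) a * (l + 3) * vv a m (l + 3) = ((1 + (‖a‖:ℂ) ^ 2) * ((l:ℂ) + 2) + ‖a‖ ^ 2 - m * (1 - ‖a‖ ^ 2)) * vv a m (l + 2) -
          a * (l + 2) * vv a m (l + 1) := by
        linear_combination r2
      generalize ((‖a‖:ℂ)^2)⁻¹ = i at *
      linear_combination (starRingEnd ℂ a * i * vv a m (l+2)) * r1c - (i * starRingEnd ℂ a * starRingEnd ℂ (vv a m (l+1))) * r2'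
        + ((l+2) * vv a m (l+1) * starRingEnd ℂ (vv a m (l+1)) - (l+2) * vv a m (l+2) * starRingEnd ℂ (vv a m (l+2))) * hi
    have hr := congrArg Complex.re hc
    simp only [Complex.add_re, Complex.sub_re, Complex.re_ofReal_mul, Complex.ofReal_re] at hr
    unfold En
    push_cast
    rw [show l + 1 + 1 = l + 2 from rfl, show l + 1 + 2 = l + 3 from rfl]
    linarith
  have u1 : ‖(starRingEnd ℂ a) / (‖a‖:ℂ)‖ = 1 := by simp [hs]
  have h1 := abs_le.1 (re_le (z := vv a m (l+3)) (w := vv a m (l+1)) (unimod h0))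
  have h2 := abs_le.1 (re_le (z := vv a m (l+2)) (w := vv a m (l+1)) u1)
  rw [key]
  unfold nn
  have hp : 0 ≤ (1 + ‖a‖^2) / ‖a‖ := by positivity
  set p := (1 + ‖a‖^2) / ‖a‖
  set R1 := ((starRingEnd ℂ a)^2 / (‖a‖:ℂ)^2 * vv a m (l+3) * starRingEnd ℂ (vv a m (l+1))).re
  set R2 := ((starRingEnd ℂ a) / (‖a‖:ℂ) * vv a m (l+2) * starRingEnd ℂ (vv a m (l+1))).re
  set x := ‖vv a m (l+1)‖
  set y := ‖vv a m (l+1+1)‖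
  set z := ‖vv a m (l+1+2)‖
  change -(z * x) ≤ R1 ∧ R1 ≤ z * x at h1
  change -(y * x) ≤ R2 ∧ R2 ≤ y * x at h2
  change |y^2 + R1 - p * R2| ≤ _
  have e1 : z * x ≤ x^2+y^2+z^2 := by nlinarith [sq_nonneg (z-x), sq_nonneg y, sq_nonneg x, sq_nonneg z]
  have e2 : y * x ≤ x^2+y^2+z^2 := by nlinarith [sq_nonneg (y-x), sq_nonneg y, sq_nonneg x, sq_nonneg z]
  have e3 : |p * R2| ≤ p * (x^2+y^2+z^2) := by
    rw [abs_mul, abs_of_nonneg hp]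
    exact mul_le_mul_of_nonneg_left (abs_le.2 ⟨by linarith, by linarith⟩) hp
  have e4 := abs_le.1 e3
  have e5 : y^2 ≤ x^2+y^2+z^2 := by nlinarith [sq_nonneg z, sq_nonneg x]
  have e6 := sq_nonneg y
  rw [abs_le]; constructor <;> nlinarith
lemma nn_sum {a : ℂ} (ha : ‖a‖ < 1) (l N : ℕ) : ∑ m ∈ Finset.range N, nn a m l ≤ 3 * (1 - ‖a‖^2)⁻¹ := by
  unfold nn
  rw [Finset.sum_add_distrib, Finset.sum_add_distrib]
  linarith [vv_sum_le ha l N, vv_sum_le ha (l+1) N, vv_sum_le ha (l+2) N]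

lemma En_tv {a : ℂ} (ha : ‖a‖ < 1) (h0 : a ≠ 0) (l d N : ℕ) : ∑ m ∈ Finset.range N, |En a m (l+d) - En a m l| ≤
    d * ((2 + (1 + ‖a‖^2) / ‖a‖) * (3 * (1 - ‖a‖^2)⁻¹)) := by
  induction d with
  | zero => simp
  | succ d ih =>
    have h1 : ∑ m ∈ Finset.range N, |En a m (l+d+1) - En a m (l+d)| ≤ (2 + (1 + ‖a‖^2) / ‖a‖) * (3 * (1 - ‖a‖^2)⁻¹) := by
      calc _ ≤ ∑ m ∈ Finset.range N, (2 + (1 + ‖a‖^2) / ‖a‖) * nn a m (l+d+1) := Finset.sum_le_sum fun m _ => En_diff h0 m (l+d)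
        _ ≤ _ := by
          rw [← Finset.mul_sum]
          exact mul_le_mul_of_nonneg_left (nn_sum ha _ N) (by positivity)
    calc ∑ m ∈ Finset.range N, |En a m (l+(d+1)) - En a m l| ≤
        ∑ m ∈ Finset.range N, (|En a m (l+d+1) - En a m (l+d)| + |En a m (l+d) - En a m l|) :=
          Finset.sum_le_sum fun m _ => abs_sub_le _ _ _
      _ ≤ _ := by rw [Finset.sum_add_distrib]; push_cast; linarith

lemma En_sum {a : ℂ} (ha : ‖a‖ < 1) (l : ℕ) :
    Tendsto (fun N => ∑ m ∈ Finset.range N, En a m l) atTop (𝓝 ((l+2) * (1 - ‖a‖^2)⁻¹)) := by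
  have h1 := (vv_sum ha (l+1)).const_mul ((l:ℝ)+2)
  have h2 := (Complex.continuous_re.tendsto _).comp ((vv_ortho ha l (l+2)).const_mul ((starRingEnd ℂ a)^2 / (‖a‖:ℂ)^2))
  rw [if_neg (by omega), mul_zero, Complex.zero_re] at h2
  have h3 := h1.sub (h2.const_mul ((l:ℝ)+1))
  rw [mul_zero, sub_zero] at h3
  refine h3.congr fun N => ?_
  simp only [En, Finset.sum_sub_distrib, Function.comp, Finset.mul_sum, Complex.re_sum, mul_assoc]

lemma overlap {a : ℂ} (ha : ‖a‖ < 1) (h0 : a ≠ 0) : ∃ δ c : ℝ, 0 < δ ∧ 0 < c ∧ ∀ l l' : ℕ, |(l:ℝ) - l'| ≤ δ * (l+1) →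
    ∀ τ : ℝ, (∀ s s' : ℕ, s < 3 → s' < 3 → ∀ N, ∑ m ∈ Finset.range N, ‖vv a m (l'+s)‖ * ‖vv a m (l+s')‖ ≤ τ) → c ≤ τ := by
  set B := (1 - ‖a‖^2)⁻¹ with hB
  have hB0 : 0 < B := inv_pos.2 (nsq_ne ha)
  set p := 2 + (1 + ‖a‖^2) / ‖a‖ with hp
  have hp0 : 2 ≤ p := by have : 0 ≤ (1 + ‖a‖^2) / ‖a‖ := by positivity
                         linarith
  refine ⟨1/(6*p), B/36, by positivity, by positivity, fun l l' hl τ hτ => ?_⟩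
  have hl0 : (0:ℝ) ≤ l := Nat.cast_nonneg l
  have hd : 1/(6*p) ≤ 1 := by rw [div_le_one (by positivity)]; linarith
  have hl2 : |(l:ℝ) - l'| ≤ l + 1 := hl.trans (by nlinarith)
  have tv : ∀ N, ∑ m ∈ Finset.range N, |En a m l' - En a m l| ≤ |(l:ℝ) - l'| * (p * (3 * B)) := by
    intro N
    rcases le_total l l' with h | h
    · obtain ⟨d, rfl⟩ := Nat.exists_eq_add_of_le h
      have := En_tv ha h0 l d N
      push_cast
      rw [show (l:ℝ) - (l + d) = - d by ring, abs_neg, abs_of_nonneg (Nat.cast_nonneg d)]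
      exact this
    · obtain ⟨d, rfl⟩ := Nat.exists_eq_add_of_le h
      have := En_tv ha h0 l' d N
      push_cast
      rw [show (l':ℝ) + d - l' = d by ring, abs_of_nonneg (Nat.cast_nonneg d)]
      refine le_trans (le_of_eq (Finset.sum_congr rfl fun m _ => abs_sub_comm _ _)) this
  have pt : ∀ m, En a m l - |En a m l' - En a m l| ≤ 2 * (l+2) *
      ∑ s ∈ Finset.range 3, ∑ s' ∈ Finset.range 3, ‖vv a m (l'+s)‖ * ‖vv a m (l+s')‖ := by
    intro m
    rw [← Finset.sum_mul_sum]
    have b1 := En_le h0 m l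
    have b2 := En_le h0 m l'
    have b3 : ((l':ℝ) + 2) ≤ 2 * (l+2) := by
      have := (abs_le.1 hl2).1; linarith
    have q : ∀ l, nn a m l ≤ (∑ s ∈ Finset.range 3, ‖vv a m (l+s)‖)^2 := by
      intro l
      simp only [nn, Finset.sum_range_succ, Finset.sum_range_zero, zero_add, add_zero]
      have x := norm_nonneg (vv a m l); have y := norm_nonneg (vv a m (l+1)); have z := norm_nonneg (vv a m (l+2))
      nlinarith [mul_nonneg x y, mul_nonneg y z, mul_nonneg x z]
    set S := ∑ s ∈ Finset.range 3, ‖vv a m (l+s)‖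
    set S' := ∑ s ∈ Finset.range 3, ‖vv a m (l'+s)‖
    have hS : 0 ≤ S := Finset.sum_nonneg fun _ _ => norm_nonneg _
    have hS' : 0 ≤ S' := Finset.sum_nonneg fun _ _ => norm_nonneg _
    have c1 : |En a m l| ≤ 2*(l+2) * S^2 := b1.trans (mul_le_mul (by linarith) (q l) (nn_nonneg _ _ _) (by positivity))
    have c2 : |En a m l'| ≤ 2*(l+2) * S'^2 := b2.trans (mul_le_mul b3 (q l') (nn_nonneg _ _ _) (by positivity))
    have d1 : En a m l - |En a m l' - En a m l| ≤ |En a m l| := by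
      linarith [le_abs_self (En a m l), abs_nonneg (En a m l' - En a m l)]
    have d2 : En a m l - |En a m l' - En a m l| ≤ |En a m l'| := by
      linarith [le_abs_self (En a m l'), neg_abs_le (En a m l' - En a m l)]
    rcases le_total S S' with h | h
    · refine (d1.trans c1).trans ?_
      exact mul_le_mul_of_nonneg_left (by nlinarith) (by positivity)
    · refine (d2.trans c2).trans ?_
      exact mul_le_mul_of_nonneg_left (by nlinarith) (by positivity)
  have fin : ∀ N, ∑ m ∈ Finset.range N, En a m l ≤ |(l:ℝ) - l'| * (p * (3 * B)) + 2 * (l+2) * (9 * τ) := by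
    intro N
    have h1 := Finset.sum_le_sum (s := Finset.range N) fun m _ => pt m
    rw [Finset.sum_sub_distrib, ← Finset.mul_sum] at h1
    have h2 : ∑ m ∈ Finset.range N, ∑ s ∈ Finset.range 3, ∑ s' ∈ Finset.range 3, ‖vv a m (l'+s)‖ * ‖vv a m (l+s')‖ ≤ 9 * τ := by
      rw [Finset.sum_comm]
      calc _ = ∑ s ∈ Finset.range 3, ∑ s' ∈ Finset.range 3, ∑ m ∈ Finset.range N, ‖vv a m (l'+s)‖ * ‖vv a m (l+s')‖ :=
            Finset.sum_congr rfl fun s _ => Finset.sum_comm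
        _ ≤ ∑ s ∈ Finset.range 3, ∑ s' ∈ Finset.range 3, τ := Finset.sum_le_sum fun s hs => Finset.sum_le_sum fun s' hs' =>
            hτ s s' (Finset.mem_range.1 hs) (Finset.mem_range.1 hs') N
        _ = 9 * τ := by simp; ring
    have h3 := mul_le_mul_of_nonneg_left h2 (by positivity : (0:ℝ) ≤ 2*(l+2))
    linarith [tv N]
  have h5 := le_of_tendsto' (En_sum ha l) fin
  have h6 : |(l:ℝ) - l'| * (p * (3 * B)) ≤ (l+1) * B / 2 := by
    calc _ ≤ 1/(6*p) * (l+1) * (p * (3*B)) := mul_le_mul_of_nonneg_right hl (by positivity)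
      _ = _ := by field_simp; ring
  have h7 : ((l:ℝ)+2) * (B/36) ≤ (l+2) * τ := by nlinarith
  exact le_of_mul_le_mul_left h7 (by positivity)
end S12

namespace S12
open PowerSeries

lemma Xpow_bd {b : ℕ → ℝ} (hb : Wt b) (i : ℕ) : ∃ K : ℝ, 0 < K ∧ ∀ F M, Bd b F M → Bd b (X^i * F) (K * M) := by
  induction i with
  | zero => exact ⟨1, one_pos, fun F M h => by simpa using h⟩
  | succ i ih =>
    obtain ⟨K, hK, h⟩ := ih
    obtain ⟨K', hK', h'⟩ := Xmul_bd hb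
    refine ⟨K' * K, by positivity, fun F M hF => ?_⟩
    have := h' _ _ (h F M hF)
    rwa [← mul_assoc, ← pow_succ', ← mul_assoc] at this

lemma bd_Xpow {b : ℕ → ℝ} (hb : ∀ k, 0 ≤ b k) (k : ℕ) : Bd b (X^k) (b k) := by
  intro n
  simp only [coeff_X_pow]
  by_cases hk : k ∈ Finset.range n
  · rw [Finset.sum_eq_single_of_mem k hk (fun j _ hj => by simp [hj])]; simp
  · refine le_trans (le_of_eq (Finset.sum_eq_zero fun j hj => ?_)) (hb k)
    have : j ≠ k := fun h => hk (h ▸ hj)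
    simp [this]

lemma word {b : ℕ → ℝ} (hb : Wt b) {a : ℂ} (ha : ‖a‖ < 1) {G : PowerSeries ℂ} {K : ℝ} (hK : 0 < K)
    (hG : ∀ F M, Bd b F M → Bd b (G * cps a F) (K * M)) (i i' : ℕ) : ∃ C : ℝ, 0 < C ∧ ∀ j k N : ℕ,
    b j * (∑ m ∈ Finset.range N, ‖coeff j (X^i * (G * Ph a^m))‖ * ‖coeff m (X^i' * (G * Ph a^k))‖)^2 ≤ C * b k := by
  have hb0 : ∀ k, 0 ≤ b k := fun k => (hb.1 k).le
  obtain ⟨K1, hK1, h1⟩ := Xpow_bd hb i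
  obtain ⟨K2, hK2, h2⟩ := Xpow_bd hb i'
  refine ⟨K1 * (K * (K2 * K)), by positivity, fun j k N => ?_⟩
  have hc : Bd b (X^i' * (G * Ph a ^ k)) (K2 * (K * b k)) := by
    have := hG _ _ (bd_Xpow hb0 k)
    rw [cps_pow ha good_X, cps_X ha] at this
    exact h2 _ _ this
  set c := X^i' * (G * Ph a ^ k)
  set x : ℕ → ℂ := fun m => coeff j (X^i * (G * Ph a^m)) with hx
  set f : ℕ → ℂ := fun m => if m < N then starRingEnd ℂ (x m) / ‖x m‖ * ‖coeff m c‖ else 0 with hf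
  have hF : Bd b (PowerSeries.mk f) (K2 * (K * b k)) := by
    intro n
    refine le_trans (Finset.sum_le_sum fun m _ => mul_le_mul_of_nonneg_left ?_ (hb0 m)) (hc n)
    rw [coeff_mk, hf]
    refine pow_le_pow_left₀ (norm_nonneg _) ?_ 2
    simp only []
    split_ifs
    · rw [norm_mul, norm_div, Complex.norm_conj, Complex.norm_real, Complex.norm_real, norm_norm, norm_norm]
      exact mul_le_of_le_one_left (norm_nonneg _) (div_self_le_one _)
    · simp
  have hB := h1 _ _ (hG _ _ hF)
  have hcoef : coeff j (X^i * (G * cps a (PowerSeries.mk f))) =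
      ((∑ m ∈ Finset.range N, ‖x m‖ * ‖coeff m c‖ : ℝ) : ℂ) := by
    have ht := coeff_cps_tendsto ha (good_of_bd hb hF) (X^i * G) j
    rw [← mul_assoc]
    refine tendsto_nhds_unique ht (tendsto_const_nhds.congr' ?_)
    filter_upwards [eventually_ge_atTop N] with n hn
    rw [pc, Finset.mul_sum, map_sum]
    have hsub : Finset.range N ⊆ Finset.range n := Finset.range_mono hn
    rw [← Finset.sum_subset hsub]
    · push_cast
      refine Finset.sum_congr rfl fun m hm => ?_
      rw [mul_left_comm, coeff_C_mul, coeff_mk, hf]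
      simp only [if_pos (Finset.mem_range.1 hm)]
      rw [mul_assoc (X^i) G]
      change _ = _ * x m
      by_cases h0 : x m = 0
      · simp [h0]
      · have : (‖x m‖ : ℂ) ≠ 0 := by exact_mod_cast norm_ne_zero_iff.2 h0
        have e : (‖x m‖:ℂ)^2 = x m * starRingEnd ℂ (x m) := by rw [← sqc]; push_cast; rfl
        field_simp
        linear_combination (‖coeff m c‖:ℂ) * e
    · intro m _ hm
      rw [coeff_mk, hf]
      simp [Finset.mem_range.not.1 hm]
  have h3 := hB.coeff_le hb0 j
  rw [hcoef, Complex.norm_real, Real.norm_eq_abs, sq_abs] at h3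
  calc _ ≤ _ := h3
    _ = _ := by ring

lemma tail {H : PowerSeries ℂ} {M : ℝ} (hH : Bd 1 H M) {ε : ℝ} (hε : 0 < ε) : ∃ (I : ℕ) (H1 : PowerSeries ℂ),
    H = ∑ i ∈ Finset.range I, C (coeff i H) * X^i + H1 ∧ Bd 1 H1 ε := by
  have hs : Summable (fun k => ‖coeff k H‖^2) := by
    refine summable_of_sum_range_le (fun _ => by positivity) (c := M) fun n => ?_
    simpa using hH n
  have ht := tendsto_sum_nat_add (fun k => ‖coeff k H‖^2)
  obtain ⟨I, hI⟩ := (ht.eventually (gt_mem_nhds hε)).exists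
  refine ⟨I, PowerSeries.mk fun i => if i < I then 0 else coeff i H, ?_, ?_⟩
  · ext k
    simp only [map_add, map_sum, coeff_C_mul, coeff_X_pow, coeff_mk, mul_ite, mul_one, mul_zero, Finset.sum_ite_eq,
      Finset.mem_range]
    split_ifs <;> simp
  · intro n
    have hs' := (summable_nat_add_iff I).2 hs
    calc _ ≤ ∑ k ∈ Finset.range (I + n), (if k < I then 0 else ‖coeff k H‖^2) := by
          refine (Finset.sum_le_sum_of_subset_of_nonneg (Finset.range_mono (Nat.le_add_left n I)) fun _ _ _ => by
            simp).trans (Finset.sum_le_sum fun k _ => ?_)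
          rw [coeff_mk]; split_ifs <;> simp
      _ = ∑ k ∈ Finset.range n, ‖coeff (k+I) H‖^2 := by
          rw [Finset.sum_range_add, Finset.sum_eq_zero (fun k hk => by simp [Finset.mem_range.1 hk]), zero_add]
          exact Finset.sum_congr rfl fun k _ => by simp [add_comm]
      _ ≤ _ := (hs'.sum_le_tsum _ fun _ _ => by positivity).trans hI.le

lemma row_err {a : ℂ} (ha : ‖a‖ < 1) (L : PowerSeries ℂ) {D : ℝ} (hL : Bd 1 L D) (j N : ℕ) :
    ∑ m ∈ Finset.range N, ‖coeff j (L * (Ks a * Ph a ^ m))‖^2 ≤ D / (1 - ‖a‖^2) := by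
  have h := pc_bd ha (j+1) (fun q => starRingEnd ℂ (coeff (j-q) L)) N
  have h1 : ∑ k ∈ Finset.range (j+1), ‖starRingEnd ℂ (coeff (j-k) L)‖^2 ≤ D := by
    have h2 := hL (j+1)
    rw [← Finset.sum_range_reflect] at h2
    simpa using h2
  refine le_trans (le_of_eq (Finset.sum_congr rfl fun m _ => ?_)) (h.trans (by gcongr; exact (nsq_ne ha).le))
  congr 1
  rw [← Complex.norm_conj, coeff_mul, map_sum, pc, Finset.mul_sum, map_sum,
    Finset.Nat.sum_antidiagonal_eq_sum_range_succ_mk, ← Finset.sum_range_reflect]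
  congr 1
  refine Finset.sum_congr rfl fun q hq => ?_
  have hq' : q ≤ j := Nat.lt_succ_iff.1 (Finset.mem_range.1 hq)
  rw [mul_left_comm, coeff_C_mul, map_mul]
  simp only [Nat.add_sub_cancel]
  rw [show j + 1 - 1 - q = j - q by omega, Nat.sub_sub_self hq']
  congr 1
  exact vv_symm a m q

lemma split_le {v w R C ρ σ η : ℝ} (hη : 0 < η) (hv : 0 ≤ v) (hw : 0 ≤ w) (hR : 0 ≤ R) (hC : 0 ≤ C)
    (h1 : v ≤ R + ρ) (h2 : w ≤ C + σ) :
    v * w ≤ 4 * (R * C) + (ρ^2 / η + η * w^2) + (σ^2 / η + η * v^2) := by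
  have am : ∀ x y : ℝ, 2 * x * y ≤ x^2 / η + η * y^2 := by
    intro x y
    have : x^2 / η + η * y^2 - 2 * x * y = (x - η * y)^2 / η := by field_simp; ring
    have h3 : 0 ≤ (x - η * y)^2 / η := by positivity
    linarith
  have p1 : 0 ≤ ρ^2 / η + η * w^2 := by positivity
  have p2 : 0 ≤ σ^2 / η + η * v^2 := by positivity
  by_cases c1 : R ≤ ρ
  · nlinarith [am ρ w, mul_nonneg hR hC]
  by_cases c2 : C ≤ σ
  · nlinarith [am σ v, mul_nonneg hR hC]
  push Not at c1 c2
  have : v * w ≤ (2*R) * (2*C) := mul_le_mul (by linarith) (by linarith) hw (by linarith)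
  nlinarith
end S12

namespace S12
open PowerSeries

lemma Wt.ratio {b : ℕ → ℝ} (hb : Wt b) : ∃ K : ℝ, 1 ≤ K ∧ ∀ k, b (k+1) ≤ K * b k := by
  obtain ⟨K, hK⟩ := hb.2.bddAbove_range
  refine ⟨max K 1, le_max_right _ _, fun k => ?_⟩
  have : b (k+1) / b k ≤ K := hK ⟨k, rfl⟩
  rw [← div_le_iff₀ (hb.1 k)]
  exact this.trans (le_max_left _ _)

lemma Wt.ratio3 {b : ℕ → ℝ} (hb : Wt b) : ∃ K : ℝ, 0 < K ∧ ∀ k s, s < 3 → b (k+s) ≤ K * b k := by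
  obtain ⟨K, h1, hK⟩ := hb.ratio
  refine ⟨K^2, by positivity, fun k s hs => ?_⟩
  have h0 := (hb.1 k).le
  have e1 := hK k
  have e2 := hK (k+1)
  have h3 : K * b (k+1) ≤ K * (K * b k) := by gcongr
  have h4 : b k ≤ K * b k := le_mul_of_one_le_left h0 h1
  have h5 : K * b k ≤ K * (K * b k) := by gcongr
  rw [pow_two, mul_assoc]
  interval_cases s
  · simp only [add_zero]; linarith
  · linarith
  · rw [show k + 2 = k + 1 + 1 from rfl]; linarith

lemma wsum {b : ℕ → ℝ} (hb : Wt b) {a : ℂ} (ha : ‖a‖ < 1) {G : PowerSeries ℂ} {K : ℝ} (hK : 0 < K)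
    (hG : ∀ F M, Bd b F M → Bd b (G * cps a F) (K * M)) (h : ℕ → ℝ) (hh : ∀ i, 0 ≤ h i) (I : ℕ) :
    ∃ Q : ℝ, 0 ≤ Q ∧ ∀ j k N : ℕ,
    ∑ m ∈ Finset.range N, (∑ i ∈ Finset.range I, h i * ‖coeff j (X^i * (G * Ph a^m))‖) *
      (∑ i ∈ Finset.range I, h i * ‖coeff m (X^i * (G * Ph a^k))‖) ≤ Q * √(b k / b j) := by
  choose W hW0 hW using word hb ha hK hG
  refine ⟨∑ i ∈ Finset.range I, ∑ i' ∈ Finset.range I, h i * h i' * √(W i i'), Finset.sum_nonneg fun i _ =>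
    Finset.sum_nonneg fun i' _ => mul_nonneg (mul_nonneg (hh i) (hh i')) (Real.sqrt_nonneg _), fun j k N => ?_⟩
  calc _ = ∑ i ∈ Finset.range I, ∑ i' ∈ Finset.range I, h i * h i' *
        ∑ m ∈ Finset.range N, ‖coeff j (X^i * (G * Ph a^m))‖ * ‖coeff m (X^i' * (G * Ph a^k))‖ := by
        simp_rw [Finset.sum_mul_sum, Finset.mul_sum]
        rw [Finset.sum_comm]
        refine Finset.sum_congr rfl fun i _ => ?_
        rw [Finset.sum_comm]
        exact Finset.sum_congr rfl fun i' _ => Finset.sum_congr rfl fun m _ => by ring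
    _ ≤ ∑ i ∈ Finset.range I, ∑ i' ∈ Finset.range I, h i * h i' * (√(W i i') * √(b k / b j)) := by
        refine Finset.sum_le_sum fun i _ => Finset.sum_le_sum fun i' _ =>
          mul_le_mul_of_nonneg_left ?_ (mul_nonneg (hh i) (hh i'))
        rw [← Real.sqrt_mul (hW0 i i').le]
        apply Real.le_sqrt_of_sq_le
        rw [← mul_div_assoc, le_div_iff₀ (hb.1 j), mul_comm]
        exact hW i i' j k N
    _ = _ := by
        simp_rw [Finset.sum_mul]
        exact Finset.sum_congr rfl fun i _ => Finset.sum_congr rfl fun i' _ => by ring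

lemma bd_one : Bd 1 (1 : PowerSeries ℂ) 1 := by
  have := bd_Xpow (b := 1) (fun _ => zero_le_one) 0
  simpa using this

/-- local doubling -/
lemma local_dbl {b : ℕ → ℝ} (hb : Wt b) {a : ℂ} (ha : ‖a‖ < 1) (h0 : a ≠ 0) {G Gi : PowerSeries ℂ}
    (gG : Good G) (gGi : Good Gi) (hGG : G * Gi = 1) {K : ℝ} (hK : 0 < K)
    (hG : ∀ F M, Bd b F M → Bd b (G * cps a F) (K * M)) {M : ℝ}
    (hM : ∀ z : ℂ, ‖z‖ < 1 → ‖pv G z‖ ≤ M) (hMi : ∀ z : ℂ, ‖z‖ < 1 → ‖pv Gi z‖ ≤ M) :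
    ∃ δ C : ℝ, 0 < δ ∧ 0 < C ∧ ∀ l l' : ℕ, |(l:ℝ) - l'| ≤ δ * (l+1) → b l' ≤ C * b l := by
  obtain ⟨δ, c, hδ, hc, hov⟩ := overlap ha h0
  have hM0 : 0 ≤ M := (norm_nonneg _).trans (hM 0 (by simp))
  have hA := nsq_ne ha
  set A := 1 - ‖a‖^2 with hAdef
  set H := Gi * Ks a with hH
  have hHb : ∃ MH, Bd 1 H MH := by
    refine ⟨M^2 * A⁻¹, mult_bd gGi hMi fun n => ?_⟩
    have := vv_sum_le ha 0 n
    simpa [vv] using this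
  obtain ⟨MH, hMH⟩ := hHb
  set η := c * A / 8 with hη
  have hη0 : 0 < η := by positivity
  -- error constant
  set D := ((2*M)^2 / A + M^2) / η + 1 with hD
  have hD0 : 0 < D := by positivity
  set ε := c / (4 * D) with hε
  have hε0 : 0 < ε := by positivity
  obtain ⟨I, H1, hH1, hH1b⟩ := tail hMH hε0
  obtain ⟨Q, hQ0, hQ⟩ := wsum hb ha hK hG (fun i => ‖coeff i H‖) (fun i => norm_nonneg _) I
  obtain ⟨K1, hK1, hr1⟩ := hb.ratio3
  obtain ⟨K2, hK2, hr2⟩ := hb.inv.ratio3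
  have gPh := good_Ph ha
  -- L
  have hLb : Bd 1 (G * (1 - C (starRingEnd ℂ a) * X) * H1) ((2*M)^2 * ε) := by
    refine mult_bd (gG.mul (good_one.sub ((good_C _).mul good_X))) (fun z hz => ?_) hH1b
    rw [pv_mul gG (good_one.sub ((good_C _).mul good_X)) hz, pv_sub' sm_one (((good_C _).mul good_X).sm hz),
      pv_mul (good_C _) good_X hz, pv_one, pv_C, pv_X, norm_mul, mul_comm]
    refine mul_le_mul ?_ (hM z hz) (norm_nonneg _) (by norm_num)
    refine (norm_sub_le _ _).trans ?_
    rw [norm_one, norm_mul, Complex.norm_conj]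
    nlinarith [norm_nonneg a, norm_nonneg z]
  have hGPh : ∀ k, Bd 1 (G * Ph a ^ k * H1) (M^2 * ε) := by
    intro k
    refine mult_bd (gG.mul (gPh.pow k)) (fun z hz => ?_) hH1b
    have hz' : ‖a‖ * ‖z‖ < 1 := by nlinarith [norm_nonneg a, norm_nonneg z]
    rw [pv_mul gG (gPh.pow k) hz, pv_pow' (gPh.sm hz), pv_Ph hz', norm_mul, norm_pow]
    calc _ ≤ M * 1 := mul_le_mul (hM z hz) (pow_le_one₀ (norm_nonneg _) (mobius_norm ha hz).le) (by positivity) hM0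
      _ = M := mul_one M
  have key : ∀ m j : ℕ, Ks a * Ph a ^ m = ∑ i ∈ Finset.range I, C (coeff i H) * (X^i * (G * Ph a^m)) + H1 * (G * Ph a ^ m) := by
    intro m j
    have : Ks a = H * G := by rw [hH]; linear_combination (- Ks a) * hGG
    rw [this]
    nth_rewrite 1 [hH1]
    rw [add_mul, add_mul, Finset.sum_mul, Finset.sum_mul]
    congr 1
    · exact Finset.sum_congr rfl fun i _ => by ring
    · ring
  have kn : ∀ m j : ℕ, ‖coeff j (Ks a * Ph a ^ m)‖ ≤
      ∑ i ∈ Finset.range I, ‖coeff i H‖ * ‖coeff j (X^i * (G * Ph a^m))‖ + ‖coeff j (H1 * (G * Ph a ^ m))‖ := by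
    intro m j
    rw [key m j, map_add, map_sum]
    refine (norm_add_le _ _).trans (add_le_add_left ((norm_sum_le _ _).trans (Finset.sum_le_sum fun i _ => ?_)) _)
    rw [coeff_C_mul, norm_mul]
  refine ⟨δ, K2 * K1 * ((8 * Q / c)^2 + 1), hδ, by positivity, fun l l' hl => ?_⟩
  set T := √(K2 * K1 * (b l / b l')) with hT
  have hbl := hb.1 l
  have hbl' := hb.1 l'
  have hfin := hov l l' hl (4 * (Q * T) + c / 2) (fun s s' hs hs' N => ?_)
  · have h3 : c ≤ 8 * Q * T := by linarith
    have h4 : c^2 ≤ (8 * Q * T)^2 := by gcongr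
    have hT2 : T^2 = K2 * K1 * (b l / b l') := Real.sq_sqrt (by positivity)
    rw [mul_pow, hT2] at h4
    have h5 : c^2 * b l' ≤ (8*Q)^2 * (K2 * K1 * b l) := by
      calc _ ≤ (8*Q)^2 * (K2 * K1 * (b l / b l')) * b l' := by gcongr
        _ = _ := by field_simp
    have h6 : b l' ≤ (8*Q)^2 * (K2 * K1 * b l) / c^2 := by rw [le_div_iff₀ (by positivity)]; linarith
    calc _ ≤ _ := h6
      _ = K2 * K1 * ((8 * Q / c)^2) * b l := by field_simp
      _ ≤ _ := by gcongr; linarith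
  · set j := l' + s
    set k := l + s'
    have hTT : √(b k / b j) ≤ T := by
      apply Real.sqrt_le_sqrt
      have e1 := hr1 l s' hs'
      have e2 := hr2 l' s hs
      calc b k / b j = b k * (b j)⁻¹ := rfl
        _ ≤ (K1 * b l) * (K2 * (b l')⁻¹) := mul_le_mul e1 e2 (inv_nonneg.2 (hb.1 _).le) (by positivity)
        _ = _ := by rw [div_eq_mul_inv]; ring
    have hQQ := (hQ j k N).trans (mul_le_mul_of_nonneg_left hTT hQ0)
    have hrow := row_err ha _ hLb j N
    have hcol := hGPh k N
    have v1 := vv_sum_le ha j N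
    have v2 := vv_sum_le ha k N
    have hsum : ∑ m ∈ Finset.range N, ‖vv a m j‖ * ‖vv a m k‖ ≤
        4 * (∑ m ∈ Finset.range N, (∑ i ∈ Finset.range I, ‖coeff i H‖ * ‖coeff j (X^i * (G * Ph a^m))‖) *
      (∑ i ∈ Finset.range I, ‖coeff i H‖ * ‖coeff m (X^i * (G * Ph a^k))‖)) +
        ((∑ m ∈ Finset.range N, ‖coeff j (G * (1 - C (starRingEnd ℂ a) * X) * H1 * (Ks a * Ph a ^ m))‖^2) / η
          + η * ∑ m ∈ Finset.range N, ‖vv a m k‖^2) +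
        ((∑ m ∈ Finset.range N, (1:ℕ → ℝ) m * ‖coeff m (G * Ph a ^ k * H1)‖^2) / η + η * ∑ m ∈ Finset.range N, ‖vv a m j‖^2) := by
      rw [Finset.mul_sum, Finset.mul_sum, Finset.mul_sum, Finset.sum_div, Finset.sum_div, ← Finset.sum_add_distrib,
        ← Finset.sum_add_distrib, ← Finset.sum_add_distrib, ← Finset.sum_add_distrib]
      refine Finset.sum_le_sum fun m _ => ?_
      have e1 : G * (1 - C (starRingEnd ℂ a) * X) * H1 * (Ks a * Ph a ^ m) = H1 * (G * Ph a ^ m) := by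
        linear_combination (G * H1 * Ph a ^ m) * Ks_inv a
      have e2 : G * Ph a ^ k * H1 = H1 * (G * Ph a ^ k) := by ring
      rw [e1, e2, Pi.one_apply, one_mul]
      refine split_le hη0 (norm_nonneg _) (norm_nonneg _) (Finset.sum_nonneg fun _ _ => by positivity)
        (Finset.sum_nonneg fun _ _ => by positivity) ?_ (kn k m)
      rw [vv_norm_symm]
      exact kn m j
    have b1 : η * ∑ m ∈ Finset.range N, ‖vv a m k‖^2 ≤ c / 8 := by
      calc _ ≤ η * A⁻¹ := by gcongr
        _ = c / 8 := by rw [hη]; field_simp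
    have b2 : η * ∑ m ∈ Finset.range N, ‖vv a m j‖^2 ≤ c / 8 := by
      calc _ ≤ η * A⁻¹ := by gcongr
        _ = c / 8 := by rw [hη]; field_simp
    have b3 : (∑ m ∈ Finset.range N, ‖coeff j (G * (1 - C (starRingEnd ℂ a) * X) * H1 * (Ks a * Ph a ^ m))‖^2) / η +
        (∑ m ∈ Finset.range N, (1:ℕ → ℝ) m * ‖coeff m (G * Ph a ^ k * H1)‖^2) / η ≤ c / 4 := by
      calc _ ≤ ((2*M)^2 * ε / A) / η + (M^2 * ε) / η := by gcongr
        _ = ε * (D - 1) := by rw [hD]; field_simp; ring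
        _ ≤ ε * D := by gcongr; linarith
        _ = c / 4 := by rw [hε]; field_simp
    linarith
end S12

namespace S12
open PowerSeries

def Dbl (b : ℕ → ℝ) : Prop := ∃ C : ℝ, 1 ≤ C ∧ ∀ j k : ℕ, k ≤ j → j ≤ 2 * k + 1 → b j ≤ C * b k ∧ b k ≤ C * b j

lemma Dbl.inv {b : ℕ → ℝ} (hb : ∀ k, 0 < b k) (h : Dbl b) : Dbl (fun k => (b k)⁻¹) := by
  obtain ⟨C, hC, h⟩ := h
  refine ⟨C, hC, fun j k h1 h2 => ?_⟩
  have := h j k h1 h2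
  have hj := hb j
  have hk := hb k
  constructor
  · rw [inv_le_iff_one_le_mul₀ hj]
    calc 1 = (b k)⁻¹ * b k := (inv_mul_cancel₀ hk.ne').symm
      _ ≤ (b k)⁻¹ * (C * b j) := by gcongr; exact this.2
      _ = _ := by ring
  · rw [inv_le_iff_one_le_mul₀ hk]
    calc 1 = (b j)⁻¹ * b j := (inv_mul_cancel₀ hj.ne').symm
      _ ≤ (b j)⁻¹ * (C * b k) := by gcongr; exact this.1
      _ = _ := by ring

lemma dbl_of_local {b : ℕ → ℝ} (hb : Wt b)
    (h : ∃ δ C : ℝ, 0 < δ ∧ 0 < C ∧ ∀ l l' : ℕ, |(l:ℝ) - l'| ≤ δ * (l+1) → b l' ≤ C * b l) : Dbl b := by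
  obtain ⟨δ, C, hδ, hC, h⟩ := h
  obtain ⟨K1, hK1, hr1⟩ := hb.ratio3
  obtain ⟨K2, hK2, hr2⟩ := hb.inv.ratio3
  set D := max 1 (max C (max K1 K2)) with hD
  have d1 : 1 ≤ D := le_max_left _ _
  have d2 : C ≤ D := (le_max_left _ _).trans (le_max_right _ _)
  have d3 : K1 ≤ D := (le_max_left _ _).trans ((le_max_right _ _).trans (le_max_right _ _))
  have d4 : K2 ≤ D := (le_max_right _ _).trans ((le_max_right _ _).trans (le_max_right _ _))
  have hb0 := hb.1
  set s : ℕ → ℕ := fun m => max 1 ⌊δ * (m+1)⌋₊ with hs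
  have smono : ∀ k m, k ≤ m → s k ≤ s m := by
    intro k m hkm
    refine max_le_max le_rfl (Nat.floor_mono ?_)
    have : (k:ℝ) ≤ m := by exact_mod_cast hkm
    gcongr
  have step : ∀ m m', m ≤ m' → m' ≤ m + s m → b m' ≤ D * b m ∧ b m ≤ D * b m' := by
    intro m m' h1 h2
    have hc : m' ≤ m + 1 ∨ (m':ℝ) - m ≤ δ * (m+1) := by
      rcases le_total ⌊δ * (m+1)⌋₊ 1 with h3 | h3
      · left; simpa [hs, max_eq_left h3] using h2
      · right
        simp only [hs, max_eq_right h3] at h2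
        have : (m':ℝ) ≤ m + ⌊δ * ((m:ℝ)+1)⌋₊ := by exact_mod_cast h2
        have := Nat.floor_le (by positivity : 0 ≤ δ * ((m:ℝ)+1))
        linarith
    rcases hc with hc | hc
    · obtain ⟨t, rfl⟩ := Nat.exists_eq_add_of_le h1
      have ht : t < 3 := by omega
      constructor
      · exact (hr1 m t ht).trans (mul_le_mul_of_nonneg_right d3 (hb0 m).le)
      · have e := hr2 m t ht
        have p1 := hb0 m
        have p2 := hb0 (m+t)
        refine le_trans ?_ (mul_le_mul_of_nonneg_right d4 p2.le)
        calc b m = b m * b (m+t) * (b (m+t))⁻¹ := by field_simp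
          _ ≤ b m * b (m+t) * (K2 * (b m)⁻¹) := by gcongr
          _ = _ := by field_simp
    · have hmm : (m:ℝ) ≤ m' := by exact_mod_cast h1
      constructor
      · refine (h m m' ?_).trans (mul_le_mul_of_nonneg_right d2 (hb0 m).le)
        rw [abs_sub_comm, abs_of_nonneg (by linarith)]; exact hc
      · refine (h m' m ?_).trans (mul_le_mul_of_nonneg_right d2 (hb0 m').le)
        rw [abs_of_nonneg (by linarith)]
        nlinarith
  have iter : ∀ k n j : ℕ, k ≤ j → j ≤ k + n * s k → b j ≤ D^n * b k ∧ b k ≤ D^n * b j := by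
    intro k n
    induction n with
    | zero =>
      intro j h1 h2
      have : j = k := by omega
      subst this; simp
    | succ n ih =>
      intro j h1 h2
      set i := max k (j - s k) with hi
      have e1 : k ≤ i := le_max_left _ _
      have e2 : i ≤ k + n * s k := by
        apply max_le (Nat.le_add_right _ _)
        rw [Nat.succ_mul] at h2; omega
      have e3 : i ≤ j := max_le h1 (Nat.sub_le _ _)
      have e4 : j ≤ i + s i := by
        have := smono k i e1
        have : j - s k ≤ i := le_max_right _ _
        omega
      have q1 := ih i e1 e2
      have q2 := step i j e3 e4
      have hDn : 0 ≤ D^n := by positivity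
      constructor
      · calc b j ≤ D * b i := q2.1
          _ ≤ D * (D^n * b k) := by gcongr; exact q1.1
          _ = _ := by ring
      · calc b k ≤ D^n * b i := q1.2
          _ ≤ D^n * (D * b j) := by gcongr; exact q2.2
          _ = _ := by ring
  refine ⟨D ^ ⌈2/δ⌉₊, one_le_pow₀ d1, fun j k h1 h2 => iter k _ j h1 ?_⟩
  have hsk : δ * (k+1) / 2 ≤ s k := by
    have h3 := Nat.lt_floor_add_one (δ * ((k:ℝ)+1))
    have h4 : (1:ℝ) ≤ s k := by exact_mod_cast le_max_left _ _
    have h5 : (⌊δ * ((k:ℝ)+1)⌋₊ : ℝ) ≤ s k := Nat.cast_le.2 (le_max_right _ _)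
    linarith
  have : (k + 1 : ℝ) ≤ ⌈2/δ⌉₊ * s k := by
    calc (k + 1 : ℝ) = (2/δ) * (δ * (k+1) / 2) := by field_simp
      _ ≤ ⌈2/δ⌉₊ * s k := by gcongr; exact Nat.le_ceil _
  have : k + 1 ≤ ⌈2/δ⌉₊ * s k := by exact_mod_cast this
  omega
end S12

namespace S12
open PowerSeries

lemma far_coeff {a : ℂ} (ha : ‖a‖ < 1) : ∃ t : ℝ, 0 < t ∧ t < 1 ∧ ∃ R : ℕ, ∀ j k : ℕ, (R * j ≤ k ∨ R * k ≤ j) →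
    ‖coeff j (Ph a ^ k)‖ ≤ (t^2)^(j+k) := by
  set r : ℝ := 2 / (1 + ‖a‖) with hr
  have ha0 := norm_nonneg a
  have hr1 : 1 < r := by rw [hr, lt_div_iff₀ (by positivity)]; linarith
  have hr2 : ‖a‖ * r < 1 := by rw [hr, ← mul_div_assoc, div_lt_one (by positivity)]; linarith
  set p := nm (1/4) (Ph a) with hp
  have hp0 : 0 ≤ p := nm_nonneg (by norm_num) _
  have hp1 : p < 1 := nm_Ph_lt ha
  set Q := nm r (Ph a) with hQ
  have hQ0 : 0 ≤ Q := nm_nonneg (by linarith) _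
  set q2 := max p r⁻¹ with hq2
  have hq20 : 0 < q2 := lt_of_lt_of_le (by positivity) (le_max_right _ _)
  have hq21 : q2 < 1 := max_lt hp1 (inv_lt_one_of_one_lt₀ hr1)
  set q := √q2 with hq
  have hq0 : 0 < q := Real.sqrt_pos.2 hq20
  have hq1 : q < 1 := (Real.sqrt_lt' one_pos).2 (by simpa using hq21)
  have hqq : q^2 = q2 := Real.sq_sqrt hq20.le
  have hlim := tendsto_pow_atTop_nhds_zero_of_lt_one hq0.le hq1
  obtain ⟨R, hR1, hR2⟩ := ((hlim.const_mul Q).eventually (gt_mem_nhds (by simpa using hq0)) |>.and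
    ((hlim.const_mul 4).eventually (gt_mem_nhds (by simpa using hq0)))).exists
  refine ⟨√q, Real.sqrt_pos.2 hq0, (Real.sqrt_lt' one_pos).2 (by simpa using hq1), R, fun j k h => ?_⟩
  rw [Real.sq_sqrt hq0.le]
  have gen : ∀ (Z : ℝ) (m n : ℕ), 0 ≤ Z → Z * q^R < q → R * m ≤ n → Z^m * q^n ≤ q^m := by
    intro Z m n hZ h1 h2
    calc Z^m * q^n ≤ Z^m * q^(R*m) := by
          gcongr Z^m * ?_
          exact pow_le_pow_of_le_one hq0.le hq1.le h2
      _ = (Z * q^R)^m := by rw [mul_pow, pow_mul]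
      _ ≤ q^m := by gcongr
  rcases h with h | h
  · have h1 := coeff_Ph_pow (a := a) (r := 1/4) (by norm_num) (by linarith) j k
    calc _ ≤ _ := h1
      _ ≤ 4^j * (q^2)^k := by
          rw [show ((1/4:ℝ)⁻¹) = 4 by norm_num, hqq]
          gcongr
          exact le_max_left _ _
      _ = (4^j * q^k) * q^k := by ring
      _ ≤ q^j * q^k := by gcongr; exact gen 4 j k (by norm_num) hR2 h
      _ = _ := by ring
  · have h1 := coeff_Ph_pow (a := a) (r := r) (by linarith) hr2 j k
    calc _ ≤ _ := h1
      _ ≤ (q^2)^j * Q^k := by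
          rw [hqq]
          gcongr
          exact le_max_right _ _
      _ = (Q^k * q^j) * q^j := by ring
      _ ≤ q^k * q^j := by gcongr; exact gen Q k j hQ0 hR1 h
      _ = _ := by ring

def Lg (j : ℕ) : ℕ := Nat.log 2 (j+1)
lemma Lg_lo (j : ℕ) : 2^Lg j ≤ j+1 := Nat.pow_log_le_self 2 (by omega)
lemma Lg_hi (j : ℕ) : j+1 < 2^(Lg j+1) := Nat.lt_pow_succ_log_self (by norm_num) _

def near (N0 n k : ℕ) : Prop := Lg k ≤ n + N0 ∧ n ≤ Lg k + N0

lemma blk {b : ℕ → ℝ} {C : ℝ} (hb : ∀ k, 0 < b k) (hC : 1 ≤ C) (h : ∀ j k : ℕ, k ≤ j → j ≤ 2 * k + 1 → b j ≤ C * b k ∧ b k ≤ C * b j) :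
    (∀ j, b j ≤ C * b (2^Lg j - 1) ∧ b (2^Lg j - 1) ≤ C * b j) ∧ ∀ (N0 m n : ℕ), m ≤ n + N0 → n ≤ m + N0 →
      b (2^n - 1) ≤ C^N0 * b (2^m - 1) := by
  constructor
  · intro j
    have h1 := Lg_lo j
    have h2 := Lg_hi j
    rw [pow_succ] at h2
    exact h j _ (by omega) (by omega)
  · have st : ∀ n, b (2^(n+1) - 1) ≤ C * b (2^n - 1) ∧ b (2^n - 1) ≤ C * b (2^(n+1) - 1) := by
      intro n
      have : 0 < 2^n := by positivity
      exact h _ _ (by rw [pow_succ]; omega) (by rw [pow_succ]; omega)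
    have it : ∀ d n, b (2^(n+d) - 1) ≤ C^d * b (2^n - 1) ∧ b (2^n - 1) ≤ C^d * b (2^(n+d) - 1) := by
      intro d
      induction d with
      | zero => intro n; simp
      | succ d ih =>
        intro n
        have q1 := ih n
        have q2 := st (n+d)
        rw [← add_assoc]
        constructor
        · calc _ ≤ C * b (2^(n+d) - 1) := q2.1
            _ ≤ C * (C^d * b (2^n - 1)) := by gcongr; exact q1.1
            _ = _ := by ring
        · calc _ ≤ C^d * b (2^(n+d) - 1) := q1.2
            _ ≤ C^d * (C * b (2^(n+d+1) - 1)) := by gcongr; exact q2.2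
            _ = _ := by ring
    intro N0 m n h1 h2
    rcases le_total m n with hmn | hmn
    · obtain ⟨d, rfl⟩ := Nat.exists_eq_add_of_le hmn
      refine (it d m).1.trans (mul_le_mul_of_nonneg_right (pow_le_pow_right₀ hC (by omega)) (hb _).le)
    · obtain ⟨d, rfl⟩ := Nat.exists_eq_add_of_le hmn
      refine (it d n).2.trans (mul_le_mul_of_nonneg_right (pow_le_pow_right₀ hC (by omega)) (hb _).le)

open Classical in
def npart (N0 n : ℕ) (F : PowerSeries ℂ) : PowerSeries ℂ := PowerSeries.mk fun k => if near N0 n k then coeff k F else 0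

lemma far_ineq {N0 R j k : ℕ} (hR : R ≤ 2^N0) (h : ¬ near N0 (Lg j) k) : R * j ≤ k ∨ R * k ≤ j := by
  have main : ∀ x y : ℕ, Lg x + N0 < Lg y → R * x ≤ y := by
    intro x y hxy
    have h1 : 2^(Lg x + 1 + N0) ≤ 2^Lg y := Nat.pow_le_pow_right (by norm_num) (by omega)
    have h2 := Lg_lo y
    have h3 := Lg_hi x
    have h4 : (x+2) * R ≤ 2^(Lg x + 1) * 2^N0 := Nat.mul_le_mul (by omega) hR
    rw [← pow_add] at h4
    have h5 : (x+2) * R = R * x + 2 * R := by ring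
    rcases Nat.eq_zero_or_pos R with h0 | h0
    · simp [h0]
    · omega
  unfold near at h
  rcases Nat.lt_or_ge (Lg j + N0) (Lg k) with h1 | h1
  · exact Or.inl (main _ _ h1)
  · refine Or.inr (main _ _ ?_)
    by_contra h2
    exact h ⟨h1, by omega⟩

lemma npart_bd {b : ℕ → ℝ} (hb : ∀ k, 0 ≤ b k) {F M} (h : Bd b F M) (N0 n : ℕ) :
    Bd b (npart N0 n F) M ∧ Bd b (F - npart N0 n F) M := by
  constructor <;> intro m <;> refine le_trans (Finset.sum_le_sum fun k _ => mul_le_mul_of_nonneg_left ?_ (hb k)) (h m)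
  · simp only [npart, coeff_mk]; split_ifs <;> simp
  · simp only [npart, LinearMap.map_sub, coeff_mk]; split_ifs <;> simp

/-- far part -/
lemma far_bd {b : ℕ → ℝ} (hb : Wt b) {a : ℂ} (ha : ‖a‖ < 1) : ∃ N0 : ℕ, ∃ K : ℝ, 0 ≤ K ∧ ∀ F M, Bd b F M →
    ∀ N, ∑ j ∈ Finset.range N, b j * ‖coeff j (cps a (F - npart N0 (Lg j) F))‖^2 ≤ K * M := by
  obtain ⟨t, ht0, ht1, R, hR⟩ := far_coeff ha
  have htt : t^2 < 1 := by nlinarith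
  have hti : 1 < (t^2)⁻¹ := (one_lt_inv₀ (by positivity)).2 htt
  obtain ⟨K1, hK1, g1⟩ := hb.growth hti
  obtain ⟨K2, hK2, g2⟩ := hb.inv.growth hti
  refine ⟨R, K1 * K2 * ((1-t)⁻¹)^2 * (1 - t^2)⁻¹, ?_, fun F M hF N => ?_⟩
  · have : 0 < 1 - t^2 := by linarith
    have : 0 < 1 - t := by linarith
    positivity
  have hM := hF.nonneg
  have hb0 : ∀ k, 0 ≤ b k := fun k => (hb.1 k).le
  have hcoef : ∀ k, ‖coeff k F‖ ≤ √(M * K2) * (t⁻¹)^k := by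
    intro k
    have h1 := hF.coeff_le hb0 k
    have h2 := g2 k
    have hbk := hb.1 k
    have h3 : ‖coeff k F‖^2 ≤ M * K2 * ((t⁻¹)^k)^2 := by
      calc ‖coeff k F‖^2 = (b k)⁻¹ * (b k * ‖coeff k F‖^2) := by field_simp
        _ ≤ (K2 * ((t^2)⁻¹)^k) * M := mul_le_mul h2 h1 (by positivity) (by positivity)
        _ = _ := by rw [← pow_mul, mul_comm k 2, pow_mul, inv_pow t 2]; ring
    have h4 := Real.le_sqrt_of_sq_le h3
    rwa [Real.sqrt_mul (by positivity), Real.sqrt_sq (by positivity)] at h4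
  have hterm : ∀ j, ‖coeff j (cps a (F - npart R (Lg j) F))‖ ≤ (t^2)^j * (√(M*K2) * (1-t)⁻¹) := by
    intro j
    have hB := (npart_bd hb0 hF R (Lg j)).2
    have hs := cps_hasSum ha (good_of_bd hb hB) j
    rw [← hs.tsum_eq]
    have hg : HasSum (fun k => (t^2)^j * (√(M*K2) * t^k)) ((t^2)^j * (√(M*K2) * (1-t)⁻¹)) :=
      ((hasSum_geometric_of_lt_one ht0.le ht1).mul_left _).mul_left _
    refine tsum_of_norm_bounded hg fun k => ?_
    by_cases hn : near R (Lg j) k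
    · simp only [npart, LinearMap.map_sub, coeff_mk, if_pos hn, sub_self, zero_mul, norm_zero]; positivity
    · simp only [npart, LinearMap.map_sub, coeff_mk, if_neg hn, sub_zero]
      have h5 := hR j k (far_ineq (Nat.lt_two_pow_self).le hn)
      rw [norm_mul]
      calc _ ≤ (√(M * K2) * (t⁻¹)^k) * (t^2)^(j+k) := mul_le_mul (hcoef k) h5 (norm_nonneg _) (by positivity)
        _ = _ := by
          rw [pow_add, ← pow_mul t 2 k, mul_comm 2 k, pow_mul, inv_pow]
          field_simp
  calc _ ≤ ∑ j ∈ Finset.range N, (K1 * (M * K2) * ((1-t)⁻¹)^2) * (t^2)^j := by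
        refine Finset.sum_le_sum fun j _ => ?_
        have h6 := g1 j
        calc _ ≤ (K1 * ((t^2)⁻¹)^j) * ((t^2)^j * (√(M*K2) * (1-t)⁻¹))^2 := by
              gcongr; exact hterm j
          _ = K1 * (√(M*K2))^2 * ((1-t)⁻¹)^2 * (t^2)^j := by
              rw [inv_pow]; field_simp
          _ = _ := by rw [Real.sq_sqrt (by positivity)]
    _ = (K1 * (M * K2) * ((1-t)⁻¹)^2) * ∑ j ∈ Finset.range N, (t^2)^j := by rw [Finset.mul_sum]
    _ ≤ (K1 * (M * K2) * ((1-t)⁻¹)^2) * (1 - t^2)⁻¹ := by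
        gcongr
        rw [← tsum_geometric_of_lt_one (by positivity) htt]
        exact (summable_geometric_of_lt_one (by positivity) htt).sum_le_tsum _ fun _ _ => by positivity
    _ = _ := by ring
open Classical in
/-- near part -/
lemma near_bd {b : ℕ → ℝ} (hb : Wt b) (hd : Dbl b) {a : ℂ} (ha : ‖a‖ < 1) (N0 : ℕ) : ∃ K : ℝ, 0 ≤ K ∧ ∀ F M, Bd b F M →
    ∀ N, ∑ j ∈ Finset.range N, b j * ‖coeff j (cps a (npart N0 (Lg j) F))‖^2 ≤ K * M := by
  obtain ⟨C, hC, hd⟩ := hd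
  obtain ⟨q1, q2⟩ := blk hb.1 hC hd
  obtain ⟨K0, hK0, hK⟩ := cps_bd ha
  have hb0 : ∀ k, 0 ≤ b k := fun k => (hb.1 k).le
  refine ⟨C * K0 * (C^N0 * C) * (2*N0+1), by positivity, fun F M hF N => ?_⟩
  set S : ℕ → Finset ℕ := fun n => (Finset.range (2^(n+N0+1))).filter (near N0 n) with hS
  have hmem : ∀ n k, near N0 n k → k ∈ S n := by
    intro n k h
    simp only [hS, Finset.mem_filter, Finset.mem_range]
    refine ⟨?_, h⟩
    have h1 := Lg_hi k
    have : 2^(Lg k+1) ≤ 2^(n+N0+1) := Nat.pow_le_pow_right (by norm_num) (by have := h.1; omega)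
    omega
  have hn1 : ∀ n, Bd 1 (npart N0 n F) (∑ k ∈ S n, ‖coeff k F‖^2) := by
    intro n m
    simp only [Pi.one_apply, one_mul, npart, coeff_mk]
    calc _ = ∑ k ∈ (Finset.range m).filter (near N0 n), ‖coeff k F‖^2 := by
          rw [Finset.sum_filter]
          refine Finset.sum_congr rfl fun k _ => ?_
          split_ifs <;> simp
      _ ≤ _ := by
          refine Finset.sum_le_sum_of_subset_of_nonneg (fun k hk => ?_) fun _ _ _ => by positivity
          exact hmem n k (Finset.mem_filter.1 hk).2
  have hblock : ∀ n, ∑ j ∈ (Finset.range N).filter (fun j => Lg j = n), b j * ‖coeff j (cps a (npart N0 n F))‖^2 ≤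
      C * K0 * (C^N0 * C) * ∑ k ∈ S n, b k * ‖coeff k F‖^2 := by
    intro n
    have hg := good_of_bd hb (npart_bd hb0 hF N0 n).1
    have h1 := hK _ _ hg (hn1 n) N
    simp only [Pi.one_apply, one_mul] at h1
    have hB0 := hb0 (2^n - 1)
    calc _ ≤ ∑ j ∈ (Finset.range N).filter (fun j => Lg j = n), C * b (2^n-1) * ‖coeff j (cps a (npart N0 n F))‖^2 := by
          refine Finset.sum_le_sum fun j hj => ?_
          have := (q1 j).1
          rw [(Finset.mem_filter.1 hj).2] at this
          gcongr
      _ ≤ ∑ j ∈ Finset.range N, C * b (2^n-1) * ‖coeff j (cps a (npart N0 n F))‖^2 :=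
          Finset.sum_le_sum_of_subset_of_nonneg (Finset.filter_subset _ _) fun _ _ _ => by positivity
      _ = C * b (2^n-1) * ∑ j ∈ Finset.range N, ‖coeff j (cps a (npart N0 n F))‖^2 := by rw [Finset.mul_sum]
      _ ≤ C * b (2^n-1) * (K0 * ∑ k ∈ S n, ‖coeff k F‖^2) := by gcongr
      _ = C * K0 * ∑ k ∈ S n, b (2^n-1) * ‖coeff k F‖^2 := by rw [← Finset.mul_sum]; ring
      _ ≤ C * K0 * ∑ k ∈ S n, (C^N0 * C) * (b k * ‖coeff k F‖^2) := by
          refine mul_le_mul_of_nonneg_left (Finset.sum_le_sum fun k hk => ?_) (by positivity)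
          have hk' := (Finset.mem_filter.1 hk).2
          have e1 := q2 N0 (Lg k) n hk'.1 hk'.2
          have e2 := (q1 k).2
          rw [← mul_assoc]
          gcongr
          calc _ ≤ _ := e1
            _ ≤ C^N0 * (C * b k) := by gcongr
            _ = _ := by ring
      _ = _ := by rw [← Finset.mul_sum]; ring
  have hLN : ∀ j ∈ Finset.range N, Lg j ∈ Finset.range (N+1) := by
    intro j hj
    have h1 := Lg_lo j
    have h2 := @Nat.lt_two_pow_self (Lg j)
    have := Finset.mem_range.1 hj
    exact Finset.mem_range.2 (by omega)
  rw [← Finset.sum_fiberwise_of_maps_to hLN]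
  calc _ ≤ ∑ n ∈ Finset.range (N+1), C * K0 * (C^N0 * C) * ∑ k ∈ S n, b k * ‖coeff k F‖^2 := by
        refine Finset.sum_le_sum fun n _ => le_trans (le_of_eq (Finset.sum_congr rfl fun j hj => ?_)) (hblock n)
        rw [(Finset.mem_filter.1 hj).2]
    _ = C * K0 * (C^N0 * C) * ∑ n ∈ Finset.range (N+1), ∑ k ∈ S n, b k * ‖coeff k F‖^2 := by rw [Finset.mul_sum]
    _ ≤ C * K0 * (C^N0 * C) * ((2*N0+1) * M) := by
        gcongr
        calc _ ≤ ∑ n ∈ Finset.range (N+1), ∑ k ∈ Finset.range (2^(N+N0+1)),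
              (if near N0 n k then b k * ‖coeff k F‖^2 else 0) := by
              refine Finset.sum_le_sum fun n hn => ?_
              rw [← Finset.sum_filter]
              refine Finset.sum_le_sum_of_subset_of_nonneg (fun k hk => ?_) fun k _ _ => mul_nonneg (hb0 k) (by positivity)
              simp only [hS, Finset.mem_filter, Finset.mem_range] at hk hn ⊢
              refine ⟨lt_of_lt_of_le hk.1 (Nat.pow_le_pow_right (by norm_num) (by omega)), hk.2⟩
          _ = ∑ k ∈ Finset.range (2^(N+N0+1)), ∑ n ∈ Finset.range (N+1),
              (if near N0 n k then b k * ‖coeff k F‖^2 else 0) := Finset.sum_comm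
          _ ≤ ∑ k ∈ Finset.range (2^(N+N0+1)), (2*N0+1) * (b k * ‖coeff k F‖^2) := by
              refine Finset.sum_le_sum fun k _ => ?_
              rw [← Finset.sum_filter, Finset.sum_const, nsmul_eq_mul]
              refine mul_le_mul_of_nonneg_right ?_ (mul_nonneg (hb0 k) (by positivity))
              have : ((Finset.range (N+1)).filter (fun n => near N0 n k)).card ≤ (Finset.Icc (Lg k - N0) (Lg k + N0)).card := by
                refine Finset.card_le_card fun n hn => ?_
                have := (Finset.mem_filter.1 hn).2
                rw [Finset.mem_Icc]
                exact ⟨by have := this.1; omega, this.2⟩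
              rw [Nat.card_Icc] at this
              have h2 : ((Finset.range (N+1)).filter (fun n => near N0 n k)).card ≤ 2*N0+1 := by omega
              exact_mod_cast h2
          _ = (2*N0+1) * ∑ k ∈ Finset.range (2^(N+N0+1)), (b k * ‖coeff k F‖^2) := by rw [Finset.mul_sum]
          _ ≤ _ := by gcongr; exact hF _
    _ = _ := by ring

theorem stage2 {b : ℕ → ℝ} (hb : Wt b) (hd : Dbl b) {a : ℂ} (ha : ‖a‖ < 1) :
    ∃ K : ℝ, 0 ≤ K ∧ ∀ F M, Bd b F M → Bd b (cps a F) (K * M) := by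
  obtain ⟨N0, K1, hK1, h1⟩ := far_bd hb ha
  obtain ⟨K2, hK2, h2⟩ := near_bd hb hd ha N0
  have hb0 : ∀ k, 0 ≤ b k := fun k => (hb.1 k).le
  refine ⟨2 * K1 + 2 * K2, by positivity, fun F M hF n => ?_⟩
  calc _ ≤ ∑ j ∈ Finset.range n, (2 * (b j * ‖coeff j (cps a (F - npart N0 (Lg j) F))‖^2) +
        2 * (b j * ‖coeff j (cps a (npart N0 (Lg j) F))‖^2)) := by
        refine Finset.sum_le_sum fun j _ => ?_
        have hB := npart_bd hb0 hF N0 (Lg j)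
        have e : cps a F = cps a (F - npart N0 (Lg j) F) + cps a (npart N0 (Lg j) F) := by
          rw [← cps_add ha (good_of_bd hb hB.2) (good_of_bd hb hB.1), sub_add_cancel]
        have h3 := norm_add_le (coeff j (cps a (F - npart N0 (Lg j) F))) (coeff j (cps a (npart N0 (Lg j) F)))
        rw [← map_add, ← e] at h3
        set x := ‖coeff j (cps a (F - npart N0 (Lg j) F))‖
        set y := ‖coeff j (cps a (npart N0 (Lg j) F))‖
        have h4 : ‖coeff j (cps a F)‖^2 ≤ 2 * x^2 + 2 * y^2 := by
          have := pow_le_pow_left₀ (norm_nonneg _) h3 2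
          nlinarith [sq_nonneg (x-y)]
        nlinarith [mul_le_mul_of_nonneg_left h4 (hb0 j)]
    _ = 2 * ∑ j ∈ Finset.range n, (b j * ‖coeff j (cps a (F - npart N0 (Lg j) F))‖^2) +
        2 * ∑ j ∈ Finset.range n, (b j * ‖coeff j (cps a (npart N0 (Lg j) F))‖^2) := by
        rw [Finset.sum_add_distrib, Finset.mul_sum, Finset.mul_sum]
    _ ≤ 2 * (K1 * M) + 2 * (K2 * M) := by gcongr; exacts [h1 F M hF n, h2 F M hF n]
    _ = _ := by ring
end S12

namespace S12
open PowerSeries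

def Sk (b : ℕ → ℝ) (r : ℝ) : ℝ := ∑' k, (b k)⁻¹ * (r^2)^k

lemma Sk_sum {b : ℕ → ℝ} (hb : Wt b) {r : ℝ} (h0 : 0 ≤ r) (h1 : r < 1) : Summable fun k => (b k)⁻¹ * (r^2)^k := by
  have hr2 : r^2 < 1 := by nlinarith
  set q : ℝ := 2 / (1 + r^2) with hq
  have q1 : 1 < q := by rw [hq, lt_div_iff₀ (by positivity)]; linarith
  have q2 : q * r^2 < 1 := by rw [hq, div_mul_eq_mul_div, div_lt_one (by positivity)]; linarith
  obtain ⟨K, hK, h⟩ := hb.inv.growth q1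
  refine Summable.of_nonneg_of_le (fun k => mul_nonneg (inv_nonneg.2 (hb.1 k).le) (by positivity)) (fun k => ?_)
    ((summable_geometric_of_lt_one (by positivity) q2).mul_left K)
  rw [mul_pow, ← mul_assoc]
  exact mul_le_mul_of_nonneg_right (h k) (by positivity)

lemma Sk_lo {b : ℕ → ℝ} (hb : Wt b) {r : ℝ} (h0 : 0 ≤ r) (h1 : r < 1) : (b 0)⁻¹ ≤ Sk b r := by
  have := (Sk_sum hb h0 h1).le_tsum 0 fun k _ => mul_nonneg (inv_nonneg.2 (hb.1 k).le) (by positivity)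
  simpa [Sk] using this

lemma Sk_pos {b : ℕ → ℝ} (hb : Wt b) {r : ℝ} (h0 : 0 ≤ r) (h1 : r < 1) : 0 < Sk b r :=
  lt_of_lt_of_le (inv_pos.2 (hb.1 0)) (Sk_lo hb h0 h1)

lemma Sk_mono {b : ℕ → ℝ} (hb : Wt b) {r s : ℝ} (h0 : 0 ≤ r) (hrs : r ≤ s) (h1 : s < 1) : Sk b r ≤ Sk b s := by
  refine (Sk_sum hb h0 (by linarith)).tsum_le_tsum (fun k => ?_) (Sk_sum hb (by linarith) h1)
  have := (hb.1 k).le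
  gcongr

lemma pv_eval {b : ℕ → ℝ} (hb : Wt b) {F M} (hF : Bd b F M) {z : ℂ} (hz : ‖z‖ < 1) : ‖pv F z‖^2 ≤ M * Sk b ‖z‖ := by
  have hs := ((good_of_bd hb hF).sm hz).summable.hasSum.tendsto_sum_nat
  refine le_of_tendsto (hs.norm.pow 2) (Eventually.of_forall fun n => ?_)
  have hb0 := hb.1
  calc _ ≤ (∑ k ∈ Finset.range n, ‖coeff k F * z^k‖)^2 := by gcongr; exact norm_sum_le _ _
    _ ≤ (∑ k ∈ Finset.range n, b k * ‖coeff k F‖^2) * (∑ k ∈ Finset.range n, (b k)⁻¹ * (‖z‖^2)^k) := by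
        refine Finset.sum_sq_le_sum_mul_sum_of_sq_eq_mul _ (fun k _ => mul_nonneg (hb0 k).le (by positivity))
          (fun k _ => mul_nonneg (inv_nonneg.2 (hb0 k).le) (by positivity)) fun k _ => ?_
        have := (hb0 k).ne'
        rw [norm_mul, norm_pow]; field_simp; ring
    _ ≤ _ := by
        refine mul_le_mul (hF n) ?_ (Finset.sum_nonneg fun k _ => mul_nonneg (inv_nonneg.2 (hb0 k).le) (by positivity)) hF.nonneg
        exact (Sk_sum hb (norm_nonneg _) hz).sum_le_tsum _ fun k _ => mul_nonneg (inv_nonneg.2 (hb0 k).le) (by positivity)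

def kf (b : ℕ → ℝ) (μ : ℂ) : PowerSeries ℂ := PowerSeries.mk fun k => ((b k)⁻¹ : ℝ) * (starRingEnd ℂ μ)^k

lemma kf_bd {b : ℕ → ℝ} (hb : Wt b) {z : ℂ} (hz : ‖z‖ < 1) : Bd b (kf b z) (Sk b ‖z‖) := by
  intro n
  refine le_trans (le_of_eq (Finset.sum_congr rfl fun k _ => ?_))
    ((Sk_sum hb (norm_nonneg _) hz).sum_le_tsum (Finset.range n) fun k _ => mul_nonneg (inv_nonneg.2 (hb.1 k).le) (by positivity))
  have := hb.1 k
  rw [kf, coeff_mk, norm_mul, norm_pow, Complex.norm_conj, Complex.norm_real, Real.norm_of_nonneg (inv_nonneg.2 this.le)]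
  field_simp; ring

lemma kf_pv {b : ℕ → ℝ} (z : ℂ) : pv (kf b z) z = (Sk b ‖z‖ : ℂ) := by
  rw [pv, Sk, Complex.ofReal_tsum]
  refine tsum_congr fun k => ?_
  rw [kf, coeff_mk, Complex.ofReal_mul, Complex.ofReal_pow, sqc, mul_pow]; ring

lemma ker1 {b : ℕ → ℝ} (hb : Wt b) {a : ℂ} (ha : ‖a‖ < 1) {G : PowerSeries ℂ} (gG : Good G) {K : ℝ}
    (hG : ∀ F M, Bd b F M → Bd b (G * cps a F) (K * M)) {z : ℂ} (hz : ‖z‖ < 1) :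
    ‖pv G z‖^2 * Sk b ‖mobius a z‖ ≤ K * Sk b ‖z‖ := by
  have hm := mobius_norm ha hz
  have hk := kf_bd hb hm
  have hs := cps_spec ha (good_of_bd hb hk)
  have h1 := pv_eval hb (hG _ _ hk) hz
  rw [pv_mul gG hs.1 hz, hs.2 z hz, kf_pv, norm_mul, Complex.norm_real, mul_pow, Real.norm_eq_abs, sq_abs] at h1
  have hp := Sk_pos hb (norm_nonneg _) hm
  have : (‖pv G z‖^2 * Sk b ‖mobius a z‖) * Sk b ‖mobius a z‖ ≤ (K * Sk b ‖z‖) * Sk b ‖mobius a z‖ := by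
    calc _ = _ := by ring
      _ ≤ _ := h1
      _ = _ := by ring
  exact le_of_mul_le_mul_right this hp

lemma ker2 {b : ℕ → ℝ} (hb : Wt b) {a : ℂ} (ha : ‖a‖ < 1) {Gi : PowerSeries ℂ} (gG : Good Gi) {K : ℝ}
    (hG : ∀ F M, Bd b F M → Bd b (cps a (Gi * F)) (K * M)) {z : ℂ} (hz : ‖z‖ < 1) :
    ‖pv Gi z‖^2 * Sk b ‖z‖ ≤ K * Sk b ‖mobius a z‖ := by
  have hm := mobius_norm ha hz
  have hk := kf_bd hb hz
  have hg := good_of_bd hb hk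
  have hs := cps_spec ha (gG.mul hg)
  have h1 := pv_eval hb (hG _ _ hk) hm
  rw [hs.2 _ hm, mobius_invol ha hz, pv_mul gG hg hz, kf_pv, norm_mul, Complex.norm_real, mul_pow, Real.norm_eq_abs, sq_abs] at h1
  have hp := Sk_pos hb (norm_nonneg _) hz
  have : (‖pv Gi z‖^2 * Sk b ‖z‖) * Sk b ‖z‖ ≤ (K * Sk b ‖mobius a z‖) * Sk b ‖z‖ := by
    calc _ = _ := by ring
      _ ≤ _ := h1
      _ = _ := by ring
  exact le_of_mul_le_mul_right this hp

/-- log-scale -/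
def ff (b : ℕ → ℝ) (x : ℝ) : ℝ := Sk b (Real.exp (-x))
def tt (b : ℕ → ℝ) (x : ℝ) : ℝ := ∑' k : ℕ, (2 * (k:ℝ)) * ((b k)⁻¹ * (Real.exp (-x)^2)^k)
def kap (b : ℕ → ℝ) (x : ℝ) : ℝ := tt b x / ff b x

lemma tt_sum {b : ℕ → ℝ} (hb : Wt b) {x : ℝ} (hx : 0 < x) :
    Summable fun k : ℕ => (2 * (k:ℝ)) * ((b k)⁻¹ * (Real.exp (-x)^2)^k) := by
  set r := Real.exp (-x) with hr
  have h0 : 0 < r := Real.exp_pos _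
  have h1 : r < 1 := by rw [hr, Real.exp_lt_one_iff]; linarith
  have hr2 : r^2 < 1 := by nlinarith
  set q : ℝ := 2 / (1 + r^2) with hq
  have q1 : 1 < q := by rw [hq, lt_div_iff₀ (by positivity)]; linarith
  have q2 : q * r^2 < 1 := by rw [hq, div_mul_eq_mul_div, div_lt_one (by positivity)]; linarith
  obtain ⟨K, hK, h⟩ := hb.inv.growth q1
  have hs := (summable_pow_mul_geometric_of_norm_lt_one 1 (r := q * r^2)
    (by rw [Real.norm_of_nonneg (by positivity)]; exact q2)).mul_left (2 * K)
  refine Summable.of_nonneg_of_le (fun k => by have := (hb.1 k).le; positivity) (fun k => ?_) hs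
  have := h k
  calc (2 * (k:ℝ)) * ((b k)⁻¹ * (r^2)^k) ≤ (2 * (k:ℝ)) * ((K * q^k) * (r^2)^k) := by gcongr
    _ = _ := by rw [mul_pow]; ring

lemma exp_neg_lt {x : ℝ} (hx : 0 < x) : Real.exp (-x) < 1 := by rw [Real.exp_lt_one_iff]; linarith

lemma ff_pos {b : ℕ → ℝ} (hb : Wt b) {x : ℝ} (hx : 0 < x) : 0 < ff b x :=
  Sk_pos hb (Real.exp_pos _).le (exp_neg_lt hx)

lemma kap_nonneg {b : ℕ → ℝ} (hb : Wt b) {x : ℝ} (hx : 0 < x) : 0 ≤ kap b x :=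
  div_nonneg (tsum_nonneg fun k => by have := (hb.1 k).le; positivity) (ff_pos hb hx).le

/-- tangent line inequality -/
lemma tangent {b : ℕ → ℝ} (hb : Wt b) {x y : ℝ} (hx : 0 < x) (hy : 0 < y) :
    Real.log (ff b x) - kap b x * (y - x) ≤ Real.log (ff b y) := by
  have fx := ff_pos hb hx
  have fy := ff_pos hb hy
  set m := kap b x * (y - x) with hm
  have sx := Sk_sum hb (Real.exp_pos _).le (exp_neg_lt hx)
  have sy := Sk_sum hb (Real.exp_pos _).le (exp_neg_lt hy)
  have st := tt_sum hb hx
  have e1 : HasSum (fun k : ℕ => Real.exp (-m) * ((1 + m) * ((b k)⁻¹ * (Real.exp (-x)^2)^k) -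
      (y - x) * ((2 * (k:ℝ)) * ((b k)⁻¹ * (Real.exp (-x)^2)^k))))
      (Real.exp (-m) * ((1 + m) * ff b x - (y-x) * tt b x)) :=
    ((sx.hasSum.mul_left _).sub (st.hasSum.mul_left _)).mul_left _
  have e2 : (y - x) * tt b x = m * ff b x := by
    rw [hm, kap]; field_simp
  have key : Real.exp (-m) * ff b x ≤ ff b y := by
    have : Real.exp (-m) * ((1 + m) * ff b x - (y-x) * tt b x) = Real.exp (-m) * ff b x := by rw [e2]; ring
    rw [← this]
    refine hasSum_le (fun k => ?_) e1 sy.hasSum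
    have hbk := (hb.1 k).le
    have c1 : ∀ u : ℝ, (Real.exp (-u)^2)^k = Real.exp (-(2*k*u)) := by
      intro u
      rw [← Real.exp_nat_mul, ← Real.exp_nat_mul]; congr 1; push_cast; ring
    rw [c1, c1]
    have c2 : Real.exp (-(2*k*y)) = Real.exp (-(2*k*x)) * (Real.exp (-m) * Real.exp (m - 2*k*(y-x))) := by
      rw [← Real.exp_add, ← Real.exp_add]; congr 1; ring
    rw [c2]
    have c3 := Real.add_one_le_exp (m - 2*k*(y-x))
    calc _ = (b k)⁻¹ * (Real.exp (-(2*k*x)) * (Real.exp (-m) * (m - 2*k*(y-x) + 1))) := by ring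
      _ ≤ _ := by gcongr
  have := Real.log_le_log (by positivity) key
  rw [Real.log_mul (Real.exp_pos _).ne' fx.ne', Real.log_exp] at this
  linarith

lemma kap_anti {b : ℕ → ℝ} (hb : Wt b) {x y : ℝ} (hx : 0 < x) (hxy : x ≤ y) : kap b y ≤ kap b x := by
  have hy : 0 < y := by linarith
  rcases hxy.eq_or_lt with rfl | h
  · exact le_rfl
  have h1 := tangent hb hx hy
  have h2 := tangent hb hy hx
  have : kap b y * (y - x) ≤ kap b x * (y - x) := by linarith
  exact le_of_mul_le_mul_right this (by linarith)

/-- two tangents -/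
lemma tangent2 {b : ℕ → ℝ} (hb : Wt b) {x x' y : ℝ} (hx : 0 < x) (hx' : 0 < x') (hy : 0 < y) :
    Real.log (ff b x) - kap b x * (y - x) + (kap b x' - kap b x) * (x' - y) ≤ Real.log (ff b y) := by
  have h1 := tangent hb hx hx'
  have h2 := tangent hb hx' hy
  linarith
end S12

namespace S12
open PowerSeries

lemma mob_id {a z : ℂ} (ha : ‖a‖ < 1) (hz : ‖z‖ < 1) :
    (1 - ‖mobius a z‖^2) * ‖1 - starRingEnd ℂ a * z‖^2 = (1 - ‖a‖^2) * (1 - ‖z‖^2) := by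
  have h0 : ‖a‖ * ‖z‖ < 1 := by nlinarith [norm_nonneg a, norm_nonneg z]
  have h1 := norm_ne_zero_iff.2 (one_sub_ne h0)
  rw [mobius, norm_div, div_pow, sub_mul, div_mul_cancel₀ _ (pow_ne_zero 2 h1), one_mul]
  simp only [← Complex.normSq_eq_norm_sq, Complex.normSq_apply]
  simp
  ring

lemma yb {a z : ℂ} (ha : ‖a‖ < 1) {x : ℝ} (hx : 0 < x) (hxA : x ≤ ‖a‖^2 / 4)
    (hz : ‖z‖ = Real.exp (-x)) (hre : (starRingEnd ℂ a * z).re ≤ 0) :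
    - Real.log ‖mobius a z‖ ≤ (1 - ‖a‖^2/2) * x := by
  have hz1 : ‖z‖ < 1 := hz ▸ exp_neg_lt hx
  have hid := mob_id ha hz1
  set A := ‖a‖^2 with hA
  have hA1 := nsq_ne ha
  rw [← hA] at hA1
  have hA0 : 0 ≤ A := by positivity
  have hn : 1 ≤ ‖1 - starRingEnd ℂ a * z‖^2 := by
    rw [← Complex.normSq_eq_norm_sq, Complex.normSq_apply]
    rw [Complex.sub_re, Complex.one_re]
    nlinarith [mul_self_nonneg (1 - starRingEnd ℂ a * z).im]
  set s := ‖mobius a z‖^2 with hs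
  have hs1 : s < 1 := by
    have := mobius_norm ha hz1
    have h0 := norm_nonneg (mobius a z)
    nlinarith
  have hz2 : 1 - ‖z‖^2 ≤ 2 * x := by
    rw [hz, ← Real.exp_nat_mul]
    have := Real.add_one_le_exp ((2:ℕ) * -x)
    push_cast at this ⊢
    linarith
  have h1 : 1 - s ≤ (1 - A) * (2 * x) := by
    calc 1 - s ≤ (1 - s) * ‖1 - starRingEnd ℂ a * z‖^2 := le_mul_of_one_le_right (by linarith) hn
      _ = _ := hid
      _ ≤ _ := by gcongr
  have h2 : (1 - A) * (2 * x) ≤ A / 2 := by nlinarith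
  have hs0 : 0 < s := by nlinarith
  have hl : Real.log s = 2 * Real.log ‖mobius a z‖ := by rw [hs, Real.log_pow]; norm_num
  have h3 := Real.one_sub_inv_le_log_of_pos hs0
  have h4 : s⁻¹ - 1 ≤ 2 * ((1 - A/2) * x) := by
    have : s⁻¹ - 1 = (1 - s) / s := by field_simp
    rw [this, div_le_iff₀ hs0]
    have h5 : 1 - A ≤ (1 - A/2) * s := by nlinarith
    calc 1 - s ≤ (1 - A) * (2 * x) := h1
      _ ≤ ((1 - A/2) * s) * (2 * x) := by gcongr
      _ = _ := by ring
  linarith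

set_option maxHeartbeats 1600000 in
lemma maxp {b : ℕ → ℝ} (hb : Wt b) {a : ℂ} (ha : ‖a‖ < 1) (h0 : a ≠ 0) {G : PowerSeries ℂ} (gG : Good G) {K : ℝ}
    (hK : 0 < K)
    (hG : ∀ F M, Bd b F M → Bd b (G * cps a F) (K * M)) {x : ℝ} (hx : 0 < x) (hxA : x ≤ ‖a‖^2 / 4)
    (hxa : ‖a‖ < Real.exp (-x)) :
    ‖pv G 0‖^2 * Real.exp ((kap b ((1 - ‖a‖^2/4) * x) - kap b x) * (‖a‖^2/4) * x / 4) ≤ K := by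
  have hA1 := nsq_ne ha
  have ha0 : 0 < ‖a‖ := norm_pos_iff.2 h0
  set A := ‖a‖^2 with hA
  have hA0 : 0 < A := by positivity
  set r := Real.exp (-x) with hr
  have hr0 : 0 < r := Real.exp_pos _
  have hr1 : r < 1 := exp_neg_lt hx
  set x' := (1 - A/4) * x with hx'
  have hx'0 : 0 < x' := mul_pos (by linarith) hx
  have hx'x : x' ≤ x := by rw [hx']; nlinarith
  set κ := kap b x with hκ
  have hΔ : 0 ≤ kap b x' - κ := sub_nonneg.2 (kap_anti hb hx'0 hx'x)
  set Δ := kap b x' - κ with hΔd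
  set D := Δ * (A/4) * x with hD
  have hD0 : 0 ≤ D := by positivity
  set cj := starRingEnd ℂ a with hcj
  have hcjn : ‖cj‖ = ‖a‖ := Complex.norm_conj a
  set E : ℂ → ℂ := fun z => pv G z ^ 2 * Complex.exp ((κ:ℂ) * (Complex.log (1 - cj * z / (r:ℂ)^2) - Complex.log (1 - cj * z)) +
    (D:ℂ) * (1/4 + (cj * z / (‖a‖ * r))^2 / 4 - (cj * z / (‖a‖ * r)) / 2)) with hE
  have slit : ∀ w : ℂ, ‖w‖ < 1 → 1 - w ∈ Complex.slitPlane := by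
    intro w hw
    left
    have := (Complex.abs_re_le_norm w).trans_lt hw
    rw [Complex.sub_re, Complex.one_re]
    linarith [(abs_lt.1 this).2]
  have n1 : ∀ z : ℂ, ‖z‖ ≤ r → ‖cj * z / (r:ℂ)^2‖ < 1 := by
    intro z hz
    rw [norm_div, norm_mul, hcjn, norm_pow, Complex.norm_real, Real.norm_of_nonneg hr0.le, div_lt_one (by positivity)]
    nlinarith [norm_nonneg z]
  have n2 : ∀ z : ℂ, ‖z‖ ≤ r → ‖cj * z‖ < 1 := by
    intro z hz
    rw [norm_mul, hcjn]
    nlinarith [norm_nonneg z]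
  have hdiff : DifferentiableOn ℂ E (Metric.closedBall 0 r) := by
    have hg : DifferentiableOn ℂ (pv G) (Metric.closedBall 0 r) :=
      (pv_diff one_pos gG).mono (Metric.closedBall_subset_ball hr1)
    have hl1 : DifferentiableOn ℂ (fun z => Complex.log (1 - cj * z / (r:ℂ)^2)) (Metric.closedBall 0 r) :=
      DifferentiableOn.clog (by fun_prop) fun z hz => slit _ (n1 z (by simpa using hz))
    have hl2 : DifferentiableOn ℂ (fun z => Complex.log (1 - cj * z)) (Metric.closedBall 0 r) :=
      DifferentiableOn.clog (by fun_prop) fun z hz => slit _ (n2 z (by simpa using hz))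
    have hp : DifferentiableOn ℂ (fun z : ℂ => (D:ℂ) * (1/4 + (cj * z / (‖a‖ * r))^2 / 4 - (cj * z / (‖a‖ * r)) / 2)) (Metric.closedBall 0 r) := by
      fun_prop
    exact (hg.pow 2).mul (((hl1.sub hl2).const_mul _).add hp).cexp
  have hbd : ∀ z : ℂ, ‖z‖ = r → ‖E z‖ ≤ K := by
    intro z hz
    have hz1 : ‖z‖ < 1 := hz ▸ hr1
    have hzne : z ≠ 0 := by rintro rfl; simp at hz; linarith
    have haz : a - z ≠ 0 := by
      intro h; rw [sub_eq_zero] at h; rw [h, hz] at hxa; exact lt_irrefl _ hxa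
    have hden : 1 - cj * z ≠ 0 := one_sub_ne (by nlinarith [norm_nonneg z])
    set y := - Real.log ‖mobius a z‖ with hy
    have hmn : 0 < ‖mobius a z‖ := by
      rw [mobius]; exact norm_pos_iff.2 (div_ne_zero haz hden)
    have hm1 := mobius_norm ha hz1
    have hy0 : 0 < y := by rw [hy]; linarith [Real.log_neg hmn hm1]
    have hey : Real.exp (-y) = ‖mobius a z‖ := by rw [hy, neg_neg, Real.exp_log hmn]
    have hk := ker1 hb ha gG hG hz1
    rw [← hey, hz, hr] at hk
    change ‖pv G z‖^2 * ff b y ≤ K * ff b x at hk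
    have fx := ff_pos hb hx
    have fy := ff_pos hb hy0
    -- the real part
    have l1 : (Complex.log (1 - cj * z / (r:ℂ)^2)).re = Real.log ‖a - z‖ + x := by
      rw [Complex.log_re]
      have e : (r:ℂ)^2 = z * starRingEnd ℂ z := by rw [← sqc, hz]; push_cast; rfl
      have hcz : starRingEnd ℂ z ≠ 0 := by simpa using hzne
      have e2 : 1 - cj * z / (r:ℂ)^2 = starRingEnd ℂ (z - a) / starRingEnd ℂ z := by
        rw [e, map_sub]; field_simp; rfl
      rw [e2, norm_div, Complex.norm_conj, Complex.norm_conj, hz, norm_sub_rev, Real.log_div (norm_ne_zero_iff.2 haz) hr0.ne', hr,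
        Real.log_exp]; ring
    have l2 : (Complex.log (1 - cj * z / (r:ℂ)^2) - Complex.log (1 - cj * z)).re = x - y := by
      rw [Complex.sub_re, l1, Complex.log_re, hy, mobius, norm_div, Real.log_div (norm_ne_zero_iff.2 haz) (norm_ne_zero_iff.2 hden)]
      ring
    set u := cj * z / (‖a‖ * r) with hu
    have hun : ‖u‖ = 1 := by
      rw [hu, norm_div, norm_mul, hcjn, norm_mul, Complex.norm_real, Complex.norm_real, norm_norm, Real.norm_of_nonneg hr0.le, hz,
        div_self (by positivity)]
    have hus : u.re * u.re + u.im * u.im = 1 := by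
      rw [← Complex.normSq_apply, Complex.normSq_eq_norm_sq, hun, one_pow]
    have l3 : (1/4 + u^2 / 4 - u / 2 : ℂ).re = (u.re^2 - u.re) / 2 := by
      have : (1/4 + u^2 / 4 - u / 2 : ℂ) = ((1/4:ℝ):ℂ) + ((1/4:ℝ):ℂ) * (u * u) - ((1/2:ℝ):ℂ) * u := by push_cast; ring
      rw [this, Complex.sub_re, Complex.add_re, Complex.re_ofReal_mul, Complex.re_ofReal_mul, Complex.ofReal_re, Complex.mul_re]
      linear_combination (-1/4) * hus
    have hEn : ‖E z‖ = ‖pv G z‖^2 * Real.exp (κ * (x - y) + D * ((u.re^2 - u.re)/2)) := by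
      rw [hE]
      simp only []
      rw [norm_mul, norm_pow, Complex.norm_exp, Complex.add_re, Complex.re_ofReal_mul, Complex.re_ofReal_mul, l2, l3]
    have hur : |u.re| ≤ 1 := hun ▸ Complex.abs_re_le_norm u
    obtain ⟨hu1, hu2⟩ := abs_le.1 hur
    have hB : D * ((u.re^2 - u.re)/2) ≤ Real.log (ff b y) - Real.log (ff b x) + κ * (y - x) := by
      rcases le_total 0 u.re with hc | hc
      · have t1 := tangent hb hx hy0
        have : D * ((u.re^2 - u.re)/2) ≤ 0 := mul_nonpos_of_nonneg_of_nonpos hD0 (by nlinarith)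
        linarith
      · have t2 := tangent2 hb hx hx'0 hy0
        have hre : (cj * z).re ≤ 0 := by
          have : cj * z = ((‖a‖ * r : ℝ) : ℂ) * u := by
            rw [hu]
            have q1 : (‖a‖:ℂ) ≠ 0 := by exact_mod_cast ha0.ne'
            have q2 : (r:ℂ) ≠ 0 := by exact_mod_cast hr0.ne'
            push_cast; field_simp
          rw [this, Complex.re_ofReal_mul]
          exact mul_nonpos_of_nonneg_of_nonpos (by positivity) hc
        have hyy := yb ha hx hxA hz hre
        rw [← hA, ← hy] at hyy
        have h5 : D * ((u.re^2 - u.re)/2) ≤ D := mul_le_of_le_one_right hD0 (by nlinarith)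
        have h6 : D ≤ Δ * (x' - y) := by
          rw [hD, mul_assoc]
          refine mul_le_mul_of_nonneg_left ?_ hΔ
          rw [hx']; linarith
        linarith
    rw [hEn]
    calc _ ≤ ‖pv G z‖^2 * Real.exp (Real.log (ff b y) - Real.log (ff b x)) := by
          gcongr
          linarith
      _ = ‖pv G z‖^2 * ff b y / ff b x := by rw [Real.exp_sub, Real.exp_log fy, Real.exp_log fx, mul_div_assoc]
      _ ≤ K := by rw [div_le_iff₀ fx]; exact hk
  have hmax := Complex.norm_le_of_forall_mem_frontier_norm_le (Metric.isBounded_ball (x := (0:ℂ)) (r := r))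
    (DifferentiableOn.diffContOnCl (by rw [closure_ball _ hr0.ne']; exact hdiff))
    (C := K) (fun z hz => hbd z (by rw [frontier_ball _ hr0.ne'] at hz; simpa using hz)) (z := 0)
    (subset_closure (Metric.mem_ball_self hr0))
  have hE0 : ‖E 0‖ = ‖pv G 0‖^2 * Real.exp (D / 4) := by
    rw [hE]
    simp only [mul_zero, zero_div, sub_zero, Complex.log_one, zero_add, add_zero, ne_eq, OfNat.ofNat_ne_zero,
      not_false_eq_true, zero_pow]
    rw [norm_mul, norm_pow, Complex.norm_exp, Complex.re_ofReal_mul]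
    congr 2
    norm_num
    ring
  rw [hE0] at hmax
  exact hmax
end S12

namespace S12
open PowerSeries

lemma kap_bd {b : ℕ → ℝ} (hb : Wt b) {a : ℂ} (ha : ‖a‖ < 1) (h0 : a ≠ 0) {G : PowerSeries ℂ} (gG : Good G) {K : ℝ}
    (hK : 0 < K) (hg0 : pv G 0 ≠ 0)
    (hG : ∀ F M, Bd b F M → Bd b (G * cps a F) (K * M)) :
    ∃ x0 Mb : ℝ, 0 < x0 ∧ 0 ≤ Mb ∧ ∀ x, 0 < x → x ≤ x0 → x * kap b x ≤ Mb := by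
  have hA1 := nsq_ne ha
  have ha0 : 0 < ‖a‖ := norm_pos_iff.2 h0
  have hmp := fun x => maxp (x := x) hb ha h0 gG hK hG
  set A := ‖a‖^2 with hA
  have hA0 : 0 < A := by positivity
  set x0 := min (A/4) ((1 - ‖a‖)/2) with hx0
  have hx00 : 0 < x0 := lt_min (by positivity) (by linarith)
  set g := ‖pv G 0‖^2 with hg
  have hgp : 0 < g := by have := norm_pos_iff.2 hg0; positivity
  set q := 1 - A/4 with hq
  have q0 : 0 < q := by rw [hq]; linarith
  have q1 : q < 1 := by rw [hq]; linarith
  set C1 := 16 / A * Real.log (K / g) with hC1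
  have step : ∀ x, 0 < x → x ≤ x0 → (kap b (q * x) - kap b x) * x ≤ C1 := by
    intro x hx hxx
    have e1 : x ≤ A/4 := hxx.trans (min_le_left _ _)
    have e2 : x ≤ (1 - ‖a‖)/2 := hxx.trans (min_le_right _ _)
    have e3 : ‖a‖ < Real.exp (-x) := by have := Real.add_one_le_exp (-x); linarith
    have h := hmp x hx e1 e3
    have h2 : Real.exp ((kap b (q * x) - kap b x) * (A/4) * x / 4) ≤ K / g := by
      rw [le_div_iff₀ hgp]; linarith
    have h3 := (Real.le_log_iff_exp_le (by positivity)).2 h2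
    rw [hC1]
    calc (kap b (q * x) - kap b x) * x = 16 / A * ((kap b (q * x) - kap b x) * (A/4) * x / 4) := by field_simp; norm_num
      _ ≤ _ := by gcongr
  set Mb := max (x0 * kap b (q * x0)) (q * C1 / (1 - q)) with hMb
  have m1 : x0 * kap b (q * x0) ≤ Mb := le_max_left _ _
  have m2 : q * C1 ≤ (1 - q) * Mb := by
    have : q * C1 / (1 - q) ≤ Mb := le_max_right _ _
    rw [div_le_iff₀ (by linarith)] at this; linarith
  have base : ∀ x, q * x0 ≤ x → x ≤ x0 → x * kap b x ≤ Mb := by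
    intro x h1 h2
    have hqx : 0 < q * x0 := by positivity
    have hx : 0 < x := by linarith
    refine le_trans ?_ m1
    exact mul_le_mul h2 (kap_anti hb hqx h1) (kap_nonneg hb hx) hx00.le
  have ind : ∀ n : ℕ, ∀ x, 0 < x → x ≤ x0 → q^(n+1) * x0 ≤ x → x * kap b x ≤ Mb := by
    intro n
    induction n with
    | zero => intro x _ h2 h3; exact base x (by simpa using h3) h2
    | succ n ih =>
      intro x hx h2 h3
      by_cases h4 : q * x0 ≤ x
      · exact base x h4 h2
      push Not at h4
      have hy : 0 < x / q := by positivity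
      have hy2 : x / q ≤ x0 := by rw [div_le_iff₀ q0]; linarith
      have hy3 : q^(n+1) * x0 ≤ x / q := by rw [le_div_iff₀ q0]; rw [pow_succ] at h3; linarith
      have i1 := ih _ hy hy2 hy3
      have i2 := step _ hy hy2
      have e : q * (x / q) = x := by field_simp
      rw [e] at i2
      have i3 := mul_le_mul_of_nonneg_left i2 q0.le
      have i4 := mul_le_mul_of_nonneg_left i1 q0.le
      have e2 : q * ((kap b x - kap b (x/q)) * (x/q)) = x * kap b x - q * (x/q * kap b (x/q)) := by field_simp
      rw [e2] at i3
      linarith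
  refine ⟨x0, Mb, hx00, ?_, fun x hx hxx => ?_⟩
  · exact (mul_nonneg hx00.le (kap_nonneg hb (by positivity))).trans m1
  · have ht := (tendsto_pow_atTop_nhds_zero_of_lt_one q0.le q1).mul_const x0
    rw [zero_mul] at ht
    obtain ⟨n, hn⟩ := (ht.eventually (gt_mem_nhds hx)).exists
    refine ind n x hx hxx (le_trans ?_ hn.le)
    rw [pow_succ]
    have : 0 < q^n := by positivity
    nlinarith [mul_pos this hx00]

lemma Sk_comp {b : ℕ → ℝ} (hb : Wt b) {x0 Mb : ℝ} (hx0 : 0 < x0) (hMb : 0 ≤ Mb)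
    (h : ∀ x, 0 < x → x ≤ x0 → x * kap b x ≤ Mb) {Γ : ℝ} (hΓ : 0 < Γ) :
    ∃ C : ℝ, 0 < C ∧ ∀ r ρ : ℝ, 0 ≤ r → r < 1 → 0 ≤ ρ → ρ < 1 → 1 - r^2 ≤ Γ * (1 - ρ^2) → Sk b ρ ≤ C * Sk b r := by
  set x1 := min x0 (1/(4*Γ)) with hx1
  have hx10 : 0 < x1 := lt_min hx0 (by positivity)
  have hb0 := hb.1 0
  have hp1 := ff_pos hb hx10
  refine ⟨1 + ff b x1 * b 0 + Real.exp (Mb * (2*Γ)), by positivity, fun r ρ hr0 hr1 hρ0 hρ1 hle => ?_⟩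
  have hSr := Sk_pos hb hr0 hr1
  have hlo := Sk_lo hb hr0 hr1
  by_cases c1 : ρ ≤ r
  · have := Sk_mono hb hρ0 c1 hr1
    have h2 : 0 ≤ (ff b x1 * b 0 + Real.exp (Mb * (2*Γ))) * Sk b r := by positivity
    linarith
  push Not at c1
  by_cases c2 : ρ ≤ Real.exp (-x1)
  · have h1 : Sk b ρ ≤ ff b x1 := Sk_mono hb hρ0 c2 (exp_neg_lt hx10)
    have h2 : ff b x1 ≤ ff b x1 * b 0 * Sk b r := by
      calc ff b x1 = ff b x1 * b 0 * (b 0)⁻¹ := by field_simp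
        _ ≤ _ := by gcongr
    have h3 : 0 ≤ (1 + Real.exp (Mb * (2*Γ))) * Sk b r := by positivity
    linarith
  push Not at c2
  have hρ : 0 < ρ := lt_of_le_of_lt hr0 c1
  set y := - Real.log ρ with hy
  have hy0 : 0 < y := by rw [hy]; linarith [Real.log_neg hρ hρ1]
  have hey : Real.exp (-y) = ρ := by rw [hy, neg_neg, Real.exp_log hρ]
  have hyx : y < x1 := by rw [← hey, Real.exp_lt_exp] at c2; linarith
  have hρ2 : 1 - ρ^2 ≤ 2 * y := by
    rw [← hey, ← Real.exp_nat_mul]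
    have := Real.add_one_le_exp ((2:ℕ) * -y)
    push_cast at this ⊢
    linarith
  have hr2 : 1 - r^2 ≤ 2 * Γ * y := by nlinarith
  have hyG : 2 * Γ * y ≤ 1/2 := by
    have : y ≤ 1/(4*Γ) := hyx.le.trans (min_le_right _ _)
    rw [le_div_iff₀ (by positivity)] at this; linarith
  have hrh : 1/2 ≤ r^2 := by linarith
  have hrp : 0 < r := by
    rcases hr0.eq_or_lt with h | h
    · rw [← h] at hrh; norm_num at hrh
    · exact h
  set x := - Real.log r with hx
  have hx0 : 0 < x := by rw [hx]; linarith [Real.log_neg hrp hr1]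
  have hex : Real.exp (-x) = r := by rw [hx, neg_neg, Real.exp_log hrp]
  have hxy : x ≤ 2 * Γ * y := by
    have h1 := Real.one_sub_inv_le_log_of_pos (by positivity : 0 < r^2)
    rw [Real.log_pow] at h1
    push_cast at h1
    have h2 : (r^2)⁻¹ - 1 ≤ 2 * (1 - r^2) := by
      have : (r^2)⁻¹ - 1 = (1 - r^2) / r^2 := by field_simp
      rw [this, div_le_iff₀ (by positivity)]
      have : 0 ≤ 1 - r^2 := by nlinarith
      nlinarith
    linarith
  have ht := tangent hb hy0 hx0
  have hk := h y hy0 (hyx.le.trans (min_le_left _ _))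
  have hkn := kap_nonneg hb hy0
  have fy := ff_pos hb hy0
  have fx := ff_pos hb hx0
  have e1 : kap b y * (x - y) ≤ Mb * (2*Γ) := by
    calc kap b y * (x - y) ≤ kap b y * (2 * Γ * y) := by gcongr; linarith
      _ = (y * kap b y) * (2 * Γ) := by ring
      _ ≤ _ := by gcongr
  have e2 : Real.log (ff b y) ≤ Mb * (2*Γ) + Real.log (ff b x) := by linarith
  have e3 : ff b y ≤ Real.exp (Mb * (2*Γ)) * ff b x := by
    rw [← Real.exp_log fy, ← Real.exp_log fx, ← Real.exp_add]
    exact Real.exp_le_exp.2 e2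
  rw [ff, ff, hey, hex] at e3
  have h3 : 0 ≤ (1 + ff b x1 * b 0) * Sk b r := by positivity
  linarith

lemma mob_cmp {a z : ℂ} (ha : ‖a‖ < 1) (hz : ‖z‖ < 1) :
    1 - ‖mobius a z‖^2 ≤ 1 / (1 - ‖a‖)^2 * (1 - ‖z‖^2) := by
  have hid := mob_id ha hz
  have h1 : 1 - ‖a‖ ≤ ‖1 - starRingEnd ℂ a * z‖ := by
    have := norm_sub_norm_le (1:ℂ) (starRingEnd ℂ a * z)
    rw [norm_one, norm_mul, Complex.norm_conj] at this
    nlinarith [norm_nonneg a, norm_nonneg z]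
  have h2 : 0 < 1 - ‖a‖ := by linarith
  have h3 : (1 - ‖a‖)^2 ≤ ‖1 - starRingEnd ℂ a * z‖^2 := by gcongr
  have hm := mobius_norm ha hz
  have h4 : 0 ≤ 1 - ‖mobius a z‖^2 := by nlinarith [norm_nonneg (mobius a z)]
  have h5 : 0 ≤ 1 - ‖z‖^2 := by nlinarith [norm_nonneg z]
  rw [div_mul_eq_mul_div, one_mul, le_div_iff₀ (by positivity)]
  calc _ ≤ (1 - ‖mobius a z‖^2) * ‖1 - starRingEnd ℂ a * z‖^2 := by gcongr
    _ = _ := hid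
    _ ≤ _ := mul_le_of_le_one_left h5 (by nlinarith [norm_nonneg a])

theorem stage0 {b : ℕ → ℝ} (hb : Wt b) {a : ℂ} (ha : ‖a‖ < 1) (h0 : a ≠ 0) {G Gi : PowerSeries ℂ} (gG : Good G)
    (gGi : Good Gi) (hGG : G * Gi = 1) {K : ℝ} (hK : 0 < K)
    (hG : ∀ F M, Bd b F M → Bd b (G * cps a F) (K * M))
    (hGi : ∀ F M, Bd b F M → Bd b (cps a (Gi * F)) (K * M)) :
    ∃ M : ℝ, (∀ z : ℂ, ‖z‖ < 1 → ‖pv G z‖ ≤ M) ∧ (∀ z : ℂ, ‖z‖ < 1 → ‖pv Gi z‖ ≤ M) := by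
  have hg0 : pv G 0 ≠ 0 := by
    intro h
    have := pv_mul gG gGi (z := 0) (by simp)
    rw [hGG, h, pv_one, zero_mul] at this
    exact one_ne_zero this
  obtain ⟨x0, Mb, hx0, hMb, hkap⟩ := kap_bd hb ha h0 gG hK hg0 hG
  have h2 : 0 < 1 - ‖a‖ := by linarith
  obtain ⟨C, hC, hcmp⟩ := Sk_comp hb hx0 hMb hkap (Γ := 1 / (1 - ‖a‖)^2) (by positivity)
  refine ⟨√(K * C), fun z hz => ?_, fun z hz => ?_⟩
  all_goals
    have hm := mobius_norm ha hz
    have s1 := Sk_pos hb (norm_nonneg _) hz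
    have s2 := Sk_pos hb (norm_nonneg _) hm
    apply Real.le_sqrt_of_sq_le
  · have k1 := ker1 hb ha gG hG hz
    have c := hcmp ‖mobius a z‖ ‖z‖ (norm_nonneg _) hm (norm_nonneg _) hz (mob_cmp ha hz)
    refine le_of_mul_le_mul_right ?_ s2
    calc _ ≤ _ := k1
      _ ≤ K * (C * Sk b ‖mobius a z‖) := by gcongr
      _ = _ := by ring
  · have k2 := ker2 hb ha gGi hGi hz
    have hc := mob_cmp ha hm
    rw [mobius_invol ha hz] at hc
    have c := hcmp ‖z‖ ‖mobius a z‖ (norm_nonneg _) hz (norm_nonneg _) hm hc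
    refine le_of_mul_le_mul_right ?_ s1
    calc _ ≤ _ := k2
      _ ≤ K * (C * Sk b ‖z‖) := by gcongr
      _ = _ := by ring

theorem dbl_of_sim {β : ℕ → ℝ} (hβ : Wt β) {a : ℂ} (ha : ‖a‖ < 1) (h0 : a ≠ 0) (h : MzSimMphi β (mobius a)) :
    Dbl (fun k => β k ^ 2) := by
  obtain ⟨G, Gi, K, gG, gGi, hGG, hK, hB⟩ := extract hβ ha h
  have hb := hβ.sq
  obtain ⟨M, hM, hMi⟩ := stage0 hb ha h0 gG gGi hGG hK (fun F M h => (hB F M h).1) (fun F M h => (hB F M h).2)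
  exact dbl_of_local hb (local_dbl hb ha h0 gG gGi hGG hK (fun F M h => (hB F M h).1) hM hMi)

theorem one_dir {β : ℕ → ℝ} (hβ : Wt β) {a : ℂ} (ha : ‖a‖ < 1) (h0 : a ≠ 0) (h : MzSimMphi β (mobius a)) :
    MzSimMphi (fun k => (β k)⁻¹) (mobius a) := by
  have hd := (dbl_of_sim hβ ha h0 h).inv hβ.sq.1
  refine build hβ.inv ha ?_
  have hd' : Dbl (fun k => ((β k)⁻¹)^2) := by simpa only [inv_pow] using hd
  exact stage2 hβ.inv.sq hd' ha

theorem zero_case {β : ℕ → ℝ} (hβ : Wt β) : MzSimMphi β (mobius 0) := by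
  refine build hβ (by simp) ⟨1, zero_le_one, fun F M hF => ?_⟩
  rw [one_mul]
  intro n
  refine le_trans (le_of_eq (Finset.sum_congr rfl fun j _ => ?_)) (hF n)
  have hP : Ph 0 = - X := by
    ext k
    cases k with
    | zero => simp [coeff_Ph_zero]
    | succ k =>
      rw [coeff_Ph_succ, LinearMap.map_neg, coeff_X]
      cases k <;> simp
  have : coeff j (cps 0 F) = coeff j F * (-1)^j := by
    rw [cps, coeff_mk, tsum_eq_single j]
    · rw [hP, neg_pow, show ((-1 : PowerSeries ℂ))^j = C ((-1)^j) by simp, coeff_C_mul, coeff_X_pow]; simp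
    · intro k hk
      rw [hP, neg_pow, show ((-1 : PowerSeries ℂ))^k = C ((-1)^k) by simp, coeff_C_mul, coeff_X_pow, if_neg hk.symm]; simp
  rw [this, norm_mul, norm_pow, norm_neg, norm_one, one_pow, mul_one]

lemma wt_beta {w : ℕ → ℝ} (hpos : ∀ k, 1 ≤ k → 0 < w k) (hlim : Tendsto w atTop (𝓝 1)) : Wt (betaSeq w) := by
  have hp : ∀ k, 0 < betaSeq w k := fun k => Finset.prod_pos fun j hj => hpos j (Finset.mem_Icc.1 hj).1
  refine ⟨hp, ((tendsto_add_atTop_iff_nat 1).2 hlim).congr fun k => ?_⟩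
  rw [eq_div_iff (hp k).ne', betaSeq, betaSeq, Finset.prod_Icc_succ_top (by omega), mul_comm]
end S12

/-- Let `H²_β` come from a weight sequence `w_k → 1` and let
`φ_{z₀}` be a Möbius transformation, `z₀ ∈ 𝔻`.  Then `M_z ∼ M_{φ_{z₀}}` on `H²_β`
if and only if `M_z ∼ M_{φ_{z₀}}` on `H²_{β⁻¹}`. -/
theorem statement12 (w : ℕ → ℝ) (hpos : ∀ k, 1 ≤ k → 0 < w k)
    (hlim : Tendsto w atTop (nhds 1))
    (z₀ : ℂ) (hz₀ : z₀ ∈ unitDisk) :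
    MzSimMphi (betaSeq w) (mobius z₀) ↔
      MzSimMphi (fun k => (betaSeq w k)⁻¹) (mobius z₀) := by
  have hβ := S12.wt_beta hpos hlim
  have ha := S12.mem_disk.1 hz₀
  by_cases h0 : z₀ = 0
  · subst h0
    exact ⟨fun _ => S12.zero_case hβ.inv, fun _ => S12.zero_case hβ⟩
  · refine ⟨S12.one_dir hβ ha h0, fun h => ?_⟩
    have := S12.one_dir hβ.inv ha h0 h
    simpa only [inv_inv] using this
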